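/- arXiv:math/0701312 — 5 statements merged into one kernel-verified Lean document; each statement's English description precedes it below -/
import Mathlib

section
/- Let n ≥ 1 and let F, G be coprime completely reducible homogeneous polynomials of the same degree d ≥ 1 in R = MvPolynomial (Fin (n+1)) ℂ such that the generic fiber of the pencil 𝒫 generated by F and G is irreducible. If there exist more than 5 pairwise distinct completely reducible members of 𝒫, then d = 1, i.e. every member of the pencil is a linear form (a pencil of hyperplanes). -/
open MvPolynomial

noncomputable section

/-- A linear form: a nonzero homogeneous polynomial of degree 1. -/
def IsLinearForm (n : ℕ) (α : MvPolynomial (Fin (n + 1)) ℂ) : Prop :=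
  α ≠ 0 ∧ α.IsHomogeneous 1

/-- A completely reducible polynomial: a product of linear forms. -/
def CompletelyReducible (n : ℕ) (P : MvPolynomial (Fin (n + 1)) ℂ) : Prop :=
  ∃ s : Multiset (MvPolynomial (Fin (n + 1)) ℂ),
    (∀ α ∈ s, IsLinearForm n α) ∧ P = s.prod

/-- F and G have no common non-unit factor. -/
def RelPrime (n : ℕ) (F G : MvPolynomial (Fin (n + 1)) ℂ) : Prop :=
  ∀ p : MvPolynomial (Fin (n + 1)) ℂ, p ∣ F → p ∣ G → IsUnit p

/-- The generic fiber of the pencil generated by F and G is irreducible. -/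
def GenericFiberIrreducible (n : ℕ) (F G : MvPolynomial (Fin (n + 1)) ℂ) : Prop :=
  {c : ℂ | ¬ Irreducible (F + C c * G)}.Finite

/-- Derivative in the constant direction `u`. -/
def dirD {n : ℕ} (u : Fin (n + 1) → ℂ) :
    Derivation ℂ (MvPolynomial (Fin (n + 1)) ℂ) (MvPolynomial (Fin (n + 1)) ℂ) :=
  mkDerivation ℂ (fun i => C (u i))

theorem dirD_eq {n : ℕ} (u : Fin (n + 1) → ℂ) (P : MvPolynomial (Fin (n + 1)) ℂ) :
    dirD u P = ∑ i, C (u i) * pderiv i P := by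
  have hs : ∀ Q, (∑ i, (C (u i) : MvPolynomial (Fin (n + 1)) ℂ) • pderiv (R := ℂ) i) Q
      = ∑ i, C (u i) * pderiv i Q := by
    intro Q
    have h1 := congrFun (map_sum (Derivation.coeFnAddMonoidHom (R := ℂ)
      (A := MvPolynomial (Fin (n + 1)) ℂ) (M := MvPolynomial (Fin (n + 1)) ℂ))
      (fun i => (C (u i) : MvPolynomial (Fin (n + 1)) ℂ) • pderiv (R := ℂ) i) Finset.univ) Q
    rw [Finset.sum_apply] at h1
    exact h1
  have h : dirD u = ∑ i, (C (u i) : MvPolynomial (Fin (n + 1)) ℂ) • pderiv i := by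
    apply derivation_ext
    intro j
    rw [hs, Finset.sum_eq_single j]
    · simp [dirD, mkDerivation_X]
    · intro b _ hb
      simp [pderiv_X, Pi.single_apply, hb.symm]
    · simp
  rw [h, hs]

theorem dirD_C_mul {n : ℕ} (u : Fin (n + 1) → ℂ) (a : ℂ) (P : MvPolynomial (Fin (n + 1)) ℂ) :
    dirD u (C a * P) = C a * dirD u P := by
  rw [Derivation.leibniz, derivation_C]
  simp

theorem dirD_comm {n : ℕ} (u v : Fin (n + 1) → ℂ) (P : MvPolynomial (Fin (n + 1)) ℂ) :
    dirD u (dirD v P) = dirD v (dirD u P) := by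
  have h : ⁅dirD u, dirD v⁆ = 0 := by
    apply derivation_ext
    intro j
    simp [Derivation.commutator_apply, dirD, mkDerivation_X]
  have h2 := congrArg (fun D => D P) h
  simp only [Derivation.commutator_apply, Derivation.coe_zero, Pi.zero_apply] at h2
  exact sub_eq_zero.mp h2

theorem dirD_hom {n d : ℕ} (u : Fin (n + 1) → ℂ) {P : MvPolynomial (Fin (n + 1)) ℂ}
    (h : P.IsHomogeneous d) : (dirD u P).IsHomogeneous (d - 1) := by
  rw [dirD_eq]
  apply IsHomogeneous.sum
  intro i _
  exact (h.pderiv).C_mul _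

/-- The numerator of the curvature of the level sets of `P`. -/
def curvH {n : ℕ} (u v : Fin (n + 1) → ℂ) (P : MvPolynomial (Fin (n + 1)) ℂ) :
    MvPolynomial (Fin (n + 1)) ℂ :=
  (dirD v P) ^ 2 * dirD u (dirD u P) - 2 * (dirD u P * dirD v P * dirD u (dirD v P))
    + (dirD u P) ^ 2 * dirD v (dirD v P)

/-- The first-order Wronskian. -/
def wr {n : ℕ} (u : Fin (n + 1) → ℂ) (F G : MvPolynomial (Fin (n + 1)) ℂ) :
    MvPolynomial (Fin (n + 1)) ℂ := F * dirD u G - G * dirD u F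

/-- The second-order Wronskian-like expression. -/
def wr2 {n : ℕ} (u v : Fin (n + 1) → ℂ) (F G : MvPolynomial (Fin (n + 1)) ℂ) :
    MvPolynomial (Fin (n + 1)) ℂ := F * dirD u (dirD v G) - G * dirD u (dirD v F)

/-- The inflection polynomial of the pencil. -/
def infl {n : ℕ} (u v : Fin (n + 1) → ℂ) (F G : MvPolynomial (Fin (n + 1)) ℂ) :
    MvPolynomial (Fin (n + 1)) ℂ :=
  (wr v F G) ^ 2 * wr2 u u F G - C 2 * (wr u F G * wr v F G * wr2 u v F G)
    + (wr u F G) ^ 2 * wr2 v v F G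

theorem dvd_infl_add {n : ℕ} (u v : Fin (n + 1) → ℂ) (P Q : MvPolynomial (Fin (n + 1)) ℂ) :
    P ∣ infl u v P Q + Q ^ 3 * curvH u v P := by
  have h2 : (C 2 : MvPolynomial (Fin (n + 1)) ℂ) = 2 := map_ofNat C 2
  unfold infl curvH wr wr2
  rw [h2]
  generalize dirD u (dirD u P) = p11
  generalize dirD u (dirD v P) = p12
  generalize dirD v (dirD v P) = p22
  generalize dirD u (dirD u Q) = q11
  generalize dirD u (dirD v Q) = q12
  generalize dirD v (dirD v Q) = q22
  generalize dirD u P = p1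
  generalize dirD v P = p2
  generalize dirD u Q = q1
  generalize dirD v Q = q2
  refine ⟨(P * q2 - Q * p2) ^ 2 * q11 - 2 * ((P * q1 - Q * p1) * (P * q2 - Q * p2) * q12)
    + (P * q1 - Q * p1) ^ 2 * q22
    - Q * p11 * (P * q2 ^ 2 - 2 * q2 * Q * p2)
    + 2 * Q * p12 * (P * q1 * q2 - q1 * Q * p2 - Q * p1 * q2)
    - Q * p22 * (P * q1 ^ 2 - 2 * q1 * Q * p1), ?_⟩
  ring

theorem linform_dd {n : ℕ} (u v : Fin (n + 1) → ℂ) {α : MvPolynomial (Fin (n + 1)) ℂ}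
    (h : α.IsHomogeneous 1) : dirD u (dirD v α) = 0 := by
  have h1 := dirD_hom v h
  have h2 := (totalDegree_zero_iff_isHomogeneous (p := dirD v α)).mpr h1
  rw [totalDegree_eq_zero_iff_eq_C] at h2
  rw [h2, derivation_C]

theorem dvd_curvH {n : ℕ} (u v : Fin (n + 1) → ℂ) (s : Multiset (MvPolynomial (Fin (n + 1)) ℂ))
    (hs : ∀ α ∈ s, IsLinearForm n α) : s.prod ∣ curvH u v s.prod := by
  induction s using Multiset.induction_on with
  | empty => simp
  | cons α s ih =>
    obtain ⟨q, hq⟩ := ih (fun β hβ => hs β (Multiset.mem_cons_of_mem hβ))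
    have hα := (hs α (Multiset.mem_cons_self α s)).2
    rw [Multiset.prod_cons]
    generalize s.prod = P at hq ⊢
    have a11 := linform_dd u u hα
    have a12 := linform_dd u v hα
    have a22 := linform_dd v v hα
    have a21 := linform_dd v u hα
    unfold curvH at hq ⊢
    simp only [Derivation.leibniz, map_add, smul_eq_mul, a11, a12, a22, a21, mul_zero, add_zero]
    generalize dirD u (dirD u P) = p11 at *
    generalize dirD u (dirD v P) = p12 at *
    generalize dirD v (dirD v P) = p22 at *
    generalize dirD u P = p1 at *
    generalize dirD v P = p2 at *
    generalize dirD u α = a1 at *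
    generalize dirD v α = a2 at *
    refine ⟨α ^ 2 * q + (2 * α * p2 * a2 + P * a2 ^ 2) * p11
      - 2 * (α * (p1 * a2 + a1 * p2) + P * a1 * a2) * p12
      + (2 * α * p1 * a1 + P * a1 ^ 2) * p22
      + 4 * p2 * a2 * a1 * p1 - 2 * (p1 * a2 + a1 * p2) * (a1 * p2 + a2 * p1)
      + 4 * p1 * a1 * a2 * p2, ?_⟩
    linear_combination α ^ 3 * hq

theorem infl_left {n : ℕ} (u v : Fin (n + 1) → ℂ) (F G : MvPolynomial (Fin (n + 1)) ℂ) (a b : ℂ) :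
    infl u v (C a * F + C b * G) G = C a ^ 3 * infl u v F G := by
  unfold infl wr wr2
  simp only [map_add, dirD_C_mul]
  ring

theorem infl_right {n : ℕ} (u v : Fin (n + 1) → ℂ) (F G : MvPolynomial (Fin (n + 1)) ℂ) (a b : ℂ) :
    infl u v (C a * F + C b * G) F = - C b ^ 3 * infl u v F G := by
  unfold infl wr wr2
  simp only [map_add, dirD_C_mul]
  ring

theorem cr_dvd_infl {n : ℕ} (u v : Fin (n + 1) → ℂ) (F G : MvPolynomial (Fin (n + 1)) ℂ) (a b : ℂ)
    (hab : a ≠ 0 ∨ b ≠ 0) (h : CompletelyReducible n (C a * F + C b * G)) :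
    (C a * F + C b * G) ∣ infl u v F G := by
  obtain ⟨s, hs, hP⟩ := h
  have h1 : (C a * F + C b * G) ∣ curvH u v (C a * F + C b * G) := by
    rw [hP]; exact dvd_curvH u v s hs
  have h2 : ∀ Q, (C a * F + C b * G) ∣ infl u v (C a * F + C b * G) Q := fun Q =>
    (dvd_add_left (h1.mul_left _)).mp (dvd_infl_add u v _ Q)
  have hu : ∀ z : ℂ, z ≠ 0 → IsUnit ((C z : MvPolynomial (Fin (n + 1)) ℂ) ^ 3) := fun z hz =>
    ((isUnit_iff_ne_zero.mpr hz).map C).pow 3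
  rcases hab with ha | hb
  · have := h2 G
    rw [infl_left] at this
    exact ((hu a ha).dvd_mul_left).mp this
  · have := h2 F
    rw [infl_right] at this
    exact ((hu b hb).neg.dvd_mul_left).mp this

theorem infl_hom {n d : ℕ} (u v : Fin (n + 1) → ℂ) {F G : MvPolynomial (Fin (n + 1)) ℂ}
    (hF : F.IsHomogeneous d) (hG : G.IsHomogeneous d) :
    (infl u v F G).IsHomogeneous ((d + (d - 1)) * 2 + (d + (d - 1 - 1))) := by
  have h1 : ∀ w, (wr w F G).IsHomogeneous (d + (d - 1)) := fun w =>
    (hF.mul (dirD_hom w hG)).sub (hG.mul (dirD_hom w hF))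
  have h2 : ∀ w z, (wr2 w z F G).IsHomogeneous (d + (d - 1 - 1)) := fun w z =>
    (hF.mul (dirD_hom w (dirD_hom z hG))).sub (hG.mul (dirD_hom w (dirD_hom z hF)))
  refine ((((h1 v).pow 2).mul (h2 u u)).sub ?_).add (((h1 u).pow 2).mul (h2 v v))
  have := (((h1 u).mul (h1 v)).mul (h2 u v)).C_mul 2
  rwa [mul_two]

theorem cr_ne_zero {n : ℕ} {P : MvPolynomial (Fin (n + 1)) ℂ} (h : CompletelyReducible n P) :
    P ≠ 0 := by
  obtain ⟨s, hs, rfl⟩ := h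
  rw [Ne, Multiset.prod_eq_zero_iff]
  intro h0
  exact (hs 0 h0).1 rfl

theorem infl_eq_zero {n d : ℕ} (hd : 1 ≤ d) (F G : MvPolynomial (Fin (n + 1)) ℂ)
    (hF : F.IsHomogeneous d) (hG : G.IsHomogeneous d) (hcop : RelPrime n F G)
    (c : Fin 6 → ℂ × ℂ)
    (hprop : ∀ i j, i ≠ j → (c i).1 * (c j).2 ≠ (c i).2 * (c j).1)
    (hcr : ∀ i, CompletelyReducible n (C (c i).1 * F + C (c i).2 * G))
    (u v : Fin (n + 1) → ℂ) : infl u v F G = 0 := by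
  by_contra hne
  have hdvd : (∏ i, (C (c i).1 * F + C (c i).2 * G)) ∣ infl u v F G := by
    apply Fintype.prod_dvd_of_isRelPrime
    · intro i j hij p hpi hpj
      have hdet : (c i).1 * (c j).2 - (c i).2 * (c j).1 ≠ 0 := sub_ne_zero.mpr (hprop i j hij)
      have hu : IsUnit (C ((c i).1 * (c j).2 - (c i).2 * (c j).1) :
        MvPolynomial (Fin (n + 1)) ℂ) := (isUnit_iff_ne_zero.mpr hdet).map C
      apply hcop p
      · rw [← hu.dvd_mul_left]
        have := dvd_sub (hpi.mul_left (C (c j).2)) (hpj.mul_left (C (c i).2))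
        convert this using 1
        simp only [map_sub, map_mul]
        ring
      · rw [← hu.dvd_mul_left]
        have := dvd_sub (hpj.mul_left (C (c i).1)) (hpi.mul_left (C (c j).1))
        convert this using 1
        simp only [map_sub, map_mul]
        ring
    · intro i
      apply cr_dvd_infl _ _ _ _ _ _ _ (hcr i)
      by_contra hcon
      push Not at hcon
      obtain ⟨j, hj⟩ : ∃ j : Fin 6, i ≠ j := ⟨i + 1, by fin_cases i <;> decide⟩
      apply hprop i j hj
      rw [hcon.1, hcon.2]; ring
  have hpd : (∏ i, (C (c i).1 * F + C (c i).2 * G)).IsHomogeneous (∑ _i : Fin 6, d) :=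
    IsHomogeneous.prod _ _ _ (fun i _ => (hF.C_mul _).add (hG.C_mul _))
  have h1 := totalDegree_le_of_dvd_of_isDomain hdvd hne
  rw [hpd.totalDegree (Finset.prod_ne_zero_iff.mpr (fun i _ => cr_ne_zero (hcr i))),
    (infl_hom u v hF hG).totalDegree hne] at h1
  simp at h1
  omega

/-- Restriction to the line `p + s t`. -/
def lineHom {n : ℕ} (p t : Fin (n + 1) → ℂ) :
    MvPolynomial (Fin (n + 1)) ℂ →ₐ[ℂ] Polynomial ℂ :=
  aeval (fun i => Polynomial.C (p i) + Polynomial.C (t i) * Polynomial.X)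

theorem lineHom_dirD {n : ℕ} (p t : Fin (n + 1) → ℂ) (P : MvPolynomial (Fin (n + 1)) ℂ) :
    lineHom p t (dirD t P) = Polynomial.derivative (lineHom p t P) := by
  induction P using MvPolynomial.induction_on with
  | C a =>
    rw [derivation_C, map_zero]
    have : lineHom p t (C a) = Polynomial.C a := by
      simp [lineHom]
    rw [this, Polynomial.derivative_C]
  | add P Q hP hQ => simp only [map_add, hP, hQ]
  | mul_X P i hP =>
    have hX : lineHom p t (X i) = Polynomial.C (p i) + Polynomial.C (t i) * Polynomial.X := by
      simp [lineHom]
    have hD : lineHom p t (dirD t (X i)) = Polynomial.C (t i) := by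
      simp [lineHom, dirD, mkDerivation_X]
    rw [Derivation.leibniz, map_add, map_mul, smul_eq_mul, smul_eq_mul, map_mul, map_mul, hP, hD, hX,
      Polynomial.derivative_mul]
    simp
    ring

theorem lineHom_eval {n : ℕ} (p t : Fin (n + 1) → ℂ) (P : MvPolynomial (Fin (n + 1)) ℂ) (s : ℂ) :
    (lineHom p t P).eval s = eval (fun i => p i + t i * s) P := by
  induction P using MvPolynomial.induction_on with
  | C a => simp [lineHom]
  | add P Q hP hQ => simp only [map_add, Polynomial.eval_add, hP, hQ]
  | mul_X P i hP =>
    rw [map_mul, Polynomial.eval_mul, hP]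
    simp [lineHom]

theorem univ_zero (g M N : Polynomial ℂ) (h0 : g.eval 0 = 0) (h1 : g.derivative.eval 0 = 0)
    (hM : M.eval 0 ≠ 0) (hdvd : g ∣ M * g.derivative.derivative + g.derivative * N) : g = 0 := by
  by_contra hg
  have hg' : g.derivative ≠ 0 := by
    intro h
    have := Polynomial.natDegree_eq_zero_of_derivative_eq_zero h
    rw [Polynomial.natDegree_eq_zero] at this
    obtain ⟨x, rfl⟩ := this
    simp at h0
    simp [h0] at hg
  have hg'' : g.derivative.derivative ≠ 0 := by
    intro h
    have := Polynomial.natDegree_eq_zero_of_derivative_eq_zero h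
    rw [Polynomial.natDegree_eq_zero] at this
    obtain ⟨x, hx⟩ := this
    rw [← hx] at h1 hg'
    simp at h1
    simp [h1] at hg'
  have k1 := Polynomial.derivative_rootMultiplicity_of_root (p := g) (t := 0) h0
  have k2 := Polynomial.derivative_rootMultiplicity_of_root (p := g.derivative) (t := 0) h1
  have p2 := (Polynomial.rootMultiplicity_pos hg').mpr h1
  set m := g.derivative.rootMultiplicity 0 with hm
  have d1 : (Polynomial.X - Polynomial.C (0 : ℂ)) ^ m ∣ g.derivative :=
    Polynomial.pow_rootMultiplicity_dvd _ _
  have d0 : (Polynomial.X - Polynomial.C (0 : ℂ)) ^ m ∣ g :=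
    (pow_dvd_pow _ (by omega)).trans (Polynomial.pow_rootMultiplicity_dvd g 0)
  have d2 : (Polynomial.X - Polynomial.C (0 : ℂ)) ^ m ∣ M * g.derivative.derivative :=
    (dvd_add_left (d1.mul_right N)).mp (d0.trans hdvd)
  have hM0 : M ≠ 0 := by rintro rfl; simp at hM
  have hmul : M * g.derivative.derivative ≠ 0 := mul_ne_zero hM0 hg''
  have := (Polynomial.le_rootMultiplicity_iff hmul).mpr d2
  rw [Polynomial.rootMultiplicity_mul hmul, Polynomial.rootMultiplicity_eq_zero (p := M) hM, k2] at this
  omega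

theorem line_vanish {n : ℕ} (p t v : Fin (n + 1) → ℂ) (P G : MvPolynomial (Fin (n + 1)) ℂ)
    (hE : infl t v P G = 0) (hP : eval p P = 0) (hG : eval p G ≠ 0)
    (ht : eval p (dirD t P) = 0) (hv : eval p (dirD v P) ≠ 0) :
    eval (fun i => p i + t i) P = 0 := by
  have hd := dvd_infl_add t v P G
  rw [hE, zero_add] at hd
  have hd2 := map_dvd (lineHom p t) hd
  have e0 : ∀ Q, (lineHom p t Q).eval 0 = eval p Q := by
    intro Q
    rw [lineHom_eval]
    simp
  have hz : lineHom p t P = 0 := by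
    apply univ_zero _ (lineHom p t (G ^ 3 * (dirD v P) ^ 2))
      (lineHom p t (G ^ 3 * (- 2 * (dirD v P * dirD t (dirD v P)) + dirD t P * dirD v (dirD v P))))
    · rw [e0, hP]
    · rw [← lineHom_dirD, e0, ht]
    · rw [e0]
      simp [hG, hv]
    · rw [← lineHom_dirD, ← lineHom_dirD, ← map_mul, ← map_mul, ← map_add]
      convert hd2 using 2
      unfold curvH
      ring
  have := lineHom_eval p t P 1
  rw [hz] at this
  simpa using this.symm

theorem dvd_of_vanish {n : ℕ} (l : Fin (n + 1) → ℂ) (i0 : Fin (n + 1)) (hi : l i0 ≠ 0)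
    (P : MvPolynomial (Fin (n + 1)) ℂ)
    (hP : ∀ y : Fin (n + 1) → ℂ, ∑ i, l i * y i = 0 → eval y P = 0) :
    (∑ i, C (l i) * X i) ∣ P := by
  classical
  set L : MvPolynomial (Fin (n + 1)) ℂ := ∑ i, C (l i) * X i with hL
  let f : Fin (n + 1) → MvPolynomial (Fin (n + 1)) ℂ :=
    fun i => X i - (if i = i0 then C (l i0)⁻¹ * L else 0)
  have h0 : aeval f P = 0 := by
    apply MvPolynomial.funext
    intro y
    rw [map_zero]
    have : eval y (aeval f P) = eval (fun i => eval y (f i)) P := by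
      rw [aeval_def, algebraMap_eq, eval_eval₂]
      simp only [eval, eval₂Hom]
      congr 1
      ext
      simp
    rw [this]
    apply hP
    simp only [f, map_sub, eval_X, mul_sub, Finset.sum_sub_distrib]
    rw [Finset.sum_eq_single (f := fun x => l x * (eval y) (if x = i0 then C (l i0)⁻¹ * L else 0)) i0]
    · simp [hL, hi]
    · intro b _ hb; simp [hb]
    · simp
  have h1 : Ideal.Quotient.mkₐ ℂ (Ideal.span {L}) (aeval f P) =
      Ideal.Quotient.mkₐ ℂ (Ideal.span {L}) P := by
    have : (Ideal.Quotient.mkₐ ℂ (Ideal.span {L})).comp (aeval f) =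
        Ideal.Quotient.mkₐ ℂ (Ideal.span {L}) := by
      apply MvPolynomial.algHom_ext
      intro i
      simp only [AlgHom.comp_apply, aeval_X, f, map_sub, sub_eq_self]
      split_ifs
      · rw [Ideal.Quotient.mkₐ_eq_mk, Ideal.Quotient.eq_zero_iff_mem, Ideal.mem_span_singleton]
        exact Dvd.intro_left _ rfl
      · simp
    exact congrArg (fun φ => φ P) this
  rw [h0, map_zero] at h1
  have h2 := h1.symm
  rw [Ideal.Quotient.mkₐ_eq_mk, Ideal.Quotient.eq_zero_iff_mem, Ideal.mem_span_singleton] at h2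
  exact h2

theorem eval_dirD {n : ℕ} (p y : Fin (n + 1) → ℂ) (P : MvPolynomial (Fin (n + 1)) ℂ) :
    eval p (dirD y P) = ∑ i, eval p (pderiv i P) * y i := by
  rw [dirD_eq]
  simp [mul_comm]

theorem exists_wr_ne_zero {n d : ℕ} (hd : 1 ≤ d) (F G : MvPolynomial (Fin (n + 1)) ℂ)
    (hG : G.IsHomogeneous d) (hG0 : G ≠ 0) (hcop : RelPrime n F G) :
    ∃ v : Fin (n + 1) → ℂ, wr v F G ≠ 0 := by
  by_contra! hcon
  have hrel : IsRelPrime G F := fun p h1 h2 => hcop p h2 h1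
  have hz : ∀ v, dirD v G = 0 := by
    intro v
    by_contra hne
    have h1 : G ∣ F * dirD v G := ⟨dirD v F, sub_eq_zero.mp (hcon v)⟩
    have h2 := totalDegree_le_of_dvd_of_isDomain (hrel.dvd_of_dvd_mul_left h1) hne
    rw [hG.totalDegree hG0, (dirD_hom v hG).totalDegree hne] at h2
    omega
  have hE := hG.sum_X_mul_pderiv
  have hp : ∀ i, pderiv i G = 0 := by
    intro i
    have := hz (Pi.single i 1)
    rw [dirD_eq, Finset.sum_eq_single i] at this
    · simpa using this
    · intro b _ hb; simp [Pi.single_apply, hb]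
    · simp
  simp only [hp, mul_zero, Finset.sum_const_zero] at hE
  rcases smul_eq_zero.mp hE.symm with h | h
  · omega
  · exact hG0 h

/-- If a pencil of degree-d hypersurfaces on ℙⁿ with irreducible generic fiber has
more than 5 pairwise distinct completely reducible members, then d = 1. -/
theorem pencil_more_than_five_completely_reducible_fibers
    (n d : ℕ) (hn : 1 ≤ n) (hd : 1 ≤ d)
    (F G : MvPolynomial (Fin (n + 1)) ℂ)
    (hF : F.IsHomogeneous d) (hG : G.IsHomogeneous d)
    (hFcr : CompletelyReducible n F) (hGcr : CompletelyReducible n G)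
    (hcop : RelPrime n F G)
    (hgen : GenericFiberIrreducible n F G)
    (c : Fin 6 → ℂ × ℂ)
    (hprop : ∀ i j, i ≠ j → (c i).1 * (c j).2 ≠ (c i).2 * (c j).1)
    (hcr : ∀ i, CompletelyReducible n (C (c i).1 * F + C (c i).2 * G)) :
    d = 1 := by
  have hE := infl_eq_zero hd F G hF hG hcop c hprop hcr
  have hG0 := cr_ne_zero hGcr
  obtain ⟨v, hv⟩ := exists_wr_ne_zero hd F G hG hG0 hcop
  have hmem : ∀ z : ℂ, F + C z * G ≠ 0 := by
    intro z hz
    have hGu : IsUnit G := hcop G ⟨- C z, by linear_combination hz⟩ dvd_rfl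
    have h1 := hG.totalDegree hG0
    have h2 := totalDegree_le_of_dvd_of_isDomain hGu.dvd (one_ne_zero)
    rw [totalDegree_one] at h2
    omega
  have hprod : G * wr v F G * ∏ z ∈ hgen.toFinset, (F + C z * G) ≠ 0 :=
    mul_ne_zero (mul_ne_zero hG0 hv) (Finset.prod_ne_zero_iff.mpr fun z _ => hmem z)
  obtain ⟨p, hp⟩ : ∃ p, eval p (G * wr v F G * ∏ z ∈ hgen.toFinset, (F + C z * G)) ≠ 0 := by
    by_contra! hcon
    exact hprod (MvPolynomial.funext fun x => by rw [hcon x, map_zero])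
  rw [map_mul, map_mul, map_prod] at hp
  have hpG : eval p G ≠ 0 := left_ne_zero_of_mul (left_ne_zero_of_mul hp)
  have hpv : eval p (wr v F G) ≠ 0 := right_ne_zero_of_mul (left_ne_zero_of_mul hp)
  have hpb := Finset.prod_ne_zero_iff.mp (right_ne_zero_of_mul hp)
  obtain ⟨z, hz⟩ : ∃ z : ℂ, z = - eval p F / eval p G := ⟨_, rfl⟩
  have hP0 : eval p (F + C z * G) = 0 := by
    simp only [map_add, map_mul, eval_C]
    rw [hz]; field_simp; ring
  have hirr : Irreducible (F + C z * G) := by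
    by_contra hcon
    exact hpb z ((Set.Finite.mem_toFinset hgen).mpr hcon) hP0
  have hPE : ∀ u w, infl u w (F + C z * G) G = 0 := by
    intro u w
    have := infl_left u w F G 1 z
    rw [hE, mul_zero, C_1, one_mul] at this
    exact this
  have hPhom : (F + C z * G).IsHomogeneous d := hF.add (hG.C_mul z)
  have hPv : eval p (dirD v (F + C z * G)) ≠ 0 := by
    intro h
    apply hpv
    have e : wr v F G = (F + C z * G) * dirD v G - G * dirD v (F + C z * G) := by
      unfold wr
      simp only [map_add, dirD_C_mul]
      ring
    rw [e, map_sub, map_mul, map_mul, hP0, h]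
    ring
  have hPne := hmem z
  generalize F + C z * G = P at *
  have hgrad : ∃ i0, eval p (pderiv i0 P) ≠ 0 := by
    by_contra! hcon
    apply hPv
    rw [eval_dirD]
    simp [hcon]
  obtain ⟨i0, hi0⟩ := hgrad
  have heul : ∑ i, eval p (pderiv i P) * p i = 0 := by
    have := congrArg (eval p) hPhom.sum_X_mul_pderiv
    rw [map_nsmul, hP0, smul_zero, map_sum] at this
    rw [← this]
    apply Finset.sum_congr rfl
    intro i _
    simp [mul_comm]
  have hdv : (∑ i, C (eval p (pderiv i P)) * X i) ∣ P := by
    apply dvd_of_vanish (fun i => eval p (pderiv i P)) i0 hi0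
    intro y hy
    have := line_vanish p (fun i => y i - p i) v P G (hPE _ _) hP0 hpG (by
      rw [eval_dirD]
      simp only [mul_sub, Finset.sum_sub_distrib]
      rw [hy, heul, sub_zero]) hPv
    simpa using this
  obtain ⟨q, hq⟩ := hdv
  set L : MvPolynomial (Fin (n + 1)) ℂ := ∑ i, C (eval p (pderiv i P)) * X i with hL
  have hLhom : L.IsHomogeneous 1 := by
    apply IsHomogeneous.sum
    intro i _
    exact (isHomogeneous_X ℂ i).C_mul _
  have hL0 : L ≠ 0 := by
    intro h; rw [h, zero_mul] at hq; exact hPne hq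
  have hq0 : q ≠ 0 := by
    intro h; rw [h, mul_zero] at hq; exact hPne hq
  have hdeg := totalDegree_mul_of_isDomain hL0 hq0
  have hunit : ∀ w : MvPolynomial (Fin (n + 1)) ℂ, IsUnit w → w.totalDegree = 0 := by
    intro w hw
    have h2 := totalDegree_le_of_dvd_of_isDomain hw.dvd (one_ne_zero)
    rw [totalDegree_one] at h2
    omega
  rw [← hq, hPhom.totalDegree hPne, hLhom.totalDegree hL0] at hdeg
  rcases hirr.isUnit_or_isUnit hq with h | h
  · have := hunit _ h
    rw [hLhom.totalDegree hL0] at this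
    omega
  · have := hunit _ h
    omega
end
end

section
/- Let n ≥ 1 and let F, G be coprime completely reducible homogeneous polynomials of the same degree d ≥ 1 in R = MvPolynomial (Fin (n+1)) ℂ such that the generic fiber of the pencil 𝒫 generated by F and G is irreducible. If there exist more than 3 pairwise distinct completely reducible members of 𝒫, then the set of all linear factors of F together with all linear factors of G spans a subspace of dimension at most 3 of the (n+1)-dimensional space of homogeneous degree-1 polynomials (equivalently, 𝒫 is a linear pull-back of a pencil on ℙ²). -/
open MvPolynomial

noncomputable section

namespace PencilCR


/-- The linear form with coefficient vector `a`. -/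
def linForm {N : ℕ} : (Fin N → ℂ) →ₗ[ℂ] MvPolynomial (Fin N) ℂ :=
  Fintype.linearCombination ℂ (fun j => (X j : MvPolynomial (Fin N) ℂ))

lemma eval_linForm {N : ℕ} (a x : Fin N → ℂ) : eval x (linForm a) = a ⬝ᵥ x := by
  simp [linForm, Fintype.linearCombination_apply, dotProduct, smul_eval]

lemma exists_linForm {N : ℕ} (p : MvPolynomial (Fin N) ℂ) (hp : p.IsHomogeneous 1) :
    ∃ a, p = linForm a := by
  have h : p ∈ homogeneousSubmodule (Fin N) ℂ 1 := hp
  rw [homogeneousSubmodule_one_eq_span_X, ← Fintype.range_linearCombination] at h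
  obtain ⟨a, ha⟩ := h
  exact ⟨a, ha.symm⟩

lemma linForm_not_isUnit {N : ℕ} (a : Fin N → ℂ) : ¬ IsUnit (linForm a) := by
  intro h
  have := h.map (eval (0 : Fin N → ℂ))
  rw [eval_linForm] at this
  simp at this

/-- A generic vector in the annihilator of `W`. -/
lemma exists_generic {N : ℕ} {ι : Type*} [Finite ι] (W : Submodule ℂ (Fin N → ℂ))
    (c : ι → Fin N → ℂ) :
    ∃ x : Fin N → ℂ, (∀ w ∈ W, w ⬝ᵥ x = 0) ∧ ∀ i, c i ∉ W → c i ⬝ᵥ x ≠ 0 := by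
  obtain ⟨f, hf⟩ := Module.exists_dual_forall_apply_ne_zero (K := ℂ)
    (fun i : {i // c i ∉ W} => W.mkQ (c i.1)) (by
      rintro ⟨i, hi⟩
      simpa using hi)
  have key : ∀ a : Fin N → ℂ, a ⬝ᵥ (fun j => f (W.mkQ (Pi.single j 1))) = f (W.mkQ a) := by
    intro a
    conv_rhs => rw [pi_eq_sum_univ' a]
    simp only [map_sum, map_smul, dotProduct, smul_eq_mul]
  refine ⟨fun j => f (W.mkQ (Pi.single j 1)), ?_, ?_⟩
  · intro w hw
    rw [key, (Submodule.Quotient.mk_eq_zero W).2 hw |> fun h => (show W.mkQ w = 0 from h), map_zero]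
  · intro i hi
    rw [key]
    exact hf ⟨i, hi⟩

/-- Directional derivative. -/
def dirD {N : ℕ} (u : Fin N → ℂ) : Derivation ℂ (MvPolynomial (Fin N) ℂ) (MvPolynomial (Fin N) ℂ) :=
  mkDerivation ℂ (fun j => C (u j))

lemma dirD_linForm {N : ℕ} (u a : Fin N → ℂ) : dirD u (linForm a) = C (a ⬝ᵥ u) := by
  simp [linForm, dirD, Fintype.linearCombination_apply, dotProduct, mkDerivation_X, smul_eq_C_mul]

/-- First logarithmic derivative. -/
def S1 {N : ℕ} {ι : Type*} (s : Finset ι) (a : ι → Fin N → ℂ) (x u : Fin N → ℂ) : ℂ :=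
  ∑ i ∈ s, (a i ⬝ᵥ u) / (a i ⬝ᵥ x)

def S2 {N : ℕ} {ι : Type*} (s : Finset ι) (a : ι → Fin N → ℂ) (x u w : Fin N → ℂ) : ℂ :=
  ∑ i ∈ s, (a i ⬝ᵥ u) * (a i ⬝ᵥ w) / (a i ⬝ᵥ x) ^ 2

lemma eval_dirD_prod {N : ℕ} {ι : Type*} (s : Finset ι) (a : ι → Fin N → ℂ)
    (x : Fin N → ℂ) (hx : ∀ i ∈ s, a i ⬝ᵥ x ≠ 0) :
    (∀ u, eval x (dirD u (∏ i ∈ s, linForm (a i))) =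
      eval x (∏ i ∈ s, linForm (a i)) * S1 s a x u) ∧
    (∀ u w, eval x (dirD u (dirD w (∏ i ∈ s, linForm (a i)))) =
      eval x (∏ i ∈ s, linForm (a i)) * (S1 s a x u * S1 s a x w - S2 s a x u w)) := by
  classical
  induction s using Finset.induction_on with
  | empty => simp [S1, S2]
  | insert i s his ih =>
    obtain ⟨h1, h2⟩ := ih (fun j hj => hx j (Finset.mem_insert_of_mem hj))
    have hi := hx i (Finset.mem_insert_self _ _)
    constructor
    · intro u
      rw [Finset.prod_insert his, Derivation.leibniz]
      simp only [smul_eq_mul, map_add, map_mul, dirD_linForm, h1, eval_linForm, eval_C]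
      simp only [S1, Finset.sum_insert his]
      field_simp
      ring
    · intro u w
      rw [Finset.prod_insert his, Derivation.leibniz]
      simp only [smul_eq_mul, map_add, dirD_linForm, Derivation.leibniz, map_mul, h1, h2,
        eval_linForm, eval_C]
      have : dirD u (C (a i ⬝ᵥ w)) = 0 := Derivation.map_algebraMap _ _
      simp only [this, map_zero, mul_zero]
      simp only [S1, S2, Finset.sum_insert his]
      field_simp
      ring

/-- Linear relation among products gives linear relations among derivatives. -/
lemma relations {N : ℕ} {ι₁ ι₂ ι₃ : Type*} [Fintype ι₁] [Fintype ι₂] [Fintype ι₃]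
    (a : ι₁ → Fin N → ℂ) (b : ι₂ → Fin N → ℂ) (c : ι₃ → Fin N → ℂ) (r s : ℂ)
    (h : ∏ i, linForm (c i) = C r * ∏ i, linForm (a i) + C s * ∏ i, linForm (b i))
    (x : Fin N → ℂ) (ha : ∀ i, a i ⬝ᵥ x ≠ 0) (hb : ∀ i, b i ⬝ᵥ x ≠ 0) (hc : ∀ i, c i ⬝ᵥ x ≠ 0) :
    (∏ i, c i ⬝ᵥ x = r * ∏ i, a i ⬝ᵥ x + s * ∏ i, b i ⬝ᵥ x) ∧
    (∀ u, (∏ i, c i ⬝ᵥ x) * S1 Finset.univ c x u =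
      r * ((∏ i, a i ⬝ᵥ x) * S1 Finset.univ a x u) +
      s * ((∏ i, b i ⬝ᵥ x) * S1 Finset.univ b x u)) ∧
    (∀ u w, (∏ i, c i ⬝ᵥ x) * (S1 Finset.univ c x u * S1 Finset.univ c x w
        - S2 Finset.univ c x u w) =
      r * ((∏ i, a i ⬝ᵥ x) * (S1 Finset.univ a x u * S1 Finset.univ a x w
        - S2 Finset.univ a x u w)) +
      s * ((∏ i, b i ⬝ᵥ x) * (S1 Finset.univ b x u * S1 Finset.univ b x w
        - S2 Finset.univ b x u w))) := by
  have A := eval_dirD_prod Finset.univ a x (fun i _ => ha i)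
  have B := eval_dirD_prod Finset.univ b x (fun i _ => hb i)
  have K := eval_dirD_prod Finset.univ c x (fun i _ => hc i)
  simp only [map_prod, eval_linForm] at A B K
  have hD : ∀ (u : Fin N → ℂ) (t : ℂ) (p : MvPolynomial (Fin N) ℂ),
      dirD u (C t * p) = C t * dirD u p := by
    intro u t p
    rw [← smul_eq_C_mul, ← smul_eq_C_mul, Derivation.map_smul]
  refine ⟨?_, ?_, ?_⟩
  · have := congrArg (eval x) h
    simpa [map_prod, eval_linForm] using this
  · intro u
    rw [← A.1, ← B.1, ← K.1, h]
    simp [hD]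
  · intro u w
    rw [← A.2, ← B.2, ← K.2, h]
    simp [hD]

/-- The Gram matrix. -/
def gram {N : ℕ} {ι₁ ι₂ : Type*} [Fintype ι₁] [Fintype ι₂]
    (a : ι₁ → Fin N → ℂ) (b : ι₂ → Fin N → ℂ) (x : Fin N → ℂ) (u : Fin 4 → Fin N → ℂ) :
    Matrix (Fin 4) (Fin 4) ℂ :=
  Matrix.of fun p q => S2 Finset.univ a x (u p) (u q) - S2 Finset.univ b x (u p) (u q)

lemma S2_self_right {N : ℕ} {ι : Type*} (s : Finset ι) (a : ι → Fin N → ℂ) (x u : Fin N → ℂ)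
    (hx : ∀ i ∈ s, a i ⬝ᵥ x ≠ 0) : S2 s a x u x = S1 s a x u := by
  unfold S1 S2
  refine Finset.sum_congr rfl fun i hi => ?_
  have := hx i hi
  field_simp

lemma S1_self {N : ℕ} {ι : Type*} (s : Finset ι) (a : ι → Fin N → ℂ) (x : Fin N → ℂ)
    (hx : ∀ i ∈ s, a i ⬝ᵥ x ≠ 0) : S1 s a x x = s.card := by
  unfold S1
  rw [Finset.sum_congr rfl (fun i hi => div_self (hx i hi))]
  simp

lemma det_gram_rel {N d : ℕ} 
    (a₁ a₂ a₃ a₄ : Fin d → Fin N → ℂ) (r s r' s' : ℂ)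
    (h3 : ∏ i, linForm (a₃ i) = C r * ∏ i, linForm (a₁ i) + C s * ∏ i, linForm (a₂ i))
    (h4 : ∏ i, linForm (a₄ i) = C r' * ∏ i, linForm (a₁ i) + C s' * ∏ i, linForm (a₂ i))
    (x : Fin N → ℂ) (hx1 : ∀ i, a₁ i ⬝ᵥ x ≠ 0) (hx2 : ∀ i, a₂ i ⬝ᵥ x ≠ 0)
    (hx3 : ∀ i, a₃ i ⬝ᵥ x ≠ 0) (hx4 : ∀ i, a₄ i ⬝ᵥ x ≠ 0)
    (u : Fin 4 → Fin N → ℂ) (hu : u 3 = x) :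
    ((∏ i, a₃ i ⬝ᵥ x) * ∏ i, a₄ i ⬝ᵥ x) ^ 4 * (gram a₃ a₄ x u).det =
    (r * s' - r' * s) ^ 4 * (((∏ i, a₁ i ⬝ᵥ x) * ∏ i, a₂ i ⬝ᵥ x) ^ 4 * (gram a₁ a₂ x u).det) := by
  obtain ⟨e3, f3, g3⟩ := relations a₁ a₂ a₃ r s h3 x hx1 hx2 hx3
  obtain ⟨e4, f4, g4⟩ := relations a₁ a₂ a₄ r' s' h4 x hx1 hx2 hx4
  have n1 : (∏ i, a₁ i ⬝ᵥ x) ≠ 0 := Finset.prod_ne_zero_iff.2 fun i _ => hx1 i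
  have n2 : (∏ i, a₂ i ⬝ᵥ x) ≠ 0 := Finset.prod_ne_zero_iff.2 fun i _ => hx2 i
  have n3 : (∏ i, a₃ i ⬝ᵥ x) ≠ 0 := Finset.prod_ne_zero_iff.2 fun i _ => hx3 i
  have n4 : (∏ i, a₄ i ⬝ᵥ x) ≠ 0 := Finset.prod_ne_zero_iff.2 fun i _ => hx4 i
  have hc : ∀ p, gram a₁ a₂ x u p 3 = S1 Finset.univ a₁ x (u p) - S1 Finset.univ a₂ x (u p) := by
    intro p
    simp only [gram, Matrix.of_apply, hu]
    rw [S2_self_right _ _ _ _ (fun i _ => hx1 i), S2_self_right _ _ _ _ (fun i _ => hx2 i)]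
  have hz : S1 Finset.univ a₁ x (u 3) - S1 Finset.univ a₂ x (u 3) = 0 := by
    rw [hu, S1_self _ _ _ (fun i _ => hx1 i), S1_self _ _ _ (fun i _ => hx2 i)]
    simp
  generalize (∏ i, a₁ i ⬝ᵥ x) = F1 at *
  generalize (∏ i, a₂ i ⬝ᵥ x) = F2 at *
  generalize (∏ i, a₃ i ⬝ᵥ x) = F3 at *
  generalize (∏ i, a₄ i ⬝ᵥ x) = F4 at *
  set Δ := r * s' - r' * s with hΔ
  set ω : Fin 4 → ℂ := fun p => S1 Finset.univ a₁ x (u p) - S1 Finset.univ a₂ x (u p) with hω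
  -- the scalar
  set μ : ℂ := F1 * F2 * (r' / (F2 * F4) - s / (F1 * F3)) with hμ
  have key : (F3 * F4) • gram a₃ a₄ x u =
      ((Δ * (F1 * F2)) • gram a₁ a₂ x u) *
        (1 + Matrix.replicateCol Unit (Pi.single 3 1 : Fin 4 → ℂ) * Matrix.replicateRow Unit (μ • ω)) := by
    rw [mul_add, mul_one, ← Matrix.mul_assoc]
    ext p q
    simp only [Matrix.smul_apply, Matrix.add_apply, smul_eq_mul, Matrix.mul_apply,
      Matrix.replicateCol_apply, Matrix.replicateRow_apply, Pi.smul_apply]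
    simp only [Pi.single_apply, mul_ite, mul_one, mul_zero, Finset.sum_ite_eq',
      Finset.sum_ite_eq, Finset.mem_univ, if_true, Finset.univ_unique, Finset.sum_const,
      Finset.card_singleton, one_smul, hc]
    have f3p := f3 (u p)
    have f3q := f3 (u q)
    have f4p := f4 (u p)
    have f4q := f4 (u q)
    have g3' := g3 (u p) (u q)
    have g4' := g4 (u p) (u q)
    simp only [gram, Matrix.of_apply, hω]
    generalize S1 Finset.univ a₁ x (u p) = s1p at *
    generalize S1 Finset.univ a₂ x (u p) = s2p at *
    generalize S1 Finset.univ a₃ x (u p) = s3p at *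
    generalize S1 Finset.univ a₄ x (u p) = s4p at *
    generalize S1 Finset.univ a₁ x (u q) = s1q at *
    generalize S1 Finset.univ a₂ x (u q) = s2q at *
    generalize S1 Finset.univ a₃ x (u q) = s3q at *
    generalize S1 Finset.univ a₄ x (u q) = s4q at *
    generalize S2 Finset.univ a₁ x (u p) (u q) = t1 at *
    generalize S2 Finset.univ a₂ x (u p) (u q) = t2 at *
    generalize S2 Finset.univ a₃ x (u p) (u q) = t3 at *
    generalize S2 Finset.univ a₄ x (u p) (u q) = t4 at *
    have ht3 : t3 = s3p * s3q - (r * (F1 * (s1p * s1q - t1)) + s * (F2 * (s2p * s2q - t2))) / F3 := by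
      field_simp
      linear_combination -g3'
    have ht4 : t4 = s4p * s4q - (r' * (F1 * (s1p * s1q - t1)) + s' * (F2 * (s2p * s2q - t2))) / F4 := by
      field_simp
      linear_combination -g4'
    have hs3p : s3p = (r * (F1 * s1p) + s * (F2 * s2p)) / F3 := by
      field_simp
      linear_combination f3p
    have hs3q : s3q = (r * (F1 * s1q) + s * (F2 * s2q)) / F3 := by
      field_simp
      linear_combination f3q
    have hs4p : s4p = (r' * (F1 * s1p) + s' * (F2 * s2p)) / F4 := by
      field_simp
      linear_combination f4p
    have hs4q : s4q = (r' * (F1 * s1q) + s' * (F2 * s2q)) / F4 := by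
      field_simp
      linear_combination f4q
    rw [ht3, ht4, hs3p, hs3q, hs4p, hs4q, hμ, hΔ]
    field_simp
    rw [e3, e4]
    ring
  have hdet := congrArg Matrix.det key
  rw [Matrix.det_mul, Matrix.det_one_add_replicateCol_mul_replicateRow, Matrix.det_smul,
    Matrix.det_smul] at hdet
  have : (μ • ω) ⬝ᵥ (Pi.single 3 1 : Fin 4 → ℂ) = 0 := by
    rw [dotProduct_single]
    simp [hω, hz]
  rw [this] at hdet
  simp only [Fintype.card_fin, add_zero, mul_one] at hdet
  rw [hdet]
  ring


/-- Polynomial version of the determinant of the Gram matrix: directions `v 0, v 1, v 2` are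
constant and the fourth direction is the position vector. -/
def rowPoly {N : ℕ} (v : Fin 4 → Fin N → ℂ) (c : Fin N → ℂ) (p : Fin 4) :
    MvPolynomial (Fin N) ℂ :=
  if p = 3 then linForm c else C (c ⬝ᵥ v p)

def detPoly {N d : ℕ} (a b : Fin d → Fin N → ℂ) (v : Fin 4 → Fin N → ℂ) :
    MvPolynomial (Fin N) ℂ :=
  (Matrix.fromBlocks
    (Matrix.diagonal fun i : Fin d ⊕ Fin d => linForm (Sum.elim a b i) ^ 2)
    (Matrix.of fun i p => rowPoly v (Sum.elim a b i) p)
    (Matrix.of fun p i => - (Sum.elim (fun _ => 1) (fun _ => -1) i * rowPoly v (Sum.elim a b i) p))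
    (0 : Matrix (Fin 4) (Fin 4) (MvPolynomial (Fin N) ℂ))).det

lemma eval_rowPoly {N : ℕ} (v : Fin 4 → Fin N → ℂ) (c : Fin N → ℂ) (p : Fin 4) (x : Fin N → ℂ) :
    eval x (rowPoly v c p) = c ⬝ᵥ (Function.update v 3 x p) := by
  unfold rowPoly
  by_cases h : p = 3
  · subst h; simp [eval_linForm]
  · simp [h]

lemma eval_detPoly {N d : ℕ} (a b : Fin d → Fin N → ℂ) (v : Fin 4 → Fin N → ℂ)
    (x : Fin N → ℂ) (ha : ∀ i, a i ⬝ᵥ x ≠ 0) (hb : ∀ i, b i ⬝ᵥ x ≠ 0) :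
    eval x (detPoly a b v) = ((∏ i, a i ⬝ᵥ x) * ∏ i, b i ⬝ᵥ x) ^ 2 *
      (gram a b x (Function.update v 3 x)).det := by
  unfold detPoly
  have hne : ∀ i : Fin d ⊕ Fin d, ((Sum.elim a b i) ⬝ᵥ x) ^ 2 ≠ 0 := by
    rintro (i | i)
    · exact pow_ne_zero _ (ha i)
    · exact pow_ne_zero _ (hb i)
  rw [RingHom.map_det]
  have hm : (eval x).mapMatrix (Matrix.fromBlocks
    (Matrix.diagonal fun i : Fin d ⊕ Fin d => linForm (Sum.elim a b i) ^ 2)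
    (Matrix.of fun i p => rowPoly v (Sum.elim a b i) p)
    (Matrix.of fun p i => - (Sum.elim (fun _ => 1) (fun _ => -1) i * rowPoly v (Sum.elim a b i) p))
    (0 : Matrix (Fin 4) (Fin 4) (MvPolynomial (Fin N) ℂ))) =
    Matrix.fromBlocks
    (Matrix.diagonal fun i : Fin d ⊕ Fin d => (Sum.elim a b i ⬝ᵥ x) ^ 2)
    (Matrix.of fun i p => Sum.elim a b i ⬝ᵥ (Function.update v 3 x p))
    (Matrix.of fun p i => - (Sum.elim (fun _ => (1 : ℂ)) (fun _ => -1) i *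
      (Sum.elim a b i ⬝ᵥ (Function.update v 3 x p))))
    (0 : Matrix (Fin 4) (Fin 4) ℂ) := by
    rw [RingHom.mapMatrix_apply, Matrix.fromBlocks_map]
    congr 1
    · rw [Matrix.diagonal_map (map_zero _)]
      congr 1
      ext i
      simp [eval_linForm]
    · ext i p
      simp [eval_rowPoly]
    · ext p i
      rcases i with i | i <;> simp [eval_rowPoly]
  rw [hm]
  have hinv : (Matrix.diagonal fun i : Fin d ⊕ Fin d => (Sum.elim a b i ⬝ᵥ x) ^ 2) *
      (Matrix.diagonal fun i : Fin d ⊕ Fin d => ((Sum.elim a b i ⬝ᵥ x) ^ 2)⁻¹) = 1 := by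
    rw [Matrix.diagonal_mul_diagonal, ← Matrix.diagonal_one]
    congr 1
    ext i
    exact mul_inv_cancel₀ (hne i)
  let _ : Invertible (Matrix.diagonal fun i : Fin d ⊕ Fin d => (Sum.elim a b i ⬝ᵥ x) ^ 2) :=
    invertibleOfRightInverse _ _ hinv
  rw [Matrix.det_fromBlocks₁₁, Matrix.det_diagonal]
  have hi : ⅟(Matrix.diagonal fun i : Fin d ⊕ Fin d => (Sum.elim a b i ⬝ᵥ x) ^ 2) =
      (Matrix.diagonal fun i : Fin d ⊕ Fin d => ((Sum.elim a b i ⬝ᵥ x) ^ 2)⁻¹) :=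
    invOf_eq_right_inv hinv
  rw [hi]
  congr 1
  · rw [Fintype.prod_sum_type]
    simp [Finset.prod_pow, mul_pow]
  · congr 1
    ext p q
    rw [zero_sub, Matrix.neg_apply, Matrix.mul_apply]
    simp only [Matrix.mul_diagonal, Matrix.of_apply, Fintype.sum_sum_type, Sum.elim_inl,
      Sum.elim_inr, gram, S2]
    rw [neg_add, ← Finset.sum_neg_distrib, ← Finset.sum_neg_distrib, sub_eq_add_neg,
      ← Finset.sum_neg_distrib]
    congr 1
    · refine Finset.sum_congr rfl fun i _ => ?_
      rw [div_eq_mul_inv]; ring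
    · refine Finset.sum_congr rfl fun i _ => ?_
      rw [div_eq_mul_inv]; ring

lemma det_gram_smul {N d : ℕ} (a b : Fin d → Fin N → ℂ) (v : Fin 4 → Fin N → ℂ)
    (x : Fin N → ℂ) (t : ℂ) (ht : t ≠ 0) :
    t ^ 6 * (gram a b (t • x) (Function.update v 3 (t • x))).det =
      (gram a b x (Function.update v 3 x)).det := by
  set w : Fin 4 → ℂ := Function.update (fun _ => t) 3 1 with hw
  have hk : Matrix.diagonal w * gram a b (t • x) (Function.update v 3 (t • x)) *
      Matrix.diagonal w = gram a b x (Function.update v 3 x) := by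
    ext p q
    rw [Matrix.mul_diagonal, Matrix.diagonal_mul]
    simp only [gram, Matrix.of_apply, S2]
    have hcp : ∀ (p : Fin 4) (c : Fin N → ℂ), w p * (c ⬝ᵥ Function.update v 3 (t • x) p) =
        t * (c ⬝ᵥ Function.update v 3 x p) := by
      intro p c
      by_cases h : p = 3
      · subst h; simp [hw, dotProduct_smul]
      · simp [hw, h]
    have hcc : ∀ c : Fin d → Fin N → ℂ,
        w p * (∑ i, (c i ⬝ᵥ Function.update v 3 (t • x) p) * (c i ⬝ᵥ Function.update v 3 (t • x) q)
          / (c i ⬝ᵥ (t • x)) ^ 2) * w q =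
        ∑ i, (c i ⬝ᵥ Function.update v 3 x p) * (c i ⬝ᵥ Function.update v 3 x q)
          / (c i ⬝ᵥ x) ^ 2 := by
      intro c
      rw [Finset.mul_sum, Finset.sum_mul]
      refine Finset.sum_congr rfl fun i _ => ?_
      have : w p * ((c i ⬝ᵥ Function.update v 3 (t • x) p) * (c i ⬝ᵥ Function.update v 3 (t • x) q)
          / (c i ⬝ᵥ (t • x)) ^ 2) * w q = 
          (w p * (c i ⬝ᵥ Function.update v 3 (t • x) p)) *
          (w q * (c i ⬝ᵥ Function.update v 3 (t • x) q)) / (c i ⬝ᵥ (t • x)) ^ 2 := by ring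
      rw [this, hcp, hcp, dotProduct_smul, smul_eq_mul, mul_pow]
      rw [show t * (c i ⬝ᵥ Function.update v 3 x p) * (t * (c i ⬝ᵥ Function.update v 3 x q)) =
        t ^ 2 * ((c i ⬝ᵥ Function.update v 3 x p) * (c i ⬝ᵥ Function.update v 3 x q)) by ring]
      rw [mul_div_mul_left _ _ (pow_ne_zero 2 ht)]
    rw [mul_sub, sub_mul, hcc, hcc]
  rw [← hk, Matrix.det_mul, Matrix.det_mul, Matrix.det_diagonal]
  have : ∏ i, w i = t ^ 3 := by
    rw [Fin.prod_univ_four]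
    simp [hw]
    ring
  rw [this]; ring

lemma relPrime_comb {N : ℕ} {F G : MvPolynomial (Fin N) ℂ} (h : IsRelPrime F G) (r s : ℂ)
    (hs : s ≠ 0) : IsRelPrime F (C r * F + C s * G) := by
  intro p hp hq
  refine h hp ?_
  have h1 : p ∣ C s * G := (dvd_add_right (hp.mul_left _)).1 hq
  have : G = C s⁻¹ * (C s * G) := by
    rw [← mul_assoc, ← C_mul, inv_mul_cancel₀ hs, C_1, one_mul]
  rw [this]
  exact h1.mul_left _

/-- Vanishing of the Gram determinant. -/
lemma det_gram_eq_zero {N d : ℕ} (a₁ a₂ a₃ a₄ : Fin d → Fin N → ℂ) (r s r' s' : ℂ)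
    (h3 : ∏ i, linForm (a₃ i) = C r * ∏ i, linForm (a₁ i) + C s * ∏ i, linForm (a₂ i))
    (h4 : ∏ i, linForm (a₄ i) = C r' * ∏ i, linForm (a₁ i) + C s' * ∏ i, linForm (a₂ i))
    (hr : r ≠ 0) (hs : s ≠ 0) (hr' : r' ≠ 0) (hs' : s' ≠ 0) (hΔ : r * s' - r' * s ≠ 0)
    (hne1 : ∀ i, a₁ i ≠ 0) (hne2 : ∀ i, a₂ i ≠ 0) (hne3 : ∀ i, a₃ i ≠ 0) (hne4 : ∀ i, a₄ i ≠ 0)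
    (hcop : IsRelPrime (∏ i, linForm (a₁ i)) (∏ i, linForm (a₂ i)))
    (x : Fin N → ℂ) (hx1 : ∀ i, a₁ i ⬝ᵥ x ≠ 0) (hx2 : ∀ i, a₂ i ⬝ᵥ x ≠ 0)
    (v : Fin 4 → Fin N → ℂ) :
    (gram a₁ a₂ x (Function.update v 3 x)).det = 0 := by
  have hlin : ∀ c : Fin N → ℂ, c ≠ 0 → linForm c ≠ 0 := by
    intro c hc h
    obtain ⟨y, -, hy⟩ := exists_generic ⊥ (fun _ : Unit => c)
    apply hy () (by simpa using hc)
    rw [← eval_linForm, h, map_zero]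
  have hprod : ∀ a : Fin d → Fin N → ℂ, (∀ i, a i ≠ 0) → ∏ i, linForm (a i) ≠ 0 := fun a h =>
    Finset.prod_ne_zero_iff.2 fun i _ => hlin _ (h i)
  have E : ∀ (y : Fin N → ℂ) (a : Fin d → Fin N → ℂ),
      eval y (∏ i, linForm (a i)) = ∏ i, a i ⬝ᵥ y := by
    intro y a; simp [map_prod, eval_linForm]
  -- polynomial identity
  have hP : C ((r * s' - r' * s) ^ 4) *
      (((∏ i, linForm (a₁ i)) * ∏ i, linForm (a₂ i)) ^ 2 * detPoly a₁ a₂ v) =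
      ((∏ i, linForm (a₃ i)) * ∏ i, linForm (a₄ i)) ^ 2 * detPoly a₃ a₄ v := by
    have h0 : ((∏ i, linForm (a₁ i)) * (∏ i, linForm (a₂ i)) * (∏ i, linForm (a₃ i)) *
        ∏ i, linForm (a₄ i)) ≠ 0 :=
      mul_ne_zero (mul_ne_zero (mul_ne_zero (hprod _ hne1) (hprod _ hne2)) (hprod _ hne3))
        (hprod _ hne4)
    apply mul_left_cancel₀ h0
    apply MvPolynomial.funext
    intro y
    rw [(eval y).map_mul (_ * _), (eval y).map_mul (_ * _) (_ ^ 2 * _)]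
    by_cases hy : eval y ((∏ i, linForm (a₁ i)) * (∏ i, linForm (a₂ i)) * (∏ i, linForm (a₃ i)) *
        ∏ i, linForm (a₄ i)) = 0
    · rw [hy, zero_mul, zero_mul]
    congr 1
    simp only [map_mul, E, mul_eq_zero, not_or] at hy
    obtain ⟨⟨⟨y1, y2⟩, y3⟩, y4⟩ := hy
    simp only [Finset.prod_ne_zero_iff, ← ne_eq, Finset.mem_univ, true_implies] at y1 y2 y3 y4
    simp only [map_mul, map_pow, E, eval_C, eval_detPoly _ _ _ _ y1 y2, eval_detPoly _ _ _ _ y3 y4]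
    have := det_gram_rel a₁ a₂ a₃ a₄ r s r' s' h3 h4 y y1 y2 y3 y4 (Function.update v 3 y) (by simp)
    linear_combination -this
  have hcop' : IsRelPrime (((∏ i, linForm (a₃ i)) * ∏ i, linForm (a₄ i)) ^ 2)
      (((∏ i, linForm (a₁ i)) * ∏ i, linForm (a₂ i)) ^ 2) := by
    have k13 : IsRelPrime (∏ i, linForm (a₁ i)) (∏ i, linForm (a₃ i)) := by
      rw [h3]; exact relPrime_comb hcop _ _ hs
    have k14 : IsRelPrime (∏ i, linForm (a₁ i)) (∏ i, linForm (a₄ i)) := by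
      rw [h4]; exact relPrime_comb hcop _ _ hs'
    have k23 : IsRelPrime (∏ i, linForm (a₂ i)) (∏ i, linForm (a₃ i)) := by
      rw [h3, add_comm]; exact relPrime_comb hcop.symm _ _ hr
    have k24 : IsRelPrime (∏ i, linForm (a₂ i)) (∏ i, linForm (a₄ i)) := by
      rw [h4, add_comm]; exact relPrime_comb hcop.symm _ _ hr'
    have := (IsRelPrime.mul_left (IsRelPrime.mul_right k13 k14) (IsRelPrime.mul_right k23 k24)).symm
    exact this.pow
  have hdvd : ((∏ i, linForm (a₃ i)) * ∏ i, linForm (a₄ i)) ^ 2 ∣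
      C ((r * s' - r' * s) ^ 4) * detPoly a₁ a₂ v := by
    apply hcop'.dvd_of_dvd_mul_left
    refine ⟨detPoly a₃ a₄ v, ?_⟩
    rw [← hP]; ring
  obtain ⟨Q, hQ⟩ := hdvd
  -- scaling
  set κ := (r * s' - r' * s) ^ 4 with hκ
  have hscale : ∀ t : ℂ, t ≠ 0 →
      t ^ 6 * (((∏ i, a₃ i ⬝ᵥ x) * ∏ i, a₄ i ⬝ᵥ x) ^ 2 * eval (t • x) Q) =
      κ * eval x (detPoly a₁ a₂ v) := by
    intro t ht
    have e1 : ∀ i, a₁ i ⬝ᵥ (t • x) ≠ 0 := fun i => by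
      rw [dotProduct_smul]; exact mul_ne_zero ht (hx1 i)
    have e2 : ∀ i, a₂ i ⬝ᵥ (t • x) ≠ 0 := fun i => by
      rw [dotProduct_smul]; exact mul_ne_zero ht (hx2 i)
    have := congrArg (eval (t • x)) hQ
    simp only [map_mul, map_pow, E, eval_C, eval_detPoly _ _ _ _ e1 e2] at this
    rw [eval_detPoly _ _ _ _ hx1 hx2, ← det_gram_smul a₁ a₂ v x t ht]
    simp only [dotProduct_smul, smul_eq_mul, Finset.prod_mul_distrib, Finset.prod_const,
      Finset.card_univ, Fintype.card_fin] at this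
    have htd : (t ^ d * t ^ d) ^ 2 ≠ 0 := by positivity
    apply mul_left_cancel₀ htd
    linear_combination - t ^ 6 * this
  have hcont : Continuous fun t : ℂ =>
      t ^ 6 * (((∏ i, a₃ i ⬝ᵥ x) * ∏ i, a₄ i ⬝ᵥ x) ^ 2 * eval (t • x) Q) := by
    have : Continuous fun t : ℂ => eval (t • x) Q :=
      (MvPolynomial.continuous_eval Q).comp (by fun_prop)
    fun_prop
  have hlim : κ * eval x (detPoly a₁ a₂ v) = 0 := by
    have l1 := (hcont.tendsto 0).mono_left (nhdsWithin_le_nhds (s := {0}ᶜ))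
    have l2 : Filter.Tendsto (fun t : ℂ =>
        t ^ 6 * (((∏ i, a₃ i ⬝ᵥ x) * ∏ i, a₄ i ⬝ᵥ x) ^ 2 * eval (t • x) Q))
        (nhdsWithin 0 {0}ᶜ) (nhds (κ * eval x (detPoly a₁ a₂ v))) := by
      refine tendsto_const_nhds.congr' ?_
      filter_upwards [self_mem_nhdsWithin] with t ht
      exact (hscale t ht).symm
    have := tendsto_nhds_unique l2 l1
    simpa using this
  rw [eval_detPoly _ _ _ _ hx1 hx2] at hlim
  have n1 : (∏ i, a₁ i ⬝ᵥ x) ≠ 0 := Finset.prod_ne_zero_iff.2 fun i _ => hx1 i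
  have n2 : (∏ i, a₂ i ⬝ᵥ x) ≠ 0 := Finset.prod_ne_zero_iff.2 fun i _ => hx2 i
  have hκ0 : κ ≠ 0 := pow_ne_zero _ hΔ
  simpa [n1, n2, hκ0] using hlim


lemma tendsto_ratio (c : Fin 4 → ℂ) (g : Fin 4) (hg : c g ≠ 0) (hc : ∀ p, g < p → c p = 0)
    (p : Fin 4) :
    Filter.Tendsto (fun t : ℂ => t ^ (3 - p.val) * c p / ∑ q : Fin 4, t ^ (3 - q.val) * c q)
      (nhdsWithin 0 {0}ᶜ) (nhds (if p = g then 1 else 0)) := by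
  set E : ℂ → ℂ := fun t => ∑ q : Fin 4, if q ≤ g then t ^ (g.val - q.val) * c q else 0 with hE
  have hEc : Continuous E := by
    refine continuous_finsetSum _ fun q _ => ?_
    split_ifs <;> fun_prop
  have hE0 : E 0 = c g := by
    simp only [hE]
    rw [Finset.sum_eq_single g]
    · simp
    · intro q _ hq
      split_ifs with h
      · have : g.val - q.val ≠ 0 := by
          have : q < g := lt_of_le_of_ne h hq
          have := Fin.lt_def.1 this
          omega
        simp [zero_pow this]
      · rfl
    · simp
  have hN : Continuous fun t : ℂ => if p ≤ g then t ^ (g.val - p.val) * c p else 0 := by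
    split_ifs <;> fun_prop
  have hlim : Filter.Tendsto (fun t => (if p ≤ g then t ^ (g.val - p.val) * c p else 0) / E t)
      (nhdsWithin 0 {0}ᶜ) (nhds (if p = g then 1 else 0)) := by
    have h1 := ((hN.tendsto 0).div (hEc.tendsto 0) (by rw [hE0]; exact hg)).mono_left
      (nhdsWithin_le_nhds (s := {0}ᶜ))
    suffices hv : (if p ≤ g then (0 : ℂ) ^ (g.val - p.val) * c p else 0) / E 0 =
        if p = g then 1 else 0 by
      rw [hv] at h1
      exact h1
    rw [hE0]
    by_cases hpg : p = g
    · subst hpg; simp [hg]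
    · rw [if_neg hpg]
      split_ifs with h
      · have : g.val - p.val ≠ 0 := by
          have : p < g := lt_of_le_of_ne h hpg
          have := Fin.lt_def.1 this
          omega
        simp [zero_pow this]
      · simp
  refine hlim.congr' ?_
  filter_upwards [self_mem_nhdsWithin] with t ht
  have ht' : t ≠ 0 := ht
  have hq : ∀ q : Fin 4, t ^ (3 - q.val) * c q =
      t ^ (3 - g.val) * (if q ≤ g then t ^ (g.val - q.val) * c q else 0) := by
    intro q
    split_ifs with h
    · rw [← mul_assoc, ← pow_add]
      congr 2
      have := Fin.le_def.1 h
      omega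
    · rw [hc q (not_le.1 h)]; simp
  have hD : ∑ q : Fin 4, t ^ (3 - q.val) * c q = t ^ (3 - g.val) * E t := by
    rw [hE, Finset.mul_sum]
    exact Finset.sum_congr rfl fun q _ => hq q
  rw [hD, hq p, mul_div_mul_left _ _ (pow_ne_zero _ ht')]

/-- If the Gram determinant vanishes identically, three independent factors of the first form
span a subspace containing a factor of the second one. -/
lemma star {N d : ℕ} (a b : Fin d → Fin N → ℂ) (ha : ∀ i, a i ≠ 0)
    (hdet : ∀ x : Fin N → ℂ, (∀ i, a i ⬝ᵥ x ≠ 0) → (∀ i, b i ⬝ᵥ x ≠ 0) →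
      ∀ v : Fin 4 → Fin N → ℂ, (gram a b x (Function.update v 3 x)).det = 0)
    (W : Fin 4 → Submodule ℂ (Fin N → ℂ)) (hW : Monotone W) (hW0 : W 0 = ⊥)
    (i : Fin 3 → Fin d) (hi : ∀ k : Fin 3, a (i k) ∉ W k.castSucc ∧ a (i k) ∈ W k.succ)
    (hb : ∀ j, b j ∉ W 3) : False := by
  choose e he1 he2 using fun p : Fin 4 => exists_generic (W p) (Sum.elim a b)
  have hea : ∀ p i, a i ∉ W p → a i ⬝ᵥ e p ≠ 0 := fun p i => he2 p (Sum.inl i)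
  have heb : ∀ p i, b i ∉ W p → b i ⬝ᵥ e p ≠ 0 := fun p i => he2 p (Sum.inr i)
  have hgr : ∀ i, ∃ g : Fin 4, a i ∉ W g ∧ ∀ p, g < p → a i ∈ W p := by
    intro i
    classical
    have hne : (Finset.univ.filter fun p => a i ∉ W p).Nonempty :=
      ⟨0, by simp [hW0, ha i]⟩
    refine ⟨Finset.max' _ hne, ?_, ?_⟩
    · have := Finset.max'_mem _ hne
      simpa using this
    · intro p hp
      by_contra h
      exact absurd (Finset.le_max' (Finset.univ.filter fun p => a i ∉ W p) p (by simpa using h))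
        (not_le.2 hp)
  choose g hg1 hg2 using hgr
  have hgi : ∀ k : Fin 3, g (i k) = k.castSucc := by
    intro k
    apply le_antisymm
    · by_contra h
      have h' : k.succ ≤ g (i k) := Fin.castSucc_lt_iff_succ_le.1 (not_le.1 h)
      exact hg1 (i k) (hW h' (hi k).2)
    · by_contra h
      exact (hi k).1 (hg2 (i k) _ (not_le.1 h))
  set xt : ℂ → Fin N → ℂ := fun t => ∑ q : Fin 4, t ^ (3 - q.val) • e q with hxt
  set vt : ℂ → Fin 4 → Fin N → ℂ := fun t p => t ^ (3 - p.val) • e p with hvt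
  have hdx : ∀ (c : Fin N → ℂ) t, c ⬝ᵥ xt t = ∑ q : Fin 4, t ^ (3 - q.val) * (c ⬝ᵥ e q) := by
    intro c t
    rw [hxt, dotProduct_sum]
    exact Finset.sum_congr rfl fun q _ => by rw [dotProduct_smul, smul_eq_mul]
  have hLa : ∀ i p, Filter.Tendsto (fun t => (a i ⬝ᵥ vt t p) / (a i ⬝ᵥ xt t))
      (nhdsWithin 0 {0}ᶜ) (nhds (if p = g i then 1 else 0)) := by
    intro i p
    have := tendsto_ratio (fun q => a i ⬝ᵥ e q) (g i) (hea _ _ (hg1 i))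
      (fun q hq => he1 q _ (hg2 i q hq)) p
    refine this.congr fun t => ?_
    rw [hdx, hvt, dotProduct_smul, smul_eq_mul]
  have hLb : ∀ i p, Filter.Tendsto (fun t => (b i ⬝ᵥ vt t p) / (b i ⬝ᵥ xt t))
      (nhdsWithin 0 {0}ᶜ) (nhds (if p = 3 then 1 else 0)) := by
    intro i p
    have := tendsto_ratio (fun q => b i ⬝ᵥ e q) 3 (heb _ _ (hb i))
      (fun q hq => absurd (Fin.le_last q) (not_le.2 hq)) p
    refine this.congr fun t => ?_
    rw [hdx, hvt, dotProduct_smul, smul_eq_mul]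
  have hna : ∀ i, ∀ᶠ t in nhdsWithin (0 : ℂ) {0}ᶜ, a i ⬝ᵥ xt t ≠ 0 := by
    intro i
    have h := hLa i (g i)
    rw [if_pos rfl] at h
    filter_upwards [h.eventually_ne one_ne_zero] with t ht h0
    rw [h0, div_zero] at ht
    exact ht rfl
  have hnb : ∀ i, ∀ᶠ t in nhdsWithin (0 : ℂ) {0}ᶜ, b i ⬝ᵥ xt t ≠ 0 := by
    intro i
    have h := hLb i 3
    rw [if_pos rfl] at h
    filter_upwards [h.eventually_ne one_ne_zero] with t ht h0
    rw [h0, div_zero] at ht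
    exact ht rfl
  -- limits with the last vector replaced by x
  have hLx : ∀ (c : Fin N → ℂ) (g : Fin 4) (p : Fin 4),
      (∀ᶠ t in nhdsWithin (0 : ℂ) {0}ᶜ, c ⬝ᵥ xt t ≠ 0) →
      (∀ p, Filter.Tendsto (fun t => (c ⬝ᵥ vt t p) / (c ⬝ᵥ xt t))
      (nhdsWithin 0 {0}ᶜ) (nhds (if p = g then 1 else 0))) →
      Filter.Tendsto (fun t => (c ⬝ᵥ Function.update (vt t) 3 (xt t) p) / (c ⬝ᵥ xt t))
      (nhdsWithin 0 {0}ᶜ) (nhds (if p = 3 then 1 else if p = g then 1 else 0)) := by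
    intro c g p hn hl
    by_cases hp : p = 3
    · subst hp
      simp only [Function.update_self, if_true]
      refine tendsto_const_nhds.congr' ?_
      filter_upwards [hn] with t ht
      rw [div_self ht]
    · simp only [Function.update_of_ne hp, if_neg hp]
      exact hl p
  set La : Fin d → Fin 4 → ℂ := fun i p => if p = 3 then 1 else if p = g i then 1 else 0 with hLadef
  set Lb : Fin 4 → ℂ := fun p => if p = 3 then 1 else if p = 3 then 1 else 0 with hLbdef
  set G : Matrix (Fin 4) (Fin 4) ℂ :=
    Matrix.of fun p q => ∑ i, La i p * La i q - ∑ _j : Fin d, Lb p * Lb q with hG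
  have hlimG : Filter.Tendsto (fun t => gram a b (xt t) (Function.update (vt t) 3 (xt t)))
      (nhdsWithin 0 {0}ᶜ) (nhds G) := by
    refine tendsto_pi_nhds.2 fun p => tendsto_pi_nhds.2 fun q => ?_
    simp only [gram, hG, Matrix.of_apply, S2]
    refine Filter.Tendsto.sub ?_ ?_
    · refine tendsto_finsetSum _ fun i _ => ?_
      refine ((hLx (a i) (g i) p (hna i) (hLa i)).mul
        (hLx (a i) (g i) q (hna i) (hLa i))).congr fun t => ?_
      rw [div_mul_div_comm, sq]
    · refine tendsto_finsetSum _ fun i _ => ?_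
      refine ((hLx (b i) 3 p (hnb i) (hLb i)).mul
        (hLx (b i) 3 q (hnb i) (hLb i))).congr fun t => ?_
      rw [div_mul_div_comm, sq]
  have hdetlim : Filter.Tendsto
      (fun t => (gram a b (xt t) (Function.update (vt t) 3 (xt t))).det)
      (nhdsWithin 0 {0}ᶜ) (nhds G.det) :=
    ((continuous_id.matrix_det).tendsto G).comp hlimG
  have hzero : G.det = 0 := by
    refine tendsto_nhds_unique hdetlim (tendsto_const_nhds.congr' ?_)
    filter_upwards [Filter.eventually_all.2 hna, Filter.eventually_all.2 hnb] with t h1 h2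
    exact (hdet (xt t) h1 h2 (vt t)).symm
  -- compute G
  set m : Fin 4 → ℕ := fun p => (Finset.univ.filter fun i => p = g i).card with hm
  have hsum : ∀ p : Fin 4, ∑ i, (if p = g i then (1 : ℂ) else 0) = m p := by
    intro p
    rw [Finset.sum_boole]
  have hGe : G = !![(m 0 : ℂ), 0, 0, m 0; 0, m 1, 0, m 1; 0, 0, m 2, m 2; m 0, m 1, m 2, 0] := by
    have hoff : ∀ p q : Fin 4, p ≠ q →
        ∑ i, (if p = g i then (1 : ℂ) else 0) * (if q = g i then (1 : ℂ) else 0) = 0 := by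
      intro p q hpq
      refine Finset.sum_eq_zero fun i _ => ?_
      by_cases h : p = g i
      · rw [if_neg (fun h' : q = g i => hpq (h.trans h'.symm)), mul_zero]
      · rw [if_neg h, zero_mul]
    have hon : ∀ p : Fin 4,
        ∑ i, (if p = g i then (1 : ℂ) else 0) * (if p = g i then (1 : ℂ) else 0) = m p := by
      intro p
      rw [← hsum]
      refine Finset.sum_congr rfl fun i _ => ?_
      split_ifs <;> simp
    have k03 : (0 : Fin 4) ≠ 3 := by decide
    have k13 : (1 : Fin 4) ≠ 3 := by decide
    have k23 : (2 : Fin 4) ≠ 3 := by decide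
    ext p q
    fin_cases p <;> fin_cases q <;>
      simp only [hG, hLadef, hLbdef, Matrix.of_apply, Fin.zero_eta, Fin.mk_one, Fin.reduceFinMk,
        if_neg k03, if_neg k13, if_neg k23, if_true, mul_zero, mul_one, one_mul,
        Finset.sum_const_zero, sub_zero, hsum, hon, sub_self] <;>
      first
        | rfl
        | (rw [hoff _ _ (by decide)]; rfl)
  have hm0 : ∀ k : Fin 3, 0 < m k.castSucc := by
    intro k
    refine Finset.card_pos.2 ⟨i k, ?_⟩
    simp [hgi k]
  have hdetG : G.det = -((m 0 * m 1 * m 2 * (m 0 + m 1 + m 2) : ℕ) : ℂ) := by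
    rw [hGe]
    simp [Matrix.det_succ_row_zero, Fin.sum_univ_succ, Fin.succAbove]
    ring
  rw [hdetG, neg_eq_zero, Nat.cast_eq_zero] at hzero
  have p0 := hm0 0
  have p1 := hm0 1
  have p2 := hm0 2
  simp only [Fin.castSucc_zero, Fin.castSucc_one, show (2 : Fin 3).castSucc = (2 : Fin 4) from rfl]
    at p0 p1 p2
  have : 0 < m 0 * m 1 * m 2 * (m 0 + m 1 + m 2) := by positivity
  omega


open Classical in
lemma prod_line {N d : ℕ} (f : Fin d → Fin N → ℂ) (W : Submodule ℂ (Fin N → ℂ))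
    (y u : Fin N → ℂ) (hy : ∀ w ∈ W, w ⬝ᵥ y = 0) (hy' : ∀ i, f i ∉ W → f i ⬝ᵥ y ≠ 0)
    (hu : ∀ i, f i ⬝ᵥ u ≠ 0) :
    ∃ g : Polynomial ℂ, g.eval 0 ≠ 0 ∧ ∀ t : ℂ, ∏ i, f i ⬝ᵥ (y + t • u) =
      (Polynomial.X ^ (Finset.univ.filter fun i => f i ∈ W).card * g).eval t := by
  refine ⟨∏ i, if f i ∈ W then Polynomial.C (f i ⬝ᵥ u) else
    Polynomial.C (f i ⬝ᵥ y) + Polynomial.X * Polynomial.C (f i ⬝ᵥ u), ?_, ?_⟩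
  · rw [Polynomial.eval_prod, Finset.prod_ne_zero_iff]
    intro i _
    split_ifs with h
    · simpa using hu i
    · simpa using hy' i h
  · intro t
    rw [Finset.card_filter, ← Finset.prod_pow_eq_pow_sum, ← Finset.prod_mul_distrib,
      Polynomial.eval_prod]
    refine Finset.prod_congr rfl fun i _ => ?_
    rw [dotProduct_add, dotProduct_smul, smul_eq_mul]
    split_ifs with h
    · simp [hy _ h]
      ring
    · simp
      ring

open Classical in
lemma mult_eq {N d : ℕ} (a b c : Fin d → Fin N → ℂ) (r s : ℂ)
    (h3 : ∏ i, linForm (c i) = C r * ∏ i, linForm (a i) + C s * ∏ i, linForm (b i))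
    (hs : s ≠ 0) (W : Submodule ℂ (Fin N → ℂ)) (i0 : Fin d) (hi0 : a i0 ∈ W)
    (hb : ∀ j, b j ∉ Submodule.span ℂ {a i0}) (hc : ∀ j, c j ∉ Submodule.span ℂ {a i0}) :
    (Finset.univ.filter fun i => b i ∈ W).card = (Finset.univ.filter fun i => c i ∈ W).card := by
  obtain ⟨y, hy1, hy2⟩ := exists_generic W (Sum.elim b c)
  obtain ⟨u, hu1, hu2⟩ := exists_generic (Submodule.span ℂ {a i0}) (Sum.elim b c)
  obtain ⟨g, hg, hgt⟩ := prod_line b W y u hy1 (fun i => hy2 (Sum.inl i))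
    (fun i => hu2 (Sum.inl i) (hb i))
  obtain ⟨k, hk, hkt⟩ := prod_line c W y u hy1 (fun i => hy2 (Sum.inr i))
    (fun i => hu2 (Sum.inr i) (hc i))
  have hpoly : Polynomial.X ^ (Finset.univ.filter fun i => c i ∈ W).card * k =
      Polynomial.X ^ (Finset.univ.filter fun i => b i ∈ W).card * (Polynomial.C s * g) := by
    apply Polynomial.funext
    intro t
    rw [← hkt]
    have h := congrArg (eval (y + t • u)) h3
    simp only [map_add, map_mul, map_prod, eval_linForm, eval_C] at h
    have h0 : ∏ i, a i ⬝ᵥ (y + t • u) = 0 := by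
      apply Finset.prod_eq_zero (Finset.mem_univ i0)
      rw [dotProduct_add, dotProduct_smul, hy1 _ hi0, hu1 _ (Submodule.mem_span_singleton_self _)]
      simp
    rw [h, h0, hgt]
    simp only [Polynomial.eval_mul, Polynomial.eval_C]
    ring
  have hsg : (Polynomial.C s * g).eval 0 ≠ 0 := by
    rw [Polynomial.eval_mul, Polynomial.eval_C]
    exact mul_ne_zero hs hg
  have aux : ∀ (m m' : ℕ) (p q : Polynomial ℂ), p.eval 0 ≠ 0 →
      Polynomial.X ^ m * p = Polynomial.X ^ m' * q → m' ≤ m := by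
    intro m m' p q hp hpq
    by_contra hlt
    push Not at hlt
    obtain ⟨e, rfl⟩ := Nat.exists_eq_add_of_lt hlt
    rw [add_assoc, pow_add, mul_assoc] at hpq
    have := mul_left_cancel₀ (pow_ne_zero m Polynomial.X_ne_zero) hpq
    apply hp
    rw [this]
    simp
  exact le_antisymm (aux _ _ _ _ hk hpoly) (aux _ _ _ _ hsg hpoly.symm)

lemma sup_span_exchange {V : Type*} [AddCommGroup V] [Module ℂ V] {W : Submodule ℂ V} {x y : V}
    (hx : x ∉ W) (hxy : x ∈ W ⊔ Submodule.span ℂ {y}) :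
    W ⊔ Submodule.span ℂ {x} = W ⊔ Submodule.span ℂ {y} := by
  obtain ⟨w, hw, z, hz, rfl⟩ := Submodule.mem_sup.1 hxy
  obtain ⟨l, rfl⟩ := Submodule.mem_span_singleton.1 hz
  have hl : l ≠ 0 := by
    rintro rfl
    apply hx
    simpa using hw
  apply le_antisymm
  · refine sup_le le_sup_left ?_
    rw [Submodule.span_singleton_le_iff_mem]
    exact hxy
  · refine sup_le le_sup_left ?_
    rw [Submodule.span_singleton_le_iff_mem]
    have this : l⁻¹ • (w + l • y) - l⁻¹ • w = y := by
      rw [smul_add, smul_smul, inv_mul_cancel₀ hl, one_smul]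
      abel
    have hmem : l⁻¹ • (w + l • y) - l⁻¹ • w ∈ W ⊔ Submodule.span ℂ {w + l • y} :=
      Submodule.sub_mem _ (Submodule.smul_mem _ _
        (Submodule.mem_sup_right (Submodule.mem_span_singleton_self _)))
        (Submodule.smul_mem _ _ (Submodule.mem_sup_left hw))
    rw [this] at hmem
    exact hmem

open Classical in
lemma count {N d : ℕ} (hd : 1 ≤ d) (a b : Fin d → Fin N → ℂ) (W : Submodule ℂ (Fin N → ℂ))
    (ha : ∃ i, a i ∈ W) (hb : ∀ j, b j ∉ W)
    (hext : ∀ i, a i ∉ W → ∃ j, b j ∈ W ⊔ Submodule.span ℂ {a i})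
    (hmult : ∀ W' : Submodule ℂ (Fin N → ℂ), (∃ i, a i ∈ W') → (∃ j, b j ∈ W') →
      (Finset.univ.filter fun i => a i ∈ W').card = (Finset.univ.filter fun i => b i ∈ W').card) :
    ∃ c, (∀ i, a i ∈ W ⊔ Submodule.span ℂ {c}) ∧ ∀ j, b j ∈ W ⊔ Submodule.span ℂ {c} := by
  have self : ∀ x : Fin N → ℂ, x ∈ W ⊔ Submodule.span ℂ {x} := fun x =>
    Submodule.mem_sup_right (Submodule.mem_span_singleton_self _)
  set f : Fin d → Submodule ℂ (Fin N → ℂ) := fun j => W ⊔ Submodule.span ℂ {b j} with hf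
  set h : Fin d → Submodule ℂ (Fin N → ℂ) := fun i => W ⊔ Submodule.span ℂ {a i} with hh
  set S := Finset.univ.image f with hS
  have hhS : ∀ i, a i ∉ W → h i ∈ S := by
    intro i hi
    obtain ⟨j, hj⟩ := hext i hi
    exact Finset.mem_image.2 ⟨j, Finset.mem_univ _, sup_span_exchange (hb j) hj⟩
  set m := (Finset.univ.filter fun i => a i ∈ W).card with hm
  have hmpos : 0 < m := by
    obtain ⟨i, hi⟩ := ha
    exact Finset.card_pos.2 ⟨i, by simpa using hi⟩
  have c1 : d = ∑ U ∈ S, (Finset.univ.filter fun j => f j = U).card := by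
    have := Finset.card_eq_sum_card_fiberwise (s := (Finset.univ : Finset (Fin d))) (t := S) (f := f)
      (fun j _ => Finset.mem_coe.2 (Finset.mem_image_of_mem f (Finset.mem_univ j)))
    simpa using this
  have c2 : (Finset.univ.filter fun i => a i ∉ W).card =
      ∑ U ∈ S, (Finset.univ.filter fun i => a i ∉ W ∧ h i = U).card := by
    have := Finset.card_eq_sum_card_fiberwise (s := Finset.univ.filter fun i => a i ∉ W)
      (t := S) (f := h) (fun i hi => Finset.mem_coe.2 (hhS i (by simpa using hi)))
    simpa [Finset.filter_filter] using this
  have c3 : m + (Finset.univ.filter fun i => a i ∉ W).card = d := by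
    have := Finset.card_filter_add_card_filter_not (s := (Finset.univ : Finset (Fin d)))
      (fun i => a i ∈ W)
    simpa using this
  have c4 : ∀ U ∈ S, (Finset.univ.filter fun j => f j = U).card =
      m + (Finset.univ.filter fun i => a i ∉ W ∧ h i = U).card := by
    intro U hU
    obtain ⟨k, -, rfl⟩ := Finset.mem_image.1 hU
    have e1 : (Finset.univ.filter fun j => f j = f k) = Finset.univ.filter fun j => b j ∈ f k := by
      ext j
      simp only [Finset.mem_filter, Finset.mem_univ, true_and]
      constructor
      · intro e
        rw [← e]
        exact self _
      · intro e
        exact sup_span_exchange (hb j) e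
    obtain ⟨i, hi⟩ := ha
    rw [e1, ← hmult (f k) ⟨i, Submodule.mem_sup_left hi⟩ ⟨k, self _⟩, hm, ← Finset.card_union_of_disjoint]
    · congr 1
      ext j
      simp only [Finset.mem_filter, Finset.mem_univ, true_and, Finset.mem_union]
      constructor
      · intro e
        by_cases hj : a j ∈ W
        · exact Or.inl hj
        · exact Or.inr ⟨hj, sup_span_exchange hj e⟩
      · rintro (e | ⟨-, e⟩)
        · exact Submodule.mem_sup_left e
        · rw [← e]
          exact self _
    · rw [Finset.disjoint_left]
      intro j hj hj'
      simp only [Finset.mem_filter, Finset.mem_univ, true_and] at hj hj'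
      exact hj'.1 hj
  have c5 : d = S.card * m + ∑ U ∈ S, (Finset.univ.filter fun i => a i ∉ W ∧ h i = U).card := by
    conv_lhs => rw [c1]
    rw [Finset.sum_congr rfl c4, Finset.sum_add_distrib, Finset.sum_const, smul_eq_mul]
  have c6 : S.card = 1 := by
    have : S.card * m = 1 * m := by omega
    exact Nat.eq_of_mul_eq_mul_right hmpos this
  obtain ⟨U, hU⟩ := Finset.card_eq_one.1 c6
  have hfU : ∀ j, f j = U := fun j => by
    have := Finset.mem_image_of_mem f (Finset.mem_univ j)
    rw [← hS, hU] at this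
    simpa using this
  refine ⟨b ⟨0, hd⟩, ?_, ?_⟩
  · intro i
    change a i ∈ f ⟨0, hd⟩
    by_cases hi : a i ∈ W
    · exact Submodule.mem_sup_left hi
    · have := hhS i hi
      rw [hU, Finset.mem_singleton] at this
      rw [hfU, ← this]
      exact self _
  · intro j
    change b j ∈ f ⟨0, hd⟩
    rw [hfU, ← hfU j]
    exact self _

lemma notMem_span_of_relPrime {N d : ℕ} (a b : Fin d → Fin N → ℂ)
    (h : IsRelPrime (∏ i, linForm (a i)) (∏ i, linForm (b i))) (i j : Fin d) :
    b j ∉ Submodule.span ℂ {a i} := by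
  intro hm
  obtain ⟨l, hl⟩ := Submodule.mem_span_singleton.1 hm
  apply linForm_not_isUnit (a i)
  refine h (Finset.dvd_prod_of_mem _ (Finset.mem_univ i)) ?_
  refine Dvd.dvd.trans ?_ (Finset.dvd_prod_of_mem _ (Finset.mem_univ j))
  rw [← hl, map_smul, smul_eq_C_mul]
  exact dvd_mul_left _ _


lemma finrank_sup_span_le {N m : ℕ} (W : Submodule ℂ (Fin N → ℂ)) (c : Fin N → ℂ)
    (h : Module.finrank ℂ W ≤ m) :
    Module.finrank ℂ (W ⊔ Submodule.span ℂ {c} : Submodule ℂ (Fin N → ℂ)) ≤ m + 1 := by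
  have h1 := Submodule.finrank_add_le_finrank_add_finrank W (Submodule.span ℂ {c})
  have h2 : Module.finrank ℂ (Submodule.span ℂ {c}) ≤ 1 := by
    have := finrank_span_le_card (R := ℂ) ({c} : Set (Fin N → ℂ))
    simpa using this
  omega

lemma core {N d : ℕ} (hd : 1 ≤ d) (a₁ a₂ a₃ a₄ : Fin d → Fin N → ℂ) (r s r' s' : ℂ)
    (h3 : ∏ i, linForm (a₃ i) = C r * ∏ i, linForm (a₁ i) + C s * ∏ i, linForm (a₂ i))
    (h4 : ∏ i, linForm (a₄ i) = C r' * ∏ i, linForm (a₁ i) + C s' * ∏ i, linForm (a₂ i))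
    (hr : r ≠ 0) (hs : s ≠ 0) (hr' : r' ≠ 0) (hs' : s' ≠ 0) (hΔ : r * s' - r' * s ≠ 0)
    (hne1 : ∀ i, a₁ i ≠ 0) (hne2 : ∀ i, a₂ i ≠ 0) (hne3 : ∀ i, a₃ i ≠ 0) (hne4 : ∀ i, a₄ i ≠ 0)
    (hcop : IsRelPrime (∏ i, linForm (a₁ i)) (∏ i, linForm (a₂ i))) :
    ∃ U : Submodule ℂ (Fin N → ℂ), Module.finrank ℂ U ≤ 3 ∧ (∀ i, a₁ i ∈ U) ∧ ∀ i, a₂ i ∈ U := by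
  classical
  have hdet := det_gram_eq_zero a₁ a₂ a₃ a₄ r s r' s' h3 h4 hr hs hr' hs' hΔ hne1 hne2 hne3 hne4 hcop
  have h3' : ∏ i, linForm (a₃ i) = C s * ∏ i, linForm (a₂ i) + C r * ∏ i, linForm (a₁ i) := by
    rw [h3, add_comm]
  have n12 := notMem_span_of_relPrime a₁ a₂ hcop
  have n21 := notMem_span_of_relPrime a₂ a₁ hcop.symm
  have n13 := notMem_span_of_relPrime a₁ a₃ (by rw [h3]; exact relPrime_comb hcop r s hs)
  have n23 := notMem_span_of_relPrime a₂ a₃ (by rw [h3']; exact relPrime_comb hcop.symm s r hr)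
  have hmult : ∀ W' : Submodule ℂ (Fin N → ℂ), (∃ i, a₁ i ∈ W') → (∃ j, a₂ j ∈ W') →
      (Finset.univ.filter fun i => a₁ i ∈ W').card =
        (Finset.univ.filter fun i => a₂ i ∈ W').card := by
    rintro W' ⟨i, hi⟩ ⟨j, hj⟩
    rw [mult_eq a₁ a₂ a₃ r s h3 hs W' i hi (n12 i) (n13 i),
      mult_eq a₂ a₁ a₃ s r h3' hr W' j hj (n21 j) (n23 j)]
  have bot : Module.finrank ℂ (⊥ : Submodule ℂ (Fin N → ℂ)) ≤ 0 := by simp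
  by_cases hA : ∃ i0 i1, a₁ i1 ∉ Submodule.span ℂ {a₁ i0} ∧
      ∀ j, a₂ j ∉ Submodule.span ℂ {a₁ i0} ⊔ Submodule.span ℂ {a₁ i1}
  · obtain ⟨i0, i1, h01, hb⟩ := hA
    obtain ⟨c, hc1, hc2⟩ := count hd a₁ a₂ (Submodule.span ℂ {a₁ i0} ⊔ Submodule.span ℂ {a₁ i1})
      ⟨i0, Submodule.mem_sup_left (Submodule.mem_span_singleton_self _)⟩ hb
      (by
        intro i hi
        by_contra hcon
        push Not at hcon
        refine star a₁ a₂ hne1 hdet ![⊥, Submodule.span ℂ {a₁ i0},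
          Submodule.span ℂ {a₁ i0} ⊔ Submodule.span ℂ {a₁ i1},
          Submodule.span ℂ {a₁ i0} ⊔ Submodule.span ℂ {a₁ i1} ⊔ Submodule.span ℂ {a₁ i}]
          ?_ rfl ![i0, i1, i] ?_ hcon
        · rw [Fin.monotone_iff_le_succ]
          intro k
          fin_cases k
          · exact bot_le
          · exact le_sup_left
          · exact le_sup_left
        · intro k
          fin_cases k
          · exact ⟨by simpa using hne1 i0, Submodule.mem_span_singleton_self _⟩
          · exact ⟨h01, Submodule.mem_sup_right (Submodule.mem_span_singleton_self _)⟩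
          · exact ⟨hi, Submodule.mem_sup_right (Submodule.mem_span_singleton_self _)⟩) hmult
    refine ⟨_, finrank_sup_span_le _ c (finrank_sup_span_le _ _ (m := 1) ?_), hc1, hc2⟩
    have := finrank_sup_span_le _ (a₁ i0) bot
    rwa [bot_sup_eq] at this
  · push Not at hA
    obtain ⟨c, hc1, hc2⟩ := count hd a₁ a₂ (Submodule.span ℂ {a₁ ⟨0, hd⟩})
      ⟨_, Submodule.mem_span_singleton_self _⟩ (n12 _) (fun i hi => hA _ i hi) hmult
    refine ⟨_, (finrank_sup_span_le _ c (m := 1) ?_).trans (by norm_num), hc1, hc2⟩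
    have := finrank_sup_span_le _ (a₁ ⟨0, hd⟩) bot
    rwa [bot_sup_eq] at this

lemma exists_factors {N d : ℕ} (P : MvPolynomial (Fin N) ℂ) (hP : P.IsHomogeneous d)
    (s : Multiset (MvPolynomial (Fin N) ℂ)) (hs : ∀ α ∈ s, α ≠ 0 ∧ α.IsHomogeneous 1)
    (hPs : P = s.prod) :
    ∃ a : Fin d → Fin N → ℂ, (∀ i, a i ≠ 0) ∧ P = ∏ i, linForm (a i) := by
  obtain ⟨l, rfl⟩ := Quot.exists_rep s
  have hPs : P = l.prod := hPs.trans (Multiset.prod_coe l)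
  have hs' : ∀ i : Fin l.length, l.get i ≠ 0 ∧ (l.get i).IsHomogeneous 1 := fun i =>
    hs _ (Multiset.mem_coe.2 (List.get_mem l i))
  have hprod : P = ∏ i : Fin l.length, l.get i := by
    rw [hPs]; exact (Fin.prod_univ_getElem l).symm
  have hlen : (∏ i : Fin l.length, l.get i).IsHomogeneous (∑ _i : Fin l.length, 1) :=
    IsHomogeneous.prod _ _ _ fun i _ => (hs' i).2
  have hP0 : P ≠ 0 := by
    rw [hprod, Finset.prod_ne_zero_iff]
    exact fun i _ => (hs' i).1
  rw [← hprod] at hlen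
  have hd : d = l.length := by
    have := hP.inj_right hlen hP0
    simpa using this
  subst hd
  choose a ha using fun i => exists_linForm _ (hs' i).2
  refine ⟨a, ?_, ?_⟩
  · intro i hi
    apply (hs' i).1
    rw [ha, hi, map_zero]
  · rw [hprod]
    exact Finset.prod_congr rfl fun i _ => ha i

lemma mem_of_dvd {N d : ℕ} (a : Fin d → Fin N → ℂ) (ha : ∀ i, a i ≠ 0) (c : Fin N → ℂ)
    (h : linForm c ∣ ∏ i, linForm (a i)) (U : Submodule ℂ (Fin N → ℂ)) (hU : ∀ i, a i ∈ U) :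
    c ∈ U := by
  obtain ⟨x, hx1, hx2⟩ := exists_generic (Submodule.span ℂ {c}) a
  obtain ⟨q, hq⟩ := h
  have h0 := congrArg (eval x) hq
  rw [map_mul, eval_linForm, hx1 _ (Submodule.mem_span_singleton_self _), zero_mul, map_prod,
    Finset.prod_eq_zero_iff] at h0
  obtain ⟨i, -, hi⟩ := h0
  rw [eval_linForm] at hi
  have hm : a i ∈ Submodule.span ℂ {c} := by
    by_contra hcon
    exact hx2 i hcon hi
  obtain ⟨l, hl⟩ := Submodule.mem_span_singleton.1 hm
  have hl0 : l ≠ 0 := by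
    rintro rfl
    apply ha i
    rw [← hl, zero_smul]
  have : c = l⁻¹ • a i := by rw [← hl, smul_smul, inv_mul_cancel₀ hl0, one_smul]
  rw [this]
  exact U.smul_mem _ (hU i)

lemma choose_two (c : Fin 4 → ℂ × ℂ)
    (hprop : ∀ i j, i ≠ j → (c i).1 * (c j).2 ≠ (c i).2 * (c j).1) :
    ∃ i j, i ≠ j ∧ (c i).1 ≠ 0 ∧ (c i).2 ≠ 0 ∧ (c j).1 ≠ 0 ∧ (c j).2 ≠ 0 := by
  classical
  set S := Finset.univ.filter fun i => (c i).1 = 0 with hS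
  set T := Finset.univ.filter fun i => (c i).2 = 0 with hT
  have hS1 : S.card ≤ 1 := by
    rw [Finset.card_le_one]
    intro i hi j hj
    by_contra hij
    simp only [hS, Finset.mem_filter, Finset.mem_univ, true_and] at hi hj
    exact hprop i j hij (by rw [hi, hj]; ring)
  have hT1 : T.card ≤ 1 := by
    rw [Finset.card_le_one]
    intro i hi j hj
    by_contra hij
    simp only [hT, Finset.mem_filter, Finset.mem_univ, true_and] at hi hj
    exact hprop i j hij (by rw [hi, hj]; ring)
  have h1 : 1 < ((S ∪ T)ᶜ).card := by
    rw [Finset.card_compl, Fintype.card_fin]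
    have := Finset.card_union_le S T
    omega
  obtain ⟨i, hi, j, hj, hij⟩ := Finset.one_lt_card.1 h1
  simp only [hS, hT, Finset.mem_compl, Finset.mem_union, Finset.mem_filter, Finset.mem_univ,
    true_and, not_or] at hi hj
  exact ⟨i, j, hij, hi.1, hi.2, hj.1, hj.2⟩

end PencilCR

/-- If a pencil on ℙⁿ with irreducible generic fiber has more than 3 pairwise distinct
completely reducible members, then the linear factors of F and G span a subspace of
dimension at most 3 (the pencil is a linear pull-back of a pencil on ℙ²). -/
theorem pencil_more_than_three_completely_reducible_fibers
    (n d : ℕ) (hn : 1 ≤ n) (hd : 1 ≤ d)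
    (F G : MvPolynomial (Fin (n + 1)) ℂ)
    (hF : F.IsHomogeneous d) (hG : G.IsHomogeneous d)
    (hFcr : CompletelyReducible n F) (hGcr : CompletelyReducible n G)
    (hcop : RelPrime n F G)
    (hgen : GenericFiberIrreducible n F G)
    (c : Fin 4 → ℂ × ℂ)
    (hprop : ∀ i j, i ≠ j → (c i).1 * (c j).2 ≠ (c i).2 * (c j).1)
    (hcr : ∀ i, CompletelyReducible n (C (c i).1 * F + C (c i).2 * G)) :
    Module.rank ℂ
      ↥(Submodule.span ℂ
        {α : MvPolynomial (Fin (n + 1)) ℂ | IsLinearForm n α ∧ (α ∣ F ∨ α ∣ G)}) ≤ 3 := by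
  classical
  obtain ⟨i, j, hij, hr, hs, hr', hs'⟩ := PencilCR.choose_two c hprop
  have hom : ∀ k, (C (c k).1 * F + C (c k).2 * G).IsHomogeneous d := fun k =>
    (hF.C_mul _).add (hG.C_mul _)
  obtain ⟨s₁, hs₁, e₁⟩ := hFcr
  obtain ⟨s₂, hs₂, e₂⟩ := hGcr
  obtain ⟨s₃, hs₃, e₃⟩ := hcr i
  obtain ⟨s₄, hs₄, e₄⟩ := hcr j
  obtain ⟨a₁, ha₁, f₁⟩ := PencilCR.exists_factors F hF s₁ hs₁ e₁
  obtain ⟨a₂, ha₂, f₂⟩ := PencilCR.exists_factors G hG s₂ hs₂ e₂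
  obtain ⟨a₃, ha₃, f₃⟩ := PencilCR.exists_factors _ (hom i) s₃ hs₃ e₃
  obtain ⟨a₄, ha₄, f₄⟩ := PencilCR.exists_factors _ (hom j) s₄ hs₄ e₄
  have hrel : IsRelPrime F G := fun p hp hq => hcop p hp hq
  obtain ⟨U, hU, hU1, hU2⟩ := PencilCR.core hd a₁ a₂ a₃ a₄ (c i).1 (c i).2 (c j).1 (c j).2
    (by rw [← f₁, ← f₂, ← f₃]) (by rw [← f₁, ← f₂, ← f₄]) hr hs hr' hs'
    (by
      intro h
      apply hprop i j hij
      linear_combination h) ha₁ ha₂ ha₃ ha₄ (by rw [← f₁, ← f₂]; exact hrel)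
  have hle : Submodule.span ℂ
      {α : MvPolynomial (Fin (n + 1)) ℂ | IsLinearForm n α ∧ (α ∣ F ∨ α ∣ G)} ≤
      U.map PencilCR.linForm := by
    rw [Submodule.span_le]
    rintro α ⟨hα, hdvd⟩
    obtain ⟨b, rfl⟩ := PencilCR.exists_linForm α hα.2
    refine Submodule.mem_map_of_mem ?_
    rcases hdvd with hdvd | hdvd
    · rw [f₁] at hdvd
      exact PencilCR.mem_of_dvd a₁ ha₁ b hdvd U hU1
    · rw [f₂] at hdvd
      exact PencilCR.mem_of_dvd a₂ ha₂ b hdvd U hU2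
  refine (Submodule.rank_mono hle).trans ((rank_map_le _ _).trans ?_)
  rw [← Module.finrank_eq_rank]
  exact_mod_cast hU
end
end

section
/- Let n ≥ 1 and let F, G be coprime completely reducible homogeneous polynomials of the same degree d ≥ 1 in R = MvPolynomial (Fin (n+1)) ℂ such that the generic fiber of the pencil 𝒫 generated by F and G is irreducible. If there exist more than 2 pairwise distinct completely reducible members of 𝒫, then the set of all linear factors of F together with all linear factors of G spans a subspace of dimension at most 5 of the (n+1)-dimensional space of homogeneous degree-1 polynomials (equivalently, 𝒫 is a linear pull-back of a pencil on ℙ⁴). -/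
open MvPolynomial

noncomputable section

lemma exists_derivation_fraction {R K : Type*} [CommRing R] [IsDomain R] [Field K] [Algebra R K]
    [IsFractionRing R K] (d : Derivation ℤ R R) :
    ∃ D : Derivation ℤ K K, ∀ p : R, D (algebraMap R K p) = algebraMap R K (d p) := by
  let f : R →+* TrivSqZeroExt K K :=
    { toFun := fun p => TrivSqZeroExt.inl (algebraMap R K p) +
        TrivSqZeroExt.inr (algebraMap R K (d p))
      map_one' := by ext <;> simp
      map_zero' := by ext <;> simp
      map_add' := by
        intro x y
        ext <;> simp only [TrivSqZeroExt.fst_add, TrivSqZeroExt.snd_add, TrivSqZeroExt.fst_inl,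
          TrivSqZeroExt.snd_inl, TrivSqZeroExt.fst_inr, TrivSqZeroExt.snd_inr, map_add] <;> ring
      map_mul' := by
        intro x y
        ext <;> simp only [TrivSqZeroExt.fst_add, TrivSqZeroExt.snd_add, TrivSqZeroExt.fst_inl,
          TrivSqZeroExt.snd_inl, TrivSqZeroExt.fst_inr, TrivSqZeroExt.snd_inr, map_add,
          TrivSqZeroExt.fst_mul, TrivSqZeroExt.snd_mul, map_mul, Derivation.leibniz, smul_eq_mul,
          op_smul_eq_smul] <;> ring }
  have hf1 : ∀ p, (f p).fst = algebraMap R K p := fun p => add_zero _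
  have hf2 : ∀ p, (f p).snd = algebraMap R K (d p) := fun p => zero_add _
  have hu : ∀ y : nonZeroDivisors R, IsUnit (f y) := by
    intro y
    rw [TrivSqZeroExt.isUnit_iff_isUnit_fst, hf1]
    exact IsLocalization.map_units K y
  let g : K →+* TrivSqZeroExt K K := IsLocalization.lift hu
  have hg : ∀ p, g (algebraMap R K p) = f p := fun p => IsLocalization.lift_eq hu p
  have hfst : ∀ k, (g k).fst = k := by
    have : ((TrivSqZeroExt.fstHom K K K : TrivSqZeroExt K K →+* K).comp g) = RingHom.id K := by
      apply IsLocalization.ringHom_ext (nonZeroDivisors R)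
      ext p
      simp [hg, hf1]
    intro k
    exact congrArg (fun h : K →+* K => h k) this
  refine ⟨Derivation.mk' (AddMonoidHom.toIntLinearMap
    { toFun := fun k => (g k).snd, map_zero' := by simp, map_add' := by intro x y; simp }) ?_, ?_⟩
  · intro x y
    change (g (x * y)).snd = x * (g y).snd + y * (g x).snd
    rw [map_mul, TrivSqZeroExt.snd_mul, hfst, hfst, smul_eq_mul, op_smul_eq_smul, smul_eq_mul]
  · intro p
    change (g (algebraMap R K p)).snd = _
    rw [hg, hf2]

lemma hess_ker {K : Type*} [Field K] [CharZero K] {N : ℕ} (D : Fin N → Derivation ℤ K K)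
    {σ : Type*} [Fintype σ] (a : σ → Fin N → K) (lam l : σ → K)
    (hl : ∀ i, l i ≠ 0) (ha : ∀ m i j, D m (a i j) = 0) (hlam : ∀ m i, D m (lam i) = 0)
    (hD : ∀ j i, D j (l i) = a i j)
    (hind : ∀ S : Finset σ, S.Nonempty → ∃ j, ∑ i ∈ S, lam i * a i j / l i ≠ 0)
    (hspan : ∀ v : Fin N → K, (∀ i, ∑ j, a i j * v j = 0) → v = 0)
    (v : Fin N → K) (hv : ∀ j, ∑ i, lam i * a i j * (∑ k, a i k * v k) / l i ^ 2 = 0) :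
    v = 0 := by
  classical
  by_contra hv0
  -- choose a nonzero kernel vector with minimal support
  let P : ℕ → Prop := fun m => ∃ v : Fin N → K, v ≠ 0 ∧
    (∀ j, ∑ i, lam i * a i j * (∑ k, a i k * v k) / l i ^ 2 = 0) ∧
    (Finset.univ.filter (fun j => v j ≠ 0)).card = m
  have hP : ∃ m, P m := ⟨_, v, hv0, hv, rfl⟩
  obtain ⟨u, hu0, hu, hum⟩ := Nat.find_spec hP
  have hmin : ∀ w : Fin N → K, (∀ j, ∑ i, lam i * a i j * (∑ k, a i k * w k) / l i ^ 2 = 0) →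
      (Finset.univ.filter (fun j => w j ≠ 0)).card < Nat.find hP → w = 0 := by
    intro w hw hc
    by_contra hw0
    exact Nat.find_min hP hc ⟨w, hw0, hw, rfl⟩
  obtain ⟨j0, hj0⟩ : ∃ j, u j ≠ 0 := by
    by_contra h; push Not at h; exact hu0 (funext h)
  obtain ⟨v, hvj0, hv, hsupp⟩ : ∃ v : Fin N → K, v j0 = 1 ∧
      (∀ j, ∑ i, lam i * a i j * (∑ k, a i k * v k) / l i ^ 2 = 0) ∧
      (∀ j, v j ≠ 0 → u j ≠ 0) := by
    refine ⟨fun j => u j / u j0, div_self hj0, ?_, ?_⟩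
    · intro j
      have := congrArg (fun z => z / u j0) (hu j)
      simp only [zero_div, Finset.sum_div] at this
      rw [← this]
      refine Finset.sum_congr rfl fun i _ => ?_
      have : ∑ k, a i k * (u k / u j0) = (∑ k, a i k * u k) / u j0 := by
        rw [Finset.sum_div]; exact Finset.sum_congr rfl fun k _ => by ring
      rw [this]; ring
    · intro j hj h; simp [h] at hj
  clear_value P
  -- the derivation along v
  let E : Derivation ℤ K K := ∑ k, v k • D k
  have hE : ∀ x, E x = ∑ k, v k * D k x := by
    intro x
    simp only [E, ← Derivation.coeFnAddMonoidHom_apply, map_sum, Finset.sum_apply]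
    rfl
  have hEa : ∀ i j, E (a i j) = 0 := by intro i j; simp [hE, ha]
  have hElam : ∀ i, E (lam i) = 0 := by intro i; simp [hE, hlam]
  let c : σ → K := fun i => ∑ k, a i k * v k
  have hEl : ∀ i, E (l i) = c i := by
    intro i; rw [hE]; exact Finset.sum_congr rfl fun k _ => by rw [hD]; ring
  have hDc : ∀ m i, D m (c i) = ∑ k, a i k * D m (v k) := by
    intro m i; simp [c, ha]
  have hEc : ∀ i, E (c i) = ∑ k, a i k * E (v k) := by
    intro i; simp [c, hEa]
  have hv' : ∀ j, ∑ i, lam i * a i j * c i / l i ^ 2 = 0 := hv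
  have term : ∀ (Δ : Derivation ℤ K K), (∀ i, Δ (lam i) = 0) → (∀ i j, Δ (a i j) = 0) →
      ∀ i j, Δ (lam i * a i j * c i / l i ^ 2) =
        lam i * a i j * Δ (c i) / l i ^ 2 - 2 * (lam i * a i j * c i * Δ (l i) / l i ^ 3) := by
    intro Δ h1 h2 i j
    have := hl i
    rw [Derivation.leibniz_div]
    simp only [Derivation.leibniz, h1, h2, Derivation.leibniz_pow, smul_eq_mul, nsmul_eq_mul]
    field_simp
    simp
    ring
  have h2 : ∀ j, ∑ i, lam i * a i j * c i ^ 2 / l i ^ 3 = 0 := by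
    intro j
    have e1 : ∀ k, ∑ i, (lam i * a i k * D j (c i) / l i ^ 2
        - 2 * (lam i * a i k * c i * a i j / l i ^ 3)) = 0 := by
      intro k
      have := congrArg (D j) (hv' k)
      rw [map_sum, map_zero] at this
      rw [← this]
      exact Finset.sum_congr rfl fun i _ => by rw [term (D j) (hlam j) (ha j), hD]
    have e2 : ∑ k, v k * ∑ i, (lam i * a i k * D j (c i) / l i ^ 2
        - 2 * (lam i * a i k * c i * a i j / l i ^ 3)) = 0 := by
      simp [e1]
    have e3 : ∑ i, lam i * c i * D j (c i) / l i ^ 2 = 0 := by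
      have : ∑ k, D j (v k) * ∑ i, lam i * a i k * c i / l i ^ 2 = 0 := by simp [hv']
      rw [← this]
      simp_rw [hDc, Finset.mul_sum, Finset.sum_div]
      rw [Finset.sum_comm]
      exact Finset.sum_congr rfl fun i _ => Finset.sum_congr rfl fun k _ => by ring
    have e4 : ∑ k, v k * ∑ i, (lam i * a i k * D j (c i) / l i ^ 2
        - 2 * (lam i * a i k * c i * a i j / l i ^ 3)) =
        ∑ i, lam i * c i * D j (c i) / l i ^ 2 - 2 * ∑ i, lam i * a i j * c i ^ 2 / l i ^ 3 := by
      simp_rw [Finset.mul_sum]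
      rw [Finset.sum_comm, ← Finset.sum_sub_distrib]
      refine Finset.sum_congr rfl fun i _ => ?_
      have : ∀ k, v k * (lam i * a i k * D j (c i) / l i ^ 2
        - 2 * (lam i * a i k * c i * a i j / l i ^ 3)) = (a i k * v k) *
          (lam i * D j (c i) / l i ^ 2 - 2 * (lam i * c i * a i j / l i ^ 3)) := by
        intro k; ring
      simp_rw [this]
      rw [← Finset.sum_mul]
      change c i * _ = _
      ring
    rw [e2, e3] at e4
    have : (2:K) ≠ 0 := two_ne_zero
    simpa using e4
  have hEv : (fun k => E (v k)) = 0 := by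
    apply hmin
    · intro j
      have := congrArg E (hv' j)
      rw [map_sum, map_zero] at this
      simp_rw [term E hElam hEa, hEl] at this
      rw [Finset.sum_sub_distrib, ← Finset.mul_sum] at this
      have e : ∑ i, lam i * a i j * c i * c i / l i ^ 3 = 0 := by
        rw [← h2 j]; exact Finset.sum_congr rfl fun i _ => by ring
      rw [e] at this
      simp_rw [← hEc]
      simpa using this
    · rw [← hum]
      apply Finset.card_lt_card
      rw [Finset.ssubset_iff_of_subset]
      · refine ⟨j0, by simp [hj0], ?_⟩
        simp [hvj0]
      · intro j
        simp only [Finset.mem_filter, Finset.mem_univ, true_and]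
        intro h
        apply hsupp
        intro h'
        simp [h'] at h
  have hEc0 : ∀ i, E (c i) = 0 := by
    intro i; rw [hEc]
    exact Finset.sum_eq_zero fun k _ => by rw [show E (v k) = 0 from congrFun hEv k, mul_zero]
  have hk : ∀ k j, ∑ i, lam i * a i j * c i ^ (k+1) / l i ^ (k+2) = 0 := by
    intro k
    induction k with
    | zero => intro j; simpa using hv' j
    | succ k ih =>
      intro j
      have := congrArg E (ih j)
      rw [map_sum, map_zero] at this
      have t : ∀ i, E (lam i * a i j * c i ^ (k+1) / l i ^ (k+2)) =
          -((k:K)+2) * (lam i * a i j * c i ^ (k+1+1) / l i ^ (k+1+2)) := by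
        intro i
        have := hl i
        rw [Derivation.leibniz_div]
        simp only [Derivation.leibniz, hElam, hEa, hEc0, hEl, Derivation.leibniz_pow, smul_eq_mul,
          nsmul_eq_mul]
        field_simp
        simp
        field_simp
        ring
      simp_rw [t] at this
      rw [← Finset.mul_sum] at this
      have hne : -((k:K)+2) ≠ 0 := by
        rw [neg_ne_zero]; exact_mod_cast (by omega : k + 2 ≠ 0)
      exact (mul_eq_zero.mp this).resolve_left hne
  let r : σ → K := fun i => c i / l i
  have hpoly : ∀ (p : Polynomial K) j, ∑ i, lam i * a i j / l i * ((Polynomial.X * p).eval (r i)) = 0 := by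
    intro p j
    induction p using Polynomial.induction_on' with
    | add p q hp hq =>
      simp only [mul_add, Polynomial.eval_add, Finset.sum_add_distrib, hp, hq, add_zero]
    | monomial m b =>
      have := congrArg (fun z => b * z) (hk m j)
      simp only [mul_zero] at this
      rw [← this, Finset.mul_sum]
      refine Finset.sum_congr rfl fun i _ => ?_
      have := hl i
      simp [r, div_pow]
      field_simp
      ring
  have hr : ∀ i, r i = 0 := by
    intro i0
    by_contra hne
    obtain ⟨j, hj⟩ := hind (Finset.univ.filter fun i => r i = r i0) ⟨i0, by simp⟩
    apply hj
    let T : Finset K := (Finset.univ.image r).erase (r i0)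
    let q : Polynomial K := ∏ t ∈ T, (Polynomial.X - Polynomial.C t)
    have hq0 : q.eval (r i0) ≠ 0 := by
      simp only [q, Polynomial.eval_prod, Finset.prod_ne_zero_iff]
      intro t ht
      simp only [Polynomial.eval_sub, Polynomial.eval_X, Polynomial.eval_C]
      exact sub_ne_zero.mpr (Finset.ne_of_mem_erase ht).symm
    have hq1 : ∀ i, r i ≠ r i0 → q.eval (r i) = 0 := by
      intro i hi
      simp only [q, Polynomial.eval_prod]
      apply Finset.prod_eq_zero (i := r i)
      · simp [T, hi]
      · simp
    have := hpoly q j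
    rw [← Finset.sum_filter_add_sum_filter_not Finset.univ (fun i => r i = r i0)] at this
    rw [Finset.sum_congr rfl (g := fun i => lam i * a i j / l i * (r i0 * q.eval (r i0))) (by
      intro i hi; rw [Finset.mem_filter] at hi; simp [hi.2]),
      Finset.sum_eq_zero (s := Finset.univ.filter fun i => ¬ r i = r i0) (by
      intro i hi; rw [Finset.mem_filter] at hi; simp [hq1 i hi.2]), ← Finset.sum_mul, add_zero] at this
    exact (mul_eq_zero.mp this).resolve_right (mul_ne_zero hne hq0)
  have : v = 0 := by
    apply hspan
    intro i
    have := hr i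
    simp only [r, div_eq_zero_iff, hl, or_false] at this
    exact this
  rw [this] at hvj0
  simp at hvj0

lemma deriv_prod {K : Type*} [Field K] (D : Derivation ℤ K K) {σ : Type*} (S : Finset σ)
    (l : σ → K) (hl : ∀ i, l i ≠ 0) :
    D (∏ i ∈ S, l i) / (∏ i ∈ S, l i) = ∑ i ∈ S, D (l i) / l i := by
  classical
  induction S using Finset.induction_on with
  | empty => simp
  | insert i S hi ih =>
    rw [Finset.prod_insert hi, Finset.sum_insert hi, ← ih]
    have h1 := hl i
    have h2 : ∏ i ∈ S, l i ≠ 0 := Finset.prod_ne_zero_iff.mpr fun i _ => hl i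
    simp only [Derivation.leibniz, smul_eq_mul]
    field_simp
    ring

lemma det_rel {K : Type*} [Field K] {N : ℕ} (D : Fin N → Derivation ℤ K K) (F G H p q : K)
    (hF : F ≠ 0) (hG : G ≠ 0) (hH : H ≠ 0) (hp : p ≠ 0) (hDp : ∀ j, D j p = 0)
    (hDq : ∀ j, D j q = 0) (h : p * F + q * G = H) (e1 e2 : Fin N → K)
    (he1 : ∀ k, e1 k = D k F / F - D k G / G) (he2 : ∀ k, e2 k = D k G / G - D k H / H)
    (x : Fin N → K) (hMx : ∀ j, ∑ k, D j (e2 k) * x k = - e2 j) (hx : ∑ k, e2 k * x k = 0) :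
    (-p * F) ^ N * (Matrix.of fun j k => D j (e1 k)).det =
      H ^ N * (Matrix.of fun j k => D j (e2 k)).det := by
  have hDH : ∀ j, D j H = p * D j F + q * D j G := by
    intro j; rw [← h]; simp [hDp, hDq]
  set g : K := -H / (p * F) with hg
  have h1 : ∀ k, e1 k = g * e2 k := by
    intro k
    rw [he1, he2, hDH, hg]
    field_simp
    rw [← h]; ring
  have h2 : ∀ j, D j g = - g * (1 + g) * e2 j := by
    intro j
    have : D j g = g * (D j H / H - D j F / F) := by
      rw [hg, Derivation.leibniz_div]
      simp only [map_neg, Derivation.leibniz, hDp, smul_eq_mul]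
      field_simp
      ring
    have h3 := he1 j
    rw [h1] at h3
    have h4 := he2 j
    rw [this]
    linear_combination g * h3 + g * h4
  have hM : (Matrix.of fun j k => D j (e1 k)) = g • ((Matrix.of fun j k => D j (e2 k)) *
      (1 + Matrix.replicateCol Unit (fun i => (1 + g) * x i) * Matrix.replicateRow Unit e2)) := by
    ext j k
    rw [mul_add, mul_one, ← Matrix.mul_assoc]
    simp only [Matrix.of_apply, Matrix.smul_apply, Matrix.add_apply, Matrix.mul_apply,
      Matrix.replicateCol_apply, Matrix.replicateRow_apply, smul_eq_mul, Finset.univ_unique,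
      Finset.sum_singleton]
    have : ∑ i, D j (e2 i) * ((1 + g) * x i) = (1 + g) * (- e2 j) := by
      rw [← hMx, Finset.mul_sum]; exact Finset.sum_congr rfl fun i _ => by ring
    rw [this, h1]
    simp only [Derivation.leibniz, h2, smul_eq_mul]
    ring
  have hdet : (1 + Matrix.replicateCol Unit (fun i => (1 + g) * x i) *
      Matrix.replicateRow Unit e2).det = 1 := by
    rw [Matrix.det_one_add_replicateCol_mul_replicateRow]
    have : e2 ⬝ᵥ (fun i => (1 + g) * x i) = 0 := by
      simp only [dotProduct]
      rw [← mul_zero (1 + g), ← hx, Finset.mul_sum]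
      exact Finset.sum_congr rfl fun i _ => by ring
    rw [this, add_zero]
  rw [hM, Matrix.det_smul, Matrix.det_mul, hdet, mul_one, ← mul_assoc, Fintype.card_fin, ← mul_pow]
  congr 2
  rw [hg]; field_simp

/-- The linear form with given coefficients. -/
def linF {N : ℕ} (a : Fin N → ℂ) : MvPolynomial (Fin N) ℂ := ∑ j, C (a j) * X j

lemma linF_hom {N : ℕ} (a : Fin N → ℂ) : (linF a).IsHomogeneous 1 :=
  IsHomogeneous.sum _ _ _ fun j _ => by
    simpa using (isHomogeneous_C (Fin N) (a j)).mul (isHomogeneous_X ℂ j)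

lemma eval_linF_smul {N : ℕ} (a : Fin N → ℂ) (t : ℂ) (x : Fin N → ℂ) :
    eval (t • x) (linF a) = t * eval x (linF a) := by
  simp [linF, Finset.mul_sum]
  exact Finset.sum_congr rfl fun i _ => by ring

lemma pderiv_linF {N : ℕ} (a : Fin N → ℂ) (j : Fin N) : pderiv j (linF a) = C (a j) := by
  classical
  simp [linF, pderiv_X, Pi.single_apply]

lemma hess_poly {K : Type*} [Field K] {N : ℕ} (φ : MvPolynomial (Fin N) ℂ →+* K)
    (hinj : Function.Injective φ)
    {σ : Type*} [Fintype σ] [DecidableEq σ] (a : σ → Fin N → ℂ) (lam : σ → ℂ)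
    (hlam : ∀ i, lam i * lam i = 1) (hL : ∀ i, linF (a i) ≠ 0) :
    ∃ A : MvPolynomial (Fin N) ℂ,
      φ A = (∏ i, φ (linF (a i))) ^ 2 *
        (Matrix.of fun j k => - ∑ i, φ (C (lam i)) * φ (C (a i j)) *
          φ (C (a i k)) / φ (linF (a i)) ^ 2).det ∧
      ∀ t : ℂ, t ≠ 0 → ∀ x : Fin N → ℂ, eval (t • x) A * t ^ (2 * N) =
        t ^ (2 * Fintype.card σ) * eval x A := by
  let B : Matrix σ (Fin N) (MvPolynomial (Fin N) ℂ) := Matrix.of fun i j => C (a i j)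
  let Dg : Matrix σ σ (MvPolynomial (Fin N) ℂ) :=
    Matrix.diagonal fun i => C (lam i) * linF (a i) ^ 2
  have hφ : ∀ i, φ (linF (a i)) ≠ 0 := fun i => by
    rw [Ne, map_eq_zero_iff _ hinj]; exact hL i
  have hφl : ∀ i, φ (C (lam i)) * φ (C (lam i)) = 1 := fun i => by
    rw [← map_mul, ← map_mul, hlam, map_one, map_one]
  have hφl0 : ∀ i, φ (C (lam i)) ≠ 0 := fun i h => by
    have := hφl i; simp [h] at this
  refine ⟨C (∏ i, lam i) * (Matrix.fromBlocks Dg B B.transpose 0).det, ?_, ?_⟩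
  · rw [map_mul, RingHom.map_det, RingHom.mapMatrix_apply, Matrix.fromBlocks_map]
    let dk : σ → K := fun i => φ (C (lam i)) * φ (linF (a i)) ^ 2
    have hdk : ∀ i, dk i ≠ 0 := fun i => mul_ne_zero (hφl0 i) (pow_ne_zero _ (hφ i))
    have hDg : Dg.map φ = Matrix.diagonal dk := by
      simp only [Dg]
      rw [Matrix.diagonal_map (map_zero φ)]
      congr 1; ext i; simp [dk]
    rw [hDg]
    let _ : Invertible (Matrix.diagonal dk) :=
      ⟨Matrix.diagonal (fun i => (dk i)⁻¹), by
        rw [Matrix.diagonal_mul_diagonal, ← Matrix.diagonal_one]; congr 1; ext i; simp [hdk], by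
        rw [Matrix.diagonal_mul_diagonal, ← Matrix.diagonal_one]; congr 1; ext i; simp [hdk]⟩
    have hinv : ⅟(Matrix.diagonal dk) = Matrix.diagonal (fun i => (dk i)⁻¹) := rfl
    rw [Matrix.det_fromBlocks₁₁, hinv, Matrix.det_diagonal, ← mul_assoc]
    congr 1
    · simp only [dk]
      rw [map_prod, map_prod, Finset.prod_mul_distrib, ← mul_assoc, ← Finset.prod_mul_distrib,
        Finset.prod_pow]
      simp [hφl]
    · congr 1
      ext j k
      simp only [Matrix.sub_apply, Matrix.mul_apply (N := B.map φ), Matrix.mul_diagonal,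
        Matrix.map_apply, Matrix.of_apply, Matrix.transpose_apply, B, Matrix.zero_apply, map_zero, zero_sub]
      congr 1
      refine Finset.sum_congr rfl fun i _ => ?_
      have h1 := hφ i
      have h2 := hφl i
      have h3 := hφl0 i
      simp only [dk]
      change _ = φ (C (lam i)) * φ (C (a i j)) * φ (C (a i k)) / φ (linF (a i)) ^ 2
      field_simp
      linear_combination - φ (C (a i j)) * φ (C (a i k)) * h2
  · intro t ht x
    rw [map_mul, map_mul, eval_C, eval_C, RingHom.map_det, RingHom.map_det,
      RingHom.mapMatrix_apply, RingHom.mapMatrix_apply]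
    let S : Matrix (σ ⊕ Fin N) (σ ⊕ Fin N) ℂ :=
      Matrix.diagonal (Sum.elim (fun _ => t) (fun _ => t⁻¹))
    have hS : S.det = t ^ Fintype.card σ * (t⁻¹) ^ N := by
      simp [S, Matrix.det_diagonal, Fintype.prod_sum_type]
    have : (Matrix.fromBlocks Dg B B.transpose 0).map (eval (t • x)) =
        S * (Matrix.fromBlocks Dg B B.transpose 0).map (eval x) * S := by
      ext i j
      simp only [S, Matrix.mul_diagonal, Matrix.diagonal_mul]
      rcases i with i | i <;> rcases j with j | j
      · by_cases hij : i = j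
        · subst hij
          simp [Dg, eval_linF_smul]; ring
        · simp [Dg, hij]
      · simp [B]; field_simp
      · simp [B]; field_simp
      · simp
    rw [this, Matrix.det_mul, Matrix.det_mul, hS, pow_mul', pow_mul', inv_pow]
    field_simp

lemma hom_dvd_pderiv {N m : ℕ} (P : MvPolynomial (Fin N) ℂ) (hP : P.IsHomogeneous m) (hP0 : P ≠ 0)
    (h : ∀ j, P ∣ pderiv j P) : m = 0 := by
  by_contra hm
  have h0 : ∀ j, pderiv j P = 0 := by
    intro j
    by_contra hne
    have h1 := hP.pderiv (i := j)
    obtain ⟨q, hq⟩ := h j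
    have hq0 : q ≠ 0 := by rintro rfl; simp at hq; exact hne hq
    have h2 : (pderiv j P).totalDegree = P.totalDegree + q.totalDegree := by
      rw [← totalDegree_mul_of_isDomain hP0 hq0, ← hq]
    rw [h1.totalDegree hne, hP.totalDegree hP0] at h2
    omega
  have := hP.sum_X_mul_pderiv
  simp only [h0, mul_zero, Finset.sum_const_zero] at this
  exact (smul_ne_zero hm hP0) this.symm

lemma linF_prod_hom {N : ℕ} {σ : Type*} (S : Finset σ) (a : σ → Fin N → ℂ) :
    (∏ i ∈ S, linF (a i)).IsHomogeneous S.card := by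
  have := IsHomogeneous.prod S (fun i => linF (a i)) (fun _ => 1) (fun i _ => linF_hom (a i))
  simpa using this

lemma linF_prod_eval {N : ℕ} {σ : Type*} (S : Finset σ) (a : σ → Fin N → ℂ) (t : ℂ)
    (x : Fin N → ℂ) :
    eval (t • x) (∏ i ∈ S, linF (a i)) = t ^ S.card * eval x (∏ i ∈ S, linF (a i)) := by
  simp [map_prod, eval_linF_smul, Finset.prod_mul_distrib]

/-- Logarithmic forms attached to coprime products of linear forms do not vanish. -/
lemma log_indep {K : Type*} [Field K] {N : ℕ} [Algebra (MvPolynomial (Fin N) ℂ) K]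
    [IsFractionRing (MvPolynomial (Fin N) ℂ) K] (D : Fin N → Derivation ℤ K K)
    (hD : ∀ j p, D j (algebraMap (MvPolynomial (Fin N) ℂ) K p) = algebraMap _ K (pderiv j p))
    {ι κ : Type*} (S : Finset ι) (T : Finset κ) (a : ι → Fin N → ℂ) (b : κ → Fin N → ℂ)
    (ha : ∀ i, linF (a i) ≠ 0) (hb : ∀ i, linF (b i) ≠ 0)
    (hcop : IsRelPrime (∏ i ∈ S, linF (a i)) (∏ i ∈ T, linF (b i)))
    (h : ∀ j, ∑ i ∈ S, algebraMap (MvPolynomial (Fin N) ℂ) K (C (a i j)) / algebraMap _ K (linF (a i)) =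
      ∑ i ∈ T, algebraMap (MvPolynomial (Fin N) ℂ) K (C (b i j)) / algebraMap _ K (linF (b i))) :
    S.card = 0 := by
  set φ := algebraMap (MvPolynomial (Fin N) ℂ) K with hφ
  have hinj : Function.Injective φ := IsFractionRing.injective _ K
  have hP0 : (∏ i ∈ S, linF (a i)) ≠ 0 := Finset.prod_ne_zero_iff.mpr fun i _ => ha i
  have hQ0 : (∏ i ∈ T, linF (b i)) ≠ 0 := Finset.prod_ne_zero_iff.mpr fun i _ => hb i
  apply hom_dvd_pderiv _ (linF_prod_hom S a) hP0
  intro j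
  have e1 := deriv_prod (D j) S (fun i => φ (linF (a i))) (fun i => by
    simpa [map_eq_zero_iff _ hinj] using ha i)
  have e2 := deriv_prod (D j) T (fun i => φ (linF (b i))) (fun i => by
    simpa [map_eq_zero_iff _ hinj] using hb i)
  simp only [hD, pderiv_linF, ← map_prod] at e1 e2
  rw [h j, ← e2] at e1
  have hP0' : φ (∏ i ∈ S, linF (a i)) ≠ 0 := by simpa only [Ne, map_eq_zero_iff _ hinj] using hP0
  have hQ0' : φ (∏ i ∈ T, linF (b i)) ≠ 0 := by simpa only [Ne, map_eq_zero_iff _ hinj] using hQ0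
  rw [div_eq_div_iff hP0' hQ0', ← map_mul, ← map_mul] at e1
  have e3 := hinj e1
  apply hcop.dvd_of_dvd_mul_right
  exact ⟨_, e3.trans (mul_comm _ _)⟩

/-- The partial derivative as a derivation over the integers. -/
def pderivInt {N : ℕ} (j : Fin N) : Derivation ℤ (MvPolynomial (Fin N) ℂ) (MvPolynomial (Fin N) ℂ) :=
  Derivation.mk' (AddMonoidHom.toIntLinearMap (pderiv (R := ℂ) j).toLinearMap.toAddMonoidHom)
    (fun a b => (pderiv (R := ℂ) j).leibniz a b)

lemma eval_line {N : ℕ} (x : Fin N → ℂ) (t : ℂ) (Q : MvPolynomial (Fin N) ℂ) :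
    (aeval (fun k => Polynomial.C (x k) * Polynomial.X) Q : Polynomial ℂ).eval t =
      eval (t • x) Q := by
  induction Q using MvPolynomial.induction_on with
  | C a => simp
  | add p q hp hq => simp [hp, hq]
  | mul_X p i hp => simp [hp]; left; ring

theorem core_aux {N d : ℕ} (K : Type*) [Field K] [Algebra (MvPolynomial (Fin N) ℂ) K]
    [IsFractionRing (MvPolynomial (Fin N) ℂ) K] (hd : 1 ≤ d) (p q : ℂ) (hp : p ≠ 0) (hq : q ≠ 0)
    (a b c : Fin d → Fin N → ℂ)
    (ha : ∀ i, linF (a i) ≠ 0) (hb : ∀ i, linF (b i) ≠ 0)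
    (hcop : IsRelPrime (∏ i, linF (a i)) (∏ i, linF (b i)))
    (hrel : C p * ∏ i, linF (a i) + C q * ∏ i, linF (b i) = ∏ i, linF (c i))
    (hspan : Submodule.span ℂ (Set.range a ∪ Set.range b) = ⊤) : N ≤ 5 := by
  classical
  set F := ∏ i, linF (a i) with hFdef
  set G := ∏ i, linF (b i) with hGdef
  set H := ∏ i, linF (c i) with hHdef
  have hF0 : F ≠ 0 := Finset.prod_ne_zero_iff.mpr fun i _ => ha i
  have hG0 : G ≠ 0 := Finset.prod_ne_zero_iff.mpr fun i _ => hb i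
  have hCp : IsUnit (C p : MvPolynomial (Fin N) ℂ) := (isUnit_iff_ne_zero.mpr hp).map C
  have hCq : IsUnit (C q : MvPolynomial (Fin N) ℂ) := (isUnit_iff_ne_zero.mpr hq).map C
  have hcopHF : IsRelPrime H F := by
    intro r hrH hrF
    apply hcop hrF
    have : r ∣ C q * G := by
      rw [show C q * G = H - C p * F by rw [← hrel]; ring]
      exact dvd_sub hrH (hrF.mul_left _)
    exact (hCq.dvd_mul_left).mp this
  have hFnu : ¬ IsUnit F := by
    intro h
    have := h.map (eval (0 : Fin N → ℂ))
    rw [hFdef, map_prod] at this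
    have h0 : ∏ i : Fin d, eval (0 : Fin N → ℂ) (linF (a i)) = 0 :=
      Finset.prod_eq_zero (Finset.mem_univ ⟨0, hd⟩) (by simp [linF])
    rw [h0] at this
    exact not_isUnit_zero this
  have hH0 : H ≠ 0 := by
    intro h
    rw [h] at hcopHF
    exact hFnu (hcopHF (dvd_zero _) dvd_rfl)
  have hc : ∀ i, linF (c i) ≠ 0 := fun i => Finset.prod_ne_zero_iff.mp hH0 i (Finset.mem_univ i)
  -- the fraction field
  let φ : MvPolynomial (Fin N) ℂ →+* K := algebraMap _ K
  have hinj : Function.Injective φ := IsFractionRing.injective _ K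
  have : CharZero K := charZero_of_injective_ringHom (f := φ.comp C) (hinj.comp (C_injective _ _))
  have hne : ∀ {r}, r ≠ 0 → φ r ≠ 0 := fun {r} hr => by
    simpa only [Ne, map_eq_zero_iff _ hinj] using hr
  have hDex : ∀ j : Fin N, ∃ D : Derivation ℤ K K, ∀ r, D (φ r) = φ (pderiv j r) := fun j => by
    obtain ⟨D, hD⟩ := exists_derivation_fraction (R := MvPolynomial (Fin N) ℂ) (K := K)
      (pderivInt j)
    exact ⟨D, hD⟩
  choose D hD using hDex
  have hDC : ∀ j z, D j (φ (C z)) = 0 := by intro j z; rw [hD]; simp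
  -- the two Hessian matrices
  have hess : ∀ (a b : Fin d → Fin N → ℂ), (∀ i, linF (a i) ≠ 0) → (∀ i, linF (b i) ≠ 0) →
      ∀ k, D k (φ (∏ i, linF (a i))) / φ (∏ i, linF (a i)) -
        D k (φ (∏ i, linF (b i))) / φ (∏ i, linF (b i)) =
        ∑ i : Fin d ⊕ Fin d, φ (C (Sum.elim (fun _ => 1) (fun _ => -1) i)) *
          φ (C (Sum.elim a b i k)) / φ (linF (Sum.elim a b i)) := by
    intro a b ha hb k
    rw [map_prod φ, map_prod φ, deriv_prod _ _ _ fun i => hne (ha i),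
      deriv_prod _ _ _ fun i => hne (hb i), Fintype.sum_sum_type]
    simp [hD, pderiv_linF, neg_div, sub_eq_add_neg]
  let e : (Fin d → Fin N → ℂ) → (Fin d → Fin N → ℂ) → Fin N → K := fun a b k =>
    ∑ i : Fin d ⊕ Fin d, φ (C (Sum.elim (fun _ => 1) (fun _ => -1) i)) *
          φ (C (Sum.elim a b i k)) / φ (linF (Sum.elim a b i))
  have hab : ∀ (a b : Fin d → Fin N → ℂ), (∀ i, linF (a i) ≠ 0) → (∀ i, linF (b i) ≠ 0) →
      ∀ i, linF (Sum.elim a b i) ≠ 0 := by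
    rintro a b ha hb (i | i)
    · exact ha i
    · exact hb i
  have hDe : ∀ (a b : Fin d → Fin N → ℂ), (∀ i, linF (a i) ≠ 0) → (∀ i, linF (b i) ≠ 0) →
      ∀ j k, D j (e a b k) = - ∑ i : Fin d ⊕ Fin d,
        φ (C (Sum.elim (fun _ => 1) (fun _ => -1) i)) * φ (C (Sum.elim a b i j)) *
          φ (C (Sum.elim a b i k)) / φ (linF (Sum.elim a b i)) ^ 2 := by
    intro a b ha hb j k
    simp only [e]
    rw [map_sum, ← Finset.sum_neg_distrib]
    refine Finset.sum_congr rfl fun i _ => ?_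
    have := hne (hab a b ha hb i)
    rw [Derivation.leibniz_div, Derivation.leibniz, hDC, hDC, hD, pderiv_linF]
    simp only [smul_eq_mul]
    field_simp
    ring
  have hMdet : ∀ (a b : Fin d → Fin N → ℂ), (∀ i, linF (a i) ≠ 0) → (∀ i, linF (b i) ≠ 0) →
      ∃ A : MvPolynomial (Fin N) ℂ, φ A = (φ (∏ i, linF (a i)) * φ (∏ i, linF (b i))) ^ 2 *
        (Matrix.of fun j k => D j (e a b k)).det ∧
        ∀ t : ℂ, t ≠ 0 → ∀ x : Fin N → ℂ, eval (t • x) A * t ^ (2 * N) =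
        t ^ (4 * d) * eval x A := by
    intro a b ha hb
    obtain ⟨A, hA1, hA2⟩ := hess_poly φ hinj (Sum.elim a b)
      (Sum.elim (fun _ => 1) (fun _ => -1)) (by rintro (i | i) <;> simp) (hab a b ha hb)
    refine ⟨A, ?_, ?_⟩
    · rw [hA1]
      congr 1
      · rw [Fintype.prod_sum_type, map_prod, map_prod]; rfl
      · congr 1
        ext j k
        simp only [Matrix.of_apply]
        rw [hDe a b ha hb]
    · intro t ht x
      rw [hA2 t ht x]
      congr 2
      simp; ring
  obtain ⟨A, hA1, hA2⟩ := hMdet a b ha hb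
  obtain ⟨B, hB1, -⟩ := hMdet b c hb hc
  -- Euler relations
  have hX : ∀ (a : Fin N → ℂ), ∑ k, φ (C (a k)) * φ (X k) = φ (linF a) := by
    intro a; simp [linF]
  have hrelK := det_rel D (φ F) (φ G) (φ H) (φ (C p)) (φ (C q)) (hne hF0) (hne hG0) (hne hH0)
    (hne (by simpa using hp)) (fun j => hDC j p) (fun j => hDC j q)
    (by rw [← map_mul, ← map_mul, ← map_add, hrel]) (e a b) (e b c)
    (fun k => (hess a b ha hb k).symm) (fun k => (hess b c hb hc k).symm) (fun k => φ (X k))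
    (by
      intro j
      simp only [hDe b c hb hc, e, neg_mul, Finset.sum_neg_distrib, Finset.sum_mul]
      rw [Finset.sum_comm]
      congr 1
      refine Finset.sum_congr rfl fun i _ => ?_
      have h1 := hne (hab b c hb hc i)
      have h2 := hX (Sum.elim b c i)
      have : ∀ k, φ (C (Sum.elim (fun _ => 1) (fun _ => -1) i)) * φ (C (Sum.elim b c i j)) *
          φ (C (Sum.elim b c i k)) / φ (linF (Sum.elim b c i)) ^ 2 * φ (X k) =
          φ (C (Sum.elim (fun _ => 1) (fun _ => -1) i)) * φ (C (Sum.elim b c i j)) /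
            φ (linF (Sum.elim b c i)) ^ 2 * (φ (C (Sum.elim b c i k)) * φ (X k)) := by
        intro k; ring
      simp_rw [this]
      rw [← Finset.mul_sum, h2]
      field_simp)
    (by
      simp only [e, Finset.sum_mul]
      rw [Finset.sum_comm]
      have : ∀ i : Fin d ⊕ Fin d, ∑ k, φ (C (Sum.elim (fun _ => 1) (fun _ => -1) i)) *
          φ (C (Sum.elim b c i k)) / φ (linF (Sum.elim b c i)) * φ (X k) =
          φ (C (Sum.elim (fun _ => 1) (fun _ => -1) i)) := by
        intro i
        have h1 := hne (hab b c hb hc i)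
        have h2 := hX (Sum.elim b c i)
        have : ∀ k, φ (C (Sum.elim (fun _ => 1) (fun _ => -1) i)) *
          φ (C (Sum.elim b c i k)) / φ (linF (Sum.elim b c i)) * φ (X k) =
          φ (C (Sum.elim (fun _ => 1) (fun _ => -1) i)) /
            φ (linF (Sum.elim b c i)) * (φ (C (Sum.elim b c i k)) * φ (X k)) := by
          intro k; ring
        simp_rw [this]
        rw [← Finset.mul_sum, h2]
        field_simp
      simp_rw [this]
      simp)
  -- nondegeneracy
  have hdet : (Matrix.of fun j k => D j (e a b k)).det ≠ 0 := by
    intro h0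
    obtain ⟨v, hv0, hv⟩ := Matrix.exists_mulVec_eq_zero_iff.mpr h0
    apply hv0
    refine hess_ker D (fun i j => φ (C (Sum.elim a b i j)))
      (fun i => φ (C (Sum.elim (fun _ => 1) (fun _ => -1) i)))
      (fun i => φ (linF (Sum.elim a b i))) (fun i => hne (hab a b ha hb i))
      (fun m i j => hDC _ _) (fun m i => hDC _ _) (fun j i => by rw [hD, pderiv_linF]) ?_ ?_ v ?_
    · intro S hS
      by_contra hcon
      push Not at hcon
      have hsum : ∀ j, ∑ i ∈ S.toLeft, φ (C (a i j)) / φ (linF (a i)) =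
          ∑ i ∈ S.toRight, φ (C (b i j)) / φ (linF (b i)) := by
        intro j
        have := hcon j
        rw [← Finset.toLeft_disjSum_toRight (u := S), Finset.sum_disjSum] at this
        simp [neg_div] at this
        linear_combination this
      have hd1 : (∏ i ∈ S.toLeft, linF (a i)) ∣ F :=
        Finset.prod_dvd_prod_of_subset _ _ _ (Finset.subset_univ _)
      have hd2 : (∏ i ∈ S.toRight, linF (b i)) ∣ G :=
        Finset.prod_dvd_prod_of_subset _ _ _ (Finset.subset_univ _)
      have hcop' := IsRelPrime.of_dvd_left (IsRelPrime.of_dvd_right hcop hd2) hd1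
      have c1 := log_indep D hD S.toLeft S.toRight a b ha hb hcop' hsum
      have c2 := log_indep D hD S.toRight S.toLeft b a hb ha hcop'.symm (fun j => (hsum j).symm)
      have := Finset.card_toLeft_add_card_toRight (u := S)
      have := hS.card_pos
      omega
    · intro w hw
      have key : ∀ u : Fin N → ℂ, ∑ j, φ (C (u j)) * w j = 0 := by
        intro u
        have hu : u ∈ Submodule.span ℂ (Set.range a ∪ Set.range b) := by rw [hspan]; trivial
        induction hu using Submodule.span_induction with
        | mem u hu =>
          rcases hu with ⟨i, rfl⟩ | ⟨i, rfl⟩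
          · exact hw (Sum.inl i)
          · exact hw (Sum.inr i)
        | zero => simp
        | add u u' _ _ h1 h2 =>
          simp only [Pi.add_apply, map_add, add_mul, Finset.sum_add_distrib, h1, h2, add_zero]
        | smul z u _ h1 =>
          simp only [Pi.smul_apply, smul_eq_mul, map_mul, mul_assoc, ← Finset.mul_sum, h1, mul_zero]
      funext j
      have := key (Pi.single j 1)
      simpa [Pi.single_apply, apply_ite] using this
    · intro j
      have := congrFun hv j
      simp only [Matrix.mulVec, dotProduct, Matrix.of_apply, hDe a b ha hb, neg_mul,
        Finset.sum_neg_distrib, Finset.sum_mul, Pi.zero_apply, neg_eq_zero] at this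
      rw [Finset.sum_comm] at this
      rw [← this]
      refine Finset.sum_congr rfl fun i _ => ?_
      rw [Finset.mul_sum, Finset.sum_div]
      exact Finset.sum_congr rfl fun k _ => by ring
  by_contra hN
  push Not at hN
  obtain ⟨m, rfl⟩ : ∃ m, N = m + 2 := ⟨N - 2, by omega⟩
  have hA0 : A ≠ 0 := by
    rintro rfl
    rw [map_zero] at hA1
    exact mul_ne_zero (pow_ne_zero _ (mul_ne_zero (hne hF0) (hne hG0))) hdet hA1.symm
  have hpoly : (C (-p)) ^ (m + 2) * F ^ m * A = H ^ m * B := by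
    apply hinj
    have h1 := hne hF0
    have h2 := hne hG0
    have h3 := hne hH0
    simp only [map_mul, map_pow, hA1, hB1, map_neg]
    change (-φ (C p)) ^ (m + 2) * φ F ^ m * ((φ F * φ G) ^ 2 * _) = φ H ^ m * ((φ G * φ H) ^ 2 * _)
    rw [mul_pow] at hrelK
    linear_combination (φ G) ^ 2 * hrelK
  have hHA : H ^ m ∣ A := by
    have h1 : H ^ m ∣ (C (-p)) ^ (m + 2) * F ^ m * A := ⟨B, hpoly⟩
    have hu : IsUnit ((C (-p) : MvPolynomial (Fin (m+2)) ℂ) ^ (m + 2)) := by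
      rw [map_neg]; exact (hCp.neg).pow _
    rw [mul_assoc, hu.dvd_mul_left] at h1
    exact (hcopHF.pow).dvd_of_dvd_mul_left h1
  obtain ⟨Q, hQ⟩ := hHA
  obtain ⟨x, hx⟩ : ∃ x, eval x A ≠ 0 := by
    by_contra hcon
    push Not at hcon
    exact hA0 (MvPolynomial.funext (by simpa using hcon))
  have hH : ∀ t : ℂ, eval (t • x) H = t ^ d * eval x H := by
    intro t; simpa only [Finset.card_univ, Fintype.card_fin] using linF_prod_eval Finset.univ c t x
  let ψ : Polynomial ℂ := aeval (fun k => Polynomial.C (x k) * Polynomial.X) Q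
  have hψ : ∀ t : ℂ, ψ.eval t = eval (t • x) Q := by
    intro t
    exact eval_line x t Q
  have hx' : eval x H ^ m * eval x Q ≠ 0 := by
    rw [hQ] at hx; simpa using hx
  have hfin : ∀ t : ℂ, t ≠ 0 → t ^ (d * m + 2 * (m + 2) - 4 * d) * (ψ.eval t) = eval x Q := by
    intro t ht
    have := hA2 t ht x
    rw [hQ] at this
    simp only [map_mul, map_pow, hH] at this
    rw [hψ]
    have hle : 4 * d ≤ d * m + 2 * (m + 2) := by nlinarith
    have hpw : t ^ (d * m + 2 * (m + 2)) = t ^ (d * m + 2 * (m + 2) - 4 * d) * t ^ (4 * d) := by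
      rw [← pow_add]; congr 1; omega
    have h4 : t ^ (4 * d) ≠ 0 := pow_ne_zero _ ht
    have h5 : eval x H ^ m ≠ 0 := left_ne_zero_of_mul hx'
    apply mul_left_cancel₀ (mul_ne_zero h4 h5)
    rw [pow_add] at hpw
    linear_combination this - eval x H ^ m * eval (t • x) Q * hpw
  have hpeq : Polynomial.X ^ (d * m + 2 * (m + 2) - 4 * d) * ψ = Polynomial.C (eval x Q) := by
    apply Polynomial.eq_of_infinite_eval_eq
    refine Set.Infinite.mono (s := {0}ᶜ) ?_ (Set.finite_singleton (0:ℂ)).infinite_compl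
    intro t ht
    simpa using hfin t ht
  have := congrArg (Polynomial.eval 0) hpeq
  have hpos : d * m + 2 * (m + 2) - 4 * d ≠ 0 := by
    have : 4 * d < d * m + 2 * (m + 2) := by nlinarith
    omega
  simp [hpos] at this
  exact hx' (by rw [← this, mul_zero])

lemma linF_add {N : ℕ} (a b : Fin N → ℂ) : linF (a + b) = linF a + linF b := by
  simp [linF, add_mul, Finset.sum_add_distrib]

lemma linF_smul {N : ℕ} (z : ℂ) (a : Fin N → ℂ) : linF (z • a) = C z * linF a := by
  simp [linF, Finset.mul_sum, mul_assoc]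

/-- The linear form with given coefficients, as a linear map. -/
def linFL (N : ℕ) : (Fin N → ℂ) →ₗ[ℂ] MvPolynomial (Fin N) ℂ where
  toFun := linF
  map_add' := linF_add
  map_smul' z a := by rw [linF_smul, RingHom.id_apply, C_mul']

lemma linF_inj {N : ℕ} {a b : Fin N → ℂ} (h : linF a = linF b) : a = b := by
  funext j
  have := congrArg (pderiv j) h
  rw [pderiv_linF, pderiv_linF] at this
  exact C_injective _ _ this

lemma linF_ne_zero_iff {N : ℕ} {a : Fin N → ℂ} : linF a ≠ 0 ↔ a ≠ 0 := by
  have h0 : linF (0 : Fin N → ℂ) = 0 := by simp [linF]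
  constructor
  · rintro h rfl
    exact h h0
  · intro h h1
    exact h (linF_inj (h1.trans h0.symm))

lemma exists_linF {N : ℕ} {α : MvPolynomial (Fin N) ℂ} (h : α.IsHomogeneous 1) :
    ∃ a, α = linF a := by
  have h1 : ∀ j, ∃ z, pderiv j α = C z := by
    intro j
    have := h.pderiv (i := j)
    rw [Nat.sub_self, ← totalDegree_zero_iff_isHomogeneous, totalDegree_eq_zero_iff_eq_C] at this
    exact ⟨_, this⟩
  choose a ha using h1
  refine ⟨a, ?_⟩
  have := h.sum_X_mul_pderiv
  rw [one_smul] at this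
  rw [← this, linF]
  exact Finset.sum_congr rfl fun j _ => by rw [ha, mul_comm]

lemma dvd_linF {N : ℕ} {a b : Fin N → ℂ} (hb : linF b ≠ 0) (h : linF a ∣ linF b) :
    ∃ z : ℂ, z ≠ 0 ∧ b = z • a := by
  obtain ⟨q, hq⟩ := h
  have ha0 : linF a ≠ 0 := by intro h; rw [h, zero_mul] at hq; exact hb hq
  have hq0 : q ≠ 0 := by rintro rfl; rw [mul_zero] at hq; exact hb hq
  have h2 := totalDegree_mul_of_isDomain ha0 hq0
  rw [← hq, (linF_hom a).totalDegree ha0, (linF_hom b).totalDegree hb] at h2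
  have h3 : q.totalDegree = 0 := by omega
  rw [totalDegree_eq_zero_iff_eq_C] at h3
  refine ⟨q.coeff 0, ?_, ?_⟩
  · intro h; rw [h, C_0] at h3; exact hq0 h3
  · apply linF_inj
    rw [linF_smul, hq, mul_comm, ← h3]

lemma linF_irreducible {N : ℕ} {a : Fin N → ℂ} (ha : linF a ≠ 0) : Irreducible (linF a) := by
  refine ⟨?_, ?_⟩
  · intro h
    have := h.map (eval (0 : Fin N → ℂ))
    simp [linF] at this
  · intro x y hxy
    have hx0 : x ≠ 0 := by rintro rfl; rw [zero_mul] at hxy; exact ha hxy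
    have hy0 : y ≠ 0 := by rintro rfl; rw [mul_zero] at hxy; exact ha hxy
    have h2 := totalDegree_mul_of_isDomain hx0 hy0
    rw [← hxy, (linF_hom a).totalDegree ha] at h2
    have key : ∀ r : MvPolynomial (Fin N) ℂ, r ≠ 0 → r.totalDegree = 0 → IsUnit r := by
      intro r hr h
      rw [totalDegree_eq_zero_iff_eq_C] at h
      have : r.coeff 0 ≠ 0 := by intro h'; rw [h', C_0] at h; exact hr h
      rw [h]
      exact (isUnit_iff_ne_zero.mpr this).map C
    by_cases hx : x.totalDegree = 0
    · exact Or.inl (key x hx0 hx)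
    · exact Or.inr (key y hy0 (by omega))

lemma cr_family {n d : ℕ} {P : MvPolynomial (Fin (n + 1)) ℂ} (hP : P.IsHomogeneous d)
    (h : CompletelyReducible n P) :
    ∃ a : Fin d → Fin (n + 1) → ℂ, (∀ i, linF (a i) ≠ 0) ∧ P = ∏ i, linF (a i) := by
  obtain ⟨s, hs, rfl⟩ := h
  obtain ⟨l, rfl⟩ : ∃ l : List (MvPolynomial (Fin (n + 1)) ℂ), s = (l : Multiset _) :=
    ⟨s.toList, s.coe_toList.symm⟩
  rw [Multiset.prod_coe] at *
  have hex : ∀ i : Fin l.length, ∃ a : Fin (n + 1) → ℂ, l.get i = linF a := fun i =>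
    exists_linF (hs _ (by simp)).2
  choose a ha using hex
  have hprod : l.prod = ∏ i, linF (a i) := by
    rw [← Fin.prod_univ_getElem l]
    exact Finset.prod_congr rfl fun i _ => ha i
  have hne : ∀ i, linF (a i) ≠ 0 := fun i => by
    rw [← ha]; exact (hs _ (by simp)).1
  have h0 : l.prod ≠ 0 := by
    rw [hprod]; exact Finset.prod_ne_zero_iff.mpr fun i _ => hne i
  have hh := linF_prod_hom Finset.univ a
  rw [← hprod] at hh
  have hlen := hh.inj_right hP h0
  rw [Finset.card_univ, Fintype.card_fin] at hlen
  subst hlen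
  exact ⟨a, hne, hprod⟩

lemma restrict_linF {m N : ℕ} (T : (Fin m → ℂ) →ₗ[ℂ] (Fin N → ℂ)) (v : Fin m → ℂ) :
    aeval (fun k => linF (T (Pi.single k 1))) (linF v) = linF (T v) := by
  have h1 : T v = ∑ k, v k • T (Pi.single k 1) := by
    conv_lhs => rw [← Finset.univ_sum_single v]
    rw [map_sum]
    refine Finset.sum_congr rfl fun k _ => ?_
    rw [← map_smul, ← Pi.single_smul, smul_eq_mul, mul_one]
  have h2 : ∀ f : Fin m → Fin N → ℂ, linF (∑ k, f k) = ∑ k, linF (f k) := fun f =>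
    map_sum (linFL N) f Finset.univ
  rw [h1, h2]
  conv_lhs => rw [linF]
  simp [linF_smul, algebraMap_eq]

lemma exists_good (c : Fin 3 → ℂ × ℂ)
    (hprop : ∀ i j, i ≠ j → (c i).1 * (c j).2 ≠ (c i).2 * (c j).1) :
    ∃ i, (c i).1 ≠ 0 ∧ (c i).2 ≠ 0 := by
  by_contra! h
  have h01 := hprop 0 1 (by decide)
  have h02 := hprop 0 2 (by decide)
  have h12 := hprop 1 2 (by decide)
  have k0 := h 0
  have k1 := h 1
  have k2 := h 2
  by_cases a0 : (c 0).1 = 0 <;> by_cases a1 : (c 1).1 = 0 <;> by_cases a2 : (c 2).1 = 0 <;>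
    simp_all

/-- If a pencil on ℙⁿ with irreducible generic fiber has more than 2 pairwise distinct
completely reducible members, then the linear factors of F and G span a subspace of
dimension at most 5 (the pencil is a linear pull-back of a pencil on ℙ⁴). -/
theorem pencil_more_than_two_completely_reducible_fibers
    (n d : ℕ) (hn : 1 ≤ n) (hd : 1 ≤ d)
    (F G : MvPolynomial (Fin (n + 1)) ℂ)
    (hF : F.IsHomogeneous d) (hG : G.IsHomogeneous d)
    (hFcr : CompletelyReducible n F) (hGcr : CompletelyReducible n G)
    (hcop : RelPrime n F G)
    (hgen : GenericFiberIrreducible n F G)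
    (c : Fin 3 → ℂ × ℂ)
    (hprop : ∀ i j, i ≠ j → (c i).1 * (c j).2 ≠ (c i).2 * (c j).1)
    (hcr : ∀ i, CompletelyReducible n (C (c i).1 * F + C (c i).2 * G)) :
    Module.rank ℂ
      ↥(Submodule.span ℂ
        {α : MvPolynomial (Fin (n + 1)) ℂ | IsLinearForm n α ∧ (α ∣ F ∨ α ∣ G)}) ≤ 5 := by
  obtain ⟨i0, hp, hq⟩ := exists_good c hprop
  have hHhom : (C (c i0).1 * F + C (c i0).2 * G).IsHomogeneous d := by
    have h1 := (isHomogeneous_C (Fin (n + 1)) (c i0).1).mul hF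
    have h2 := (isHomogeneous_C (Fin (n + 1)) (c i0).2).mul hG
    rw [zero_add] at h1 h2
    exact h1.add h2
  obtain ⟨h, -, hH⟩ := cr_family hHhom (hcr i0)
  obtain ⟨a, ha, hFa⟩ := cr_family hF hFcr
  obtain ⟨b, hb, hGb⟩ := cr_family hG hGcr
  set W : Submodule ℂ (Fin (n + 1) → ℂ) := Submodule.span ℂ (Set.range a ∪ Set.range b) with hW
  have haW : ∀ i, a i ∈ W := fun i => Submodule.subset_span (Or.inl ⟨i, rfl⟩)
  have hbW : ∀ i, b i ∈ W := fun i => Submodule.subset_span (Or.inr ⟨i, rfl⟩)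
  have hle : Submodule.span ℂ
        {α : MvPolynomial (Fin (n + 1)) ℂ | IsLinearForm n α ∧ (α ∣ F ∨ α ∣ G)} ≤
        W.map (linFL (n + 1)) := by
    rw [Submodule.span_le]
    rintro α ⟨⟨hα0, hα1⟩, hα⟩
    obtain ⟨v, rfl⟩ := exists_linF hα1
    have hprime : Prime (linF v) := (linF_irreducible hα0).prime
    refine ⟨v, ?_, rfl⟩
    have key : ∀ e : Fin d → Fin (n + 1) → ℂ, (∀ i, e i ∈ W) → (∀ i, linF (e i) ≠ 0) →
        linF v ∣ ∏ i, linF (e i) → v ∈ W := by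
      intro e heW he hdv
      obtain ⟨i, -, hi⟩ := (Prime.dvd_finsetProd_iff hprime _).mp hdv
      obtain ⟨z, hz, hzv⟩ := dvd_linF (he i) hi
      have : v = z⁻¹ • e i := by rw [hzv, smul_smul, inv_mul_cancel₀ hz, one_smul]
      rw [this]
      exact W.smul_mem _ (heW i)
    rcases hα with hα | hα
    · rw [hFa] at hα; exact key a haW ha hα
    · rw [hGb] at hα; exact key b hbW hb hα
  have hrank : Module.rank ℂ W ≤ 5 := by
    rw [← Submodule.finrank_eq_rank]
    suffices hN : Module.finrank ℂ W ≤ 5 by exact_mod_cast hN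
    let B := Module.finBasis ℂ W
    obtain ⟨T, hT⟩ := LinearMap.exists_extend (B.equivFun : W →ₗ[ℂ] (Fin (Module.finrank ℂ W) → ℂ))
    have hTW : ∀ w : W, T w = B.equivFun w := fun w => by
      have := LinearMap.congr_fun hT w
      simpa using this
    have hTinj : ∀ v ∈ W, ∀ w ∈ W, T v = T w → v = w := by
      intro v hv w hw hvw
      have h1 := hTW ⟨v, hv⟩
      have h2 := hTW ⟨w, hw⟩
      have h3 : B.equivFun ⟨v, hv⟩ = B.equivFun ⟨w, hw⟩ := by rw [← h1, ← h2]; exact hvw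
      exact congrArg Subtype.val (B.equivFun.injective h3)
    have hTne : ∀ v ∈ W, linF v ≠ 0 → linF (T v) ≠ 0 := by
      intro v hv hv0
      rw [linF_ne_zero_iff] at hv0 ⊢
      intro h0
      exact hv0 (hTinj v hv 0 W.zero_mem (by rw [h0, map_zero]))
    let θ := aeval (R := ℂ) (fun k => linF (T (Pi.single k 1)))
    have hθ : ∀ e : Fin d → Fin (n + 1) → ℂ, θ (∏ i, linF (e i)) = ∏ i, linF (T (e i)) := by
      intro e
      rw [map_prod]
      exact Finset.prod_congr rfl fun i _ => restrict_linF T (e i)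
    have haT : ∀ i, linF (T (a i)) ≠ 0 := fun i => hTne _ (haW i) (ha i)
    have hbT : ∀ i, linF (T (b i)) ≠ 0 := fun i => hTne _ (hbW i) (hb i)
    refine core_aux (FractionRing (MvPolynomial (Fin (Module.finrank ℂ W)) ℂ)) hd
      (c i0).1 (c i0).2 hp hq (fun i => T (a i)) (fun i => T (b i)) (fun i => T (h i)) haT hbT
      ?_ ?_ ?_
    · refine IsRelPrime.prod_left fun i _ => IsRelPrime.prod_right fun j _ => ?_
      rw [(linF_irreducible (haT i)).isRelPrime_iff_not_dvd]
      intro hdv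
      obtain ⟨z, hz, hzv⟩ := dvd_linF (hbT j) hdv
      rw [← map_smul] at hzv
      have hbz := hTinj _ (hbW j) _ (W.smul_mem z (haW i)) hzv
      apply (linF_irreducible (ha i)).not_isUnit
      apply hcop
      · rw [hFa]; exact Finset.dvd_prod_of_mem _ (Finset.mem_univ i)
      · rw [hGb]
        refine dvd_trans ?_ (Finset.dvd_prod_of_mem (fun i => linF (b i)) (Finset.mem_univ j))
        simp only [hbz, linF_smul]
        exact dvd_mul_left _ _
    · have := congrArg θ hH
      rw [map_add, map_mul, map_mul, hFa, hGb, hθ, hθ, hθ] at this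
      simpa [θ, algebraMap_eq] using this
    · have h1 : (Set.range fun i => T (a i)) ∪ (Set.range fun i => T (b i)) =
          T '' (Set.range a ∪ Set.range b) := by
        rw [Set.image_union, ← Set.range_comp, ← Set.range_comp]; rfl
      rw [h1, Submodule.span_image, ← hW, eq_top_iff]
      intro y _
      refine ⟨(B.equivFun.symm y : W), (B.equivFun.symm y).2, ?_⟩
      rw [hTW, LinearEquiv.apply_symm_apply]
  exact (Submodule.rank_mono hle).trans ((rank_map_le _ _).trans hrank)
end
end

section
/- Let F, G be coprime completely reducible homogeneous polynomials of the same degree d ≥ 1 in R = MvPolynomial (Fin (n+1)) ℂ whose pencil 𝒫 has irreducible generic fiber. Suppose there exists a member K = aF + bG of 𝒫, distinct from F and from G, such that K = (∏_{i=1}^r ℓ_i)·(∏_{j=1}^s g_j^{e_j}) where the ℓ_i are linear forms and the g_j are irreducible homogeneous polynomials with e_j ≥ 2 for all j (a product of linear forms and non-reduced polynomials). Write F = ∏_{i=1}^u α_i^{m_i} and G = ∏_{j=1}^v β_j^{l_j} with the α_i pairwise non-proportional linear forms and the β_j pairwise non-proportional linear forms. Then for every point p ∈ ℂ^{n+1}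 ∖ {0} with F(p) = G(p) = 0, one has Σ_{i : α_i(p)=0} m_i = Σ_{j : β_j(p)=0} l_j. -/
open MvPolynomial

noncomputable section

/-- The Euler derivation centred at the point p. -/
def eulerAt (n : ℕ) (p : Fin (n + 1) → ℂ) :
    Derivation ℂ (MvPolynomial (Fin (n + 1)) ℂ) (MvPolynomial (Fin (n + 1)) ℂ) :=
  mkDerivation ℂ (fun i => X i - C (p i))

theorem eulerAt_linear (n : ℕ) (p : Fin (n + 1) → ℂ) (α : MvPolynomial (Fin (n + 1)) ℂ)
    (hα : IsLinearForm n α) : eulerAt n p α = α - C (eval p α) := by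
  have h : α ∈ Submodule.span ℂ (Set.range (X : Fin (n + 1) → MvPolynomial (Fin (n + 1)) ℂ)) := by
    rw [← homogeneousSubmodule_one_eq_span_X]
    exact hα.2
  clear hα
  induction h using Submodule.span_induction with
  | mem x hx =>
    obtain ⟨i, rfl⟩ := hx
    simp [eulerAt, mkDerivation_X]
  | zero => simp
  | add x y _ _ hx hy => simp only [map_add, hx, hy]; ring
  | smul c x _ hx =>
    rw [Derivation.map_smul, hx, smul_eval, MvPolynomial.smul_eq_C_mul,
      MvPolynomial.smul_eq_C_mul, map_mul]
    ring

theorem mul_derivation_pow (n : ℕ)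
    (D : Derivation ℂ (MvPolynomial (Fin (n + 1)) ℂ) (MvPolynomial (Fin (n + 1)) ℂ))
    (α : MvPolynomial (Fin (n + 1)) ℂ) (k : ℕ) :
    α * D (α ^ k) = (k : MvPolynomial (Fin (n + 1)) ℂ) * α ^ k * D α := by
  cases k with
  | zero => simp
  | succ k =>
    rw [Derivation.leibniz_pow]
    simp only [Nat.add_sub_cancel, nsmul_eq_mul, smul_eq_mul]
    ring

theorem log_deriv (n : ℕ) (p : Fin (n + 1) → ℂ) {ι : Type} (S : Finset ι)
    (α : ι → MvPolynomial (Fin (n + 1)) ℂ) (hα : ∀ i, IsLinearForm n (α i)) (m : ι → ℕ) :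
    ∃ P Q : MvPolynomial (Fin (n + 1)) ℂ, eval p P ≠ 0 ∧
      eval p Q = ((∑ i ∈ S.filter (fun i => eval p (α i) = 0), m i : ℕ) : ℂ) * eval p P ∧
      P * eulerAt n p (∏ i ∈ S, α i ^ m i) = (∏ i ∈ S, α i ^ m i) * Q := by
  classical
  induction S using Finset.induction_on with
  | empty => exact ⟨1, 0, by simp, by simp, by simp⟩
  | insert i S hi ih =>
    obtain ⟨P, Q, h1, h2, h3⟩ := ih
    have hE := eulerAt_linear n p (α i) (hα i)
    have hpow := mul_derivation_pow n (eulerAt n p) (α i) (m i)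
    rw [Finset.prod_insert hi, Finset.filter_insert]
    set W := ∏ i ∈ S, α i ^ m i
    rw [Derivation.leibniz]
    simp only [smul_eq_mul]
    by_cases h0 : eval p (α i) = 0
    · rw [h0, map_zero, sub_zero] at hE
      rw [hE] at hpow
      have hpow' : eulerAt n p (α i ^ m i)
          = (m i : MvPolynomial (Fin (n + 1)) ℂ) * α i ^ m i := by
        apply mul_left_cancel₀ (hα i).1
        rw [hpow]; ring
      refine ⟨P, (m i : MvPolynomial (Fin (n + 1)) ℂ) * P + Q, h1, ?_, ?_⟩
      · rw [if_pos h0, Finset.sum_insert (by simp [hi])]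
        simp only [map_add, map_mul, map_natCast, h2]
        push_cast; ring
      · rw [hpow']; linear_combination (α i ^ m i) * h3
    · refine ⟨α i * P, α i * Q + (m i : MvPolynomial (Fin (n + 1)) ℂ) * P * eulerAt n p (α i),
        ?_, ?_, ?_⟩
      · simp [h0, h1]
      · rw [if_neg h0, hE]
        simp only [map_add, map_mul, map_natCast, map_sub, eval_C, h2]
        ring
      · linear_combination (α i * α i ^ m i) * h3 + P * W * hpow

theorem exists_prime_vanishing (n : ℕ) (p : Fin (n + 1) → ℂ) (h : MvPolynomial (Fin (n + 1)) ℂ)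
    (h0 : h ≠ 0) (hp : eval p h = 0) : ∃ q, Prime q ∧ q ∣ h ∧ eval p q = 0 := by
  induction h using UniqueFactorizationMonoid.induction_on_prime with
  | h₁ => exact absurd rfl h0
  | h₂ x hx => exact absurd hp (hx.map (eval p)).ne_zero
  | h₃ a q ha hq ih =>
    rw [map_mul, mul_eq_zero] at hp
    rcases hp with hp | hp
    · exact ⟨q, hq, dvd_mul_right _ _, hp⟩
    · obtain ⟨q', h1, h2, h3⟩ := ih ha hp
      exact ⟨q', h1, h2.mul_left _, h3⟩

theorem exists_tangent_factor (n : ℕ) (p : Fin (n + 1) → ℂ) (r s : ℕ)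
    (ℓ : Fin r → MvPolynomial (Fin (n + 1)) ℂ) (hℓ : ∀ i, IsLinearForm n (ℓ i))
    (g : Fin s → MvPolynomial (Fin (n + 1)) ℂ) (hgirr : ∀ j, Irreducible (g j))
    (e : Fin s → ℕ) (he : ∀ j, 2 ≤ e j)
    (hp : eval p ((∏ i, ℓ i) * ∏ j, g j ^ e j) = 0) :
    ∃ h, h ≠ 0 ∧ eval p h = 0 ∧ h ∣ ((∏ i, ℓ i) * ∏ j, g j ^ e j) ∧
      h ∣ eulerAt n p ((∏ i, ℓ i) * ∏ j, g j ^ e j) := by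
  rw [map_mul, mul_eq_zero, map_prod, map_prod, Finset.prod_eq_zero_iff,
    Finset.prod_eq_zero_iff] at hp
  rcases hp with ⟨i, _, hi⟩ | ⟨j, _, hj⟩
  · have hd : ℓ i ∣ (∏ i, ℓ i) * ∏ j, g j ^ e j :=
      (Finset.dvd_prod_of_mem ℓ (Finset.mem_univ i)).mul_right _
    refine ⟨ℓ i, (hℓ i).1, hi, hd, ?_⟩
    obtain ⟨w, hw⟩ := hd
    rw [hw, Derivation.leibniz, eulerAt_linear n p _ (hℓ i), hi]
    simp only [smul_eq_mul, map_zero, sub_zero]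
    exact ⟨eulerAt n p w + w, by ring⟩
  · have hd : g j ^ e j ∣ (∏ i, ℓ i) * ∏ j, g j ^ e j :=
      (Finset.dvd_prod_of_mem (fun j => g j ^ e j) (Finset.mem_univ j)).mul_left _
    have hd2 := (pow_dvd_pow (g j) (he j)).trans hd
    have hj' : eval p (g j) = 0 := by
      rw [map_pow] at hj
      exact eq_zero_of_pow_eq_zero hj
    refine ⟨g j, (hgirr j).ne_zero, hj', (dvd_pow_self _ two_ne_zero).trans hd2, ?_⟩
    obtain ⟨w, hw⟩ := hd2
    rw [hw, pow_two]
    simp only [Derivation.leibniz, smul_eq_mul]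
    exact ⟨g j * eulerAt n p w + 2 * w * eulerAt n p (g j), by ring⟩

/-- The multinet property at points of the base locus: if a pencil with two completely
reducible fibers F = ∏ αᵢ^{mᵢ} and G = ∏ βⱼ^{lⱼ} and irreducible generic fiber has a
third fiber that is a product of linear forms and non-reduced polynomials, then for
every point p of the base locus, Σ_{αᵢ(p)=0} mᵢ = Σ_{βⱼ(p)=0} lⱼ. -/
theorem multinet_property
    (n d : ℕ) (hd : 1 ≤ d)
    (F G : MvPolynomial (Fin (n + 1)) ℂ)
    (hF : F.IsHomogeneous d) (hG : G.IsHomogeneous d)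
    (hFcr : CompletelyReducible n F) (hGcr : CompletelyReducible n G)
    (hcop : RelPrime n F G)
    (hgen : GenericFiberIrreducible n F G)
    -- the third fiber K = aF + bG, distinct from F and from G
    (a b : ℂ) (ha : a ≠ 0) (hb : b ≠ 0)
    (K : MvPolynomial (Fin (n + 1)) ℂ)
    (hK : K = C a * F + C b * G)
    -- K is a product of linear forms and non-reduced polynomials
    (r s : ℕ)
    (ℓ : Fin r → MvPolynomial (Fin (n + 1)) ℂ)
    (hℓ : ∀ i, IsLinearForm n (ℓ i))
    (g : Fin s → MvPolynomial (Fin (n + 1)) ℂ)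
    (hgirr : ∀ j, Irreducible (g j))
    (dg : Fin s → ℕ) (hghom : ∀ j, (g j).IsHomogeneous (dg j))
    (e : Fin s → ℕ) (he : ∀ j, 2 ≤ e j)
    (hKfact : K = (∏ i, ℓ i) * ∏ j, g j ^ e j)
    -- the factorizations of F and G into pairwise non-proportional linear forms
    (uu vv : ℕ)
    (α : Fin uu → MvPolynomial (Fin (n + 1)) ℂ)
    (hα : ∀ i, IsLinearForm n (α i))
    (hαprop : ∀ i j, i ≠ j → ∀ t : ℂ, α i ≠ C t * α j)
    (m : Fin uu → ℕ) (hm : ∀ i, 1 ≤ m i)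
    (hFfact : F = ∏ i, α i ^ m i)
    (β : Fin vv → MvPolynomial (Fin (n + 1)) ℂ)
    (hβ : ∀ j, IsLinearForm n (β j))
    (hβprop : ∀ i j, i ≠ j → ∀ t : ℂ, β i ≠ C t * β j)
    (l : Fin vv → ℕ) (hl : ∀ j, 1 ≤ l j)
    (hGfact : G = ∏ j, β j ^ l j) :
    ∀ p : Fin (n + 1) → ℂ, p ≠ 0 →
      eval p F = 0 → eval p G = 0 →
      ∑ i ∈ Finset.univ.filter (fun i => eval p (α i) = 0), m i =
      ∑ j ∈ Finset.univ.filter (fun j => eval p (β j) = 0), l j := by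
  intro p _ hFp hGp
  obtain ⟨P, Q, hP, hQ, hPQ⟩ := log_deriv n p Finset.univ α hα m
  obtain ⟨P', Q', hP', hQ', hPQ'⟩ := log_deriv n p Finset.univ β hβ l
  rw [← hFfact] at hPQ
  rw [← hGfact] at hPQ'
  have hKp : eval p K = 0 := by simp [hK, hFp, hGp]
  obtain ⟨h, h0, hhp, hhK, hhE⟩ :=
    exists_tangent_factor n p r s ℓ hℓ g hgirr e he (hKfact ▸ hKp)
  rw [← hKfact] at hhK hhE
  obtain ⟨q, hq, hqh, hqp⟩ := exists_prime_vanishing n p h h0 hhp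
  have hqK := hqh.trans hhK
  have hqE := hqh.trans hhE
  have unitC : ∀ c : ℂ, c ≠ 0 → IsUnit (C c : MvPolynomial (Fin (n + 1)) ℂ) :=
    fun c hc => (IsUnit.mk0 c hc).map C
  have hqF : ¬ q ∣ F := by
    intro hd
    refine hq.not_isUnit (hcop q hd ?_)
    rw [hK] at hqK
    have h1 := (dvd_add_right (hd.mul_left (C a))).1 hqK
    exact (unitC b hb).dvd_mul_left.1 h1
  have hqG : ¬ q ∣ G := by
    intro hd
    refine hq.not_isUnit (hcop q ?_ hd)
    rw [hK] at hqK
    have h1 := (dvd_add_left (hd.mul_left (C b))).1 hqK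
    exact (unitC a ha).dvd_mul_left.1 h1
  have hEK : eulerAt n p K = C a * eulerAt n p F + C b * eulerAt n p G := by
    simp [hK, Derivation.leibniz, derivation_C]
  have key : C b * (F * (G * (Q' * P - Q * P')))
      = P * P' * (F * eulerAt n p K - K * eulerAt n p F) := by
    rw [hEK, hK]
    linear_combination (C b * G * P') * hPQ - (C b * F * P) * hPQ'
  have hdvd : q ∣ C b * (F * (G * (Q' * P - Q * P'))) := by
    rw [key]
    exact ((hqE.mul_left _).sub (hqK.mul_right _)).mul_left _
  rw [(unitC b hb).dvd_mul_left] at hdvd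
  have hdvd' := ((hq.dvd_or_dvd hdvd).resolve_left hqF)
  obtain ⟨w, hw⟩ := (hq.dvd_or_dvd hdvd').resolve_left hqG
  have hev := congrArg (eval p) hw
  simp only [map_sub, map_mul, hqp, hQ, hQ', zero_mul] at hev
  have hne : eval p P * eval p P' ≠ 0 := mul_ne_zero hP hP'
  have hfin := sub_eq_zero.1 hev
  have : ((∑ i ∈ Finset.univ.filter (fun i => eval p (α i) = 0), m i : ℕ) : ℂ) =
      ((∑ j ∈ Finset.univ.filter (fun j => eval p (β j) = 0), l j : ℕ) : ℂ) := by
    apply mul_right_cancel₀ hne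
    linear_combination -hfin
  exact_mod_cast this
end
end

section
/- Let n ≥ 2 and let F, G be coprime completely reducible homogeneous polynomials of the same degree d ≥ 1 in R = MvPolynomial (Fin (n+1)) ℂ such that: the generic fiber of the pencil 𝒫 generated by F and G is irreducible; the pencil is essential (the linear factors of F together with those of G span the full (n+1)-dimensional space of degree-1 forms); and there exist k ≥ 3 pairwise distinct completely reducible members P_1 = F, P_2 = G, P_3, …, P_k of 𝒫. Let Q̃ = P_1⋯P_k, let Q be its radical, and let a_i = (Q/Q̃)·(F·∂_iG − G·∂_iF). Then the Jacobian determinant D = det(∂_j a_i)_{0≤i,j≤n} is not the zero polynomial (equivalently, the Gauss map of the foliation associated to 𝒫 is non-degenerate, i.e. dominant). -/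
open MvPolynomial

noncomputable section

/-- A derivation of a domain extends to its fraction field. -/
theorem exists_derivation_ext {R K : Type*} [CommRing R] [IsDomain R] [Field K] [Algebra R K]
    [IsFractionRing R K] (D : Derivation ℤ R R) :
    ∃ D' : Derivation ℤ K K, ∀ p, D' (algebraMap R K p) = algebraMap R K (D p) := by
  have algebra_smul_aux : ∀ (r : R) (z : K), r • z = algebraMap R K r * z :=
    fun r z => Algebra.smul_def r z
  let φ : R →+* TrivSqZeroExt K K :=
    { toFun := fun p => TrivSqZeroExt.inl (algebraMap R K p) + TrivSqZeroExt.inr (algebraMap R K (D p))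
      map_one' := by
        apply TrivSqZeroExt.ext <;> simp
      map_mul' := by
        intro p q
        apply TrivSqZeroExt.ext <;> simp [mul_comm, algebra_smul_aux]
      map_zero' := by
        apply TrivSqZeroExt.ext <;> simp
      map_add' := by
        intro p q
        apply TrivSqZeroExt.ext <;> simp [algebra_smul_aux] }
  have hφ1 : ∀ p, (φ p).fst = algebraMap R K p := fun p => by simp [φ, algebra_smul_aux]
  have hφ2 : ∀ p, (φ p).snd = algebraMap R K (D p) := fun p => by simp [φ, algebra_smul_aux]
  have hu : ∀ y : nonZeroDivisors R, IsUnit (φ y) := by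
    intro y
    rw [TrivSqZeroExt.isUnit_iff_isUnit_fst, hφ1, isUnit_iff_ne_zero]
    exact IsFractionRing.to_map_ne_zero_of_mem_nonZeroDivisors y.2
  let ψ : K →+* TrivSqZeroExt K K := IsLocalization.lift hu
  have hψ : ∀ p, ψ (algebraMap R K p) = φ p := fun p => IsLocalization.lift_eq hu p
  have hfst : ∀ z, (ψ z).fst = z := by
    have : ((TrivSqZeroExt.fstHom ℤ K K).toRingHom.comp ψ) = RingHom.id K := by
      apply IsLocalization.ringHom_ext (nonZeroDivisors R)
      ext p
      simp [hψ, hφ1]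
    intro z
    exact congrArg (fun f : K →+* K => f z) this
  refine ⟨Derivation.mk' ((AddMonoidHom.mk' (fun z => (ψ z).snd) ?_).toIntLinearMap) ?_, ?_⟩
  · intro a b
    simp
  · intro a b
    simp [hfst]
    exact mul_comm _ _
  · intro p
    simp [hψ, hφ2]

theorem deriv_prod_field {K ι : Type*} [Field K] (D : Derivation ℤ K K) (s : Finset ι)
    (B : ι → K) (hB : ∀ i ∈ s, B i ≠ 0) :
    D (∏ i ∈ s, B i) = (∏ i ∈ s, B i) * ∑ i ∈ s, D (B i) / B i := by
  classical
  induction s using Finset.induction_on with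
  | empty => simp
  | insert i s hi ih =>
    rw [Finset.prod_insert hi, Finset.sum_insert hi, Derivation.leibniz,
      ih (fun j hj => hB j (Finset.mem_insert_of_mem hj))]
    have := hB i (Finset.mem_insert_self i s)
    simp only [smul_eq_mul]
    field_simp
    ring

/-- The key induction: a vector in the kernel of the Hessian of a sum of logarithms of linear
forms is annihilated by all the higher derivatives. -/
theorem key_induction {K ι N : Type*} [Field K] [CharZero K] [Fintype ι] [Fintype N]
    (D : N → Derivation ℤ K K) (B : ι → K) (b : ι → N → K)
    (hb : ∀ i j, D j (B i) = b i j) (hb0 : ∀ i j l, D l (b i j) = 0)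
    (ε : ι → K) (hε : ∀ i l, D l (ε i) = 0) (w : N → K)
    (h : ∀ y, ∑ i, ε i * (∑ l, b i l * w l) * ((B i)⁻¹) ^ 2 * b i y = 0) (k : ℕ) :
    ∀ y, ∑ i, ε i * (∑ l, b i l * w l) ^ (k + 1) * ((B i)⁻¹) ^ (k + 2) * b i y = 0 := by
  induction k with
  | zero => simpa using h
  | succ k ih =>
    intro y
    set W : ι → K := fun i => ∑ l, b i l * w l with hW
    have hDW : ∀ i, D y (W i) = ∑ l, b i l * D y (w l) := by
      intro i
      simp [hW, map_sum, hb0]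
    have e1 : ∀ z, ∑ i, (ε i * ((k + 1 : K) * W i ^ k * D y (W i)) * ((B i)⁻¹) ^ (k + 2) * b i z
        - (k + 2 : K) * (ε i * W i ^ (k + 1) * ((B i)⁻¹) ^ (k + 3) * b i y * b i z)) = 0 := by
      intro z
      have := congrArg (D y) (ih z)
      rw [map_sum, map_zero] at this
      rw [← this]
      apply Finset.sum_congr rfl
      intro i _
      simp only [Derivation.leibniz, Derivation.leibniz_pow, Derivation.leibniz_inv, hε, hb0, hb,
        smul_eq_mul, nsmul_eq_mul, Nat.add_sub_cancel]
      rw [show k + 2 - 1 = k + 1 from rfl]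
      push_cast
      ring
    have e2 : ∑ z, (∑ i, (ε i * ((k + 1 : K) * W i ^ k * D y (W i)) * ((B i)⁻¹) ^ (k + 2) * b i z
        - (k + 2 : K) * (ε i * W i ^ (k + 1) * ((B i)⁻¹) ^ (k + 3) * b i y * b i z))) * w z = 0 := by
      apply Finset.sum_eq_zero
      intro z _
      rw [e1, zero_mul]
    have e3 : ∑ z, (∑ i, (ε i * ((k + 1 : K) * W i ^ k * D y (W i)) * ((B i)⁻¹) ^ (k + 2) * b i z
        - (k + 2 : K) * (ε i * W i ^ (k + 1) * ((B i)⁻¹) ^ (k + 3) * b i y * b i z))) * w z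
        = (k + 1 : K) * ∑ i, ε i * W i ^ (k + 1) * ((B i)⁻¹) ^ (k + 2) * D y (W i)
          - (k + 2 : K) * ∑ i, ε i * W i ^ (k + 2) * ((B i)⁻¹) ^ (k + 3) * b i y := by
      simp_rw [Finset.sum_mul]
      rw [Finset.sum_comm, Finset.mul_sum, Finset.mul_sum, ← Finset.sum_sub_distrib]
      apply Finset.sum_congr rfl
      intro i _
      have : ∀ z, (ε i * ((k + 1 : K) * W i ^ k * D y (W i)) * ((B i)⁻¹) ^ (k + 2) * b i z
        - (k + 2 : K) * (ε i * W i ^ (k + 1) * ((B i)⁻¹) ^ (k + 3) * b i y * b i z)) * w z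
        = (ε i * ((k + 1 : K) * W i ^ k * D y (W i)) * ((B i)⁻¹) ^ (k + 2)
        - (k + 2 : K) * (ε i * W i ^ (k + 1) * ((B i)⁻¹) ^ (k + 3) * b i y)) * (b i z * w z) := by
        intro z; ring
      simp_rw [this]
      rw [← Finset.mul_sum]
      change _ * W i = _
      ring
    have e4 : ∑ i, ε i * W i ^ (k + 1) * ((B i)⁻¹) ^ (k + 2) * D y (W i) = 0 := by
      simp_rw [hDW, Finset.mul_sum]
      rw [Finset.sum_comm]
      apply Finset.sum_eq_zero
      intro l _
      have := ih l
      calc _ = (∑ i, ε i * W i ^ (k + 1) * ((B i)⁻¹) ^ (k + 2) * b i l) * D y (w l) := by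
            rw [Finset.sum_mul]
            apply Finset.sum_congr rfl
            intro i _
            ring
        _ = 0 := by rw [this, zero_mul]
    rw [e3, e4, mul_zero, zero_sub, neg_eq_zero] at e2
    have hk : (k + 2 : K) ≠ 0 := by
      have : ((k + 2 : ℕ) : K) ≠ 0 := Nat.cast_ne_zero.mpr (by omega)
      exact_mod_cast this
    exact (mul_eq_zero.mp e2).resolve_left hk

/-- Separating the values of a function by a Vandermonde type argument. -/
theorem separate {K ι : Type*} [Field K] [Fintype ι] [DecidableEq K] (t c : ι → K)
    (h : ∀ k : ℕ, ∑ i, t i ^ (k + 1) * c i = 0) (τ : K) (hτ : τ ≠ 0) :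
    ∑ i with t i = τ, c i = 0 := by
  classical
  have hp : ∀ p : Polynomial K, ∑ i, t i * p.eval (t i) * c i = 0 := by
    intro p
    simp_rw [Polynomial.eval_eq_sum_range, Finset.mul_sum, Finset.sum_mul]
    rw [Finset.sum_comm]
    apply Finset.sum_eq_zero
    intro k _
    calc _ = p.coeff k * ∑ i, t i ^ (k + 1) * c i := by
          rw [Finset.mul_sum]
          apply Finset.sum_congr rfl
          intro i _
          ring
      _ = 0 := by rw [h, mul_zero]
  let V : Finset K := (Finset.univ.image t).erase τ
  let p : Polynomial K := ∏ v ∈ V, (Polynomial.X - Polynomial.C v)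
  have hpe : ∀ z, p.eval z = ∏ v ∈ V, (z - v) := by
    intro z
    simp [p, Polynomial.eval_prod]
  have hpτ : p.eval τ ≠ 0 := by
    rw [hpe, Finset.prod_ne_zero_iff]
    intro v hv
    exact sub_ne_zero.mpr (Finset.ne_of_mem_erase hv).symm
  have hp0 : ∀ i, t i ≠ τ → p.eval (t i) = 0 := by
    intro i hi
    rw [hpe]
    apply Finset.prod_eq_zero (i := t i)
    · exact Finset.mem_erase.mpr ⟨hi, Finset.mem_image_of_mem _ (Finset.mem_univ _)⟩
    · ring
  have := hp p
  have e : ∑ i, t i * p.eval (t i) * c i = τ * p.eval τ * ∑ i with t i = τ, c i := by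
    rw [Finset.mul_sum, Finset.sum_filter]
    apply Finset.sum_congr rfl
    intro i _
    split_ifs with hi
    · rw [hi]
    · rw [hp0 i hi]; ring
  rw [e] at this
  exact (mul_eq_zero.mp this).resolve_left (mul_ne_zero hτ hpτ)

theorem homog_rel {n a : ℕ} {A B : MvPolynomial (Fin (n + 1)) ℂ} (hA : A.IsHomogeneous a)
    (hA0 : A ≠ 0) (hrel : IsRelPrime A B)
    (h : ∀ j, A * pderiv j B = B * pderiv j A) : a = 0 := by
  by_contra ha
  have h0 : ∀ j, pderiv j A = 0 := by
    intro j
    by_contra hne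
    have hd : A ∣ pderiv j A := by
      apply hrel.dvd_of_dvd_mul_left
      exact ⟨_, (h j).symm⟩
    obtain ⟨q, hq⟩ := hd
    have hq0 : q ≠ 0 := by
      rintro rfl
      exact hne (by rw [hq, mul_zero])
    have h1 := (hA.pderiv (i := j)).totalDegree hne
    rw [hq, totalDegree_mul_of_isDomain hA0 hq0, hA.totalDegree hA0] at h1
    omega
  have := hA.sum_X_mul_pderiv
  simp only [h0, mul_zero, Finset.sum_const_zero] at this
  have h2 := this.symm
  rw [nsmul_eq_mul] at h2
  rcases mul_eq_zero.mp h2 with h3 | h3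
  · exact ha (by exact_mod_cast h3)
  · exact hA0 h3

theorem cr_fin {n : ℕ} {P : MvPolynomial (Fin (n + 1)) ℂ} (h : CompletelyReducible n P) :
    ∃ (p : ℕ) (f : Fin p → MvPolynomial (Fin (n + 1)) ℂ),
      (∀ i, IsLinearForm n (f i)) ∧ P = ∏ i, f i := by
  obtain ⟨s, hs, rfl⟩ := h
  refine ⟨s.toList.length, fun i => s.toList.get i, ?_, ?_⟩
  · intro i
    apply hs
    rw [← Multiset.mem_toList]
    exact List.get_mem _ _
  · rw [← List.prod_ofFn, List.ofFn_get, Multiset.prod_toList]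

theorem linear_irreducible {n : ℕ} {α : MvPolynomial (Fin (n + 1)) ℂ} (h : IsLinearForm n α) :
    Prime α := by
  rw [← irreducible_iff_prime]
  refine ⟨?_, ?_⟩
  · intro hu
    have := h.2.totalDegree h.1
    obtain ⟨c, hc, rfl⟩ := MvPolynomial.isUnit_iff_eq_C_of_isReduced.mp hu
    simp at this
  · intro p q hpq
    have hp0 : p ≠ 0 := by
      rintro rfl
      exact h.1 (by rw [hpq, zero_mul])
    have hq0 : q ≠ 0 := by
      rintro rfl
      exact h.1 (by rw [hpq, mul_zero])
    have h1 := h.2.totalDegree h.1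
    rw [hpq, totalDegree_mul_of_isDomain hp0 hq0] at h1
    have key : ∀ r : MvPolynomial (Fin (n + 1)) ℂ, r ≠ 0 → r.totalDegree = 0 → IsUnit r := by
      intro r hr hr0
      rw [totalDegree_eq_zero_iff_eq_C] at hr0
      rw [hr0]
      apply IsUnit.map
      rw [isUnit_iff_ne_zero]
      intro h0
      rw [h0, C_0] at hr0
      exact hr hr0
    have : p.totalDegree = 0 ∨ q.totalDegree = 0 := by omega
    rcases this with h2 | h2
    · exact Or.inl (key p hp0 h2)
    · exact Or.inr (key q hq0 h2)

theorem linear_dvd_linear {n : ℕ} {α β : MvPolynomial (Fin (n + 1)) ℂ} (hα : IsLinearForm n α)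
    (hβ : IsLinearForm n β) (h : α ∣ β) : ∃ t : ℂ, α = C t * β := by
  obtain ⟨q, rfl⟩ := h
  have hq0 : q ≠ 0 := by
    rintro rfl
    exact hβ.1 (by rw [mul_zero])
  have h1 := hβ.2.totalDegree hβ.1
  rw [totalDegree_mul_of_isDomain hα.1 hq0, hα.2.totalDegree hα.1] at h1
  have h2 : q.totalDegree = 0 := by omega
  rw [totalDegree_eq_zero_iff_eq_C] at h2
  have h3 : coeff 0 q ≠ 0 := by
    intro h0
    rw [h0, C_0] at h2
    exact hq0 h2
  refine ⟨(coeff 0 q)⁻¹, ?_⟩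
  rw [h2]
  simp only [coeff_C, if_true]
  have : (C (coeff 0 q)⁻¹ : MvPolynomial (Fin (n + 1)) ℂ) * C (coeff 0 q) = 1 := by
    rw [← C_mul, inv_mul_cancel₀ h3, C_1]
  linear_combination (-α) * this

theorem euler_zero {n : ℕ} {p : MvPolynomial (Fin (n + 1)) ℂ}
    (h : ∑ j, X j * pderiv j p = 0) : p = C (coeff 0 p) := by
  ext m
  rw [coeff_C]
  split_ifs with hm
  · rw [hm]
  have h1 : ∀ m, coeff m (∑ j, X j * pderiv j p) = (∑ j, (m j : ℂ)) * coeff m p := by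
    intro m
    rw [coeff_sum, Finset.sum_mul]
    apply Finset.sum_congr rfl
    intro j _
    rw [coeff_X_mul']
    split_ifs with hj
    · rw [coeff_pderiv]
      have hj' : Finsupp.single j 1 ≤ m := by
        rw [Finsupp.single_le_iff]
        have := Finsupp.mem_support_iff.mp hj
        omega
      rw [tsub_add_cancel_of_le hj']
      have h2 : ((m - Finsupp.single j 1 : Fin (n + 1) →₀ ℕ) j) + 1 = m j := by
        have := Finsupp.mem_support_iff.mp hj
        simp
        omega
      rw [← h2]
      push_cast
      ring
    · rw [Finsupp.notMem_support_iff.mp hj]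
      simp
  have h2 := h1 m
  rw [h, coeff_zero] at h2
  rcases mul_eq_zero.mp h2.symm with h3 | h3
  · exfalso
    apply hm
    have h4 : ∑ j, m j = 0 := by exact_mod_cast h3
    rw [Finset.sum_eq_zero_iff] at h4
    ext j
    simpa using (h4 j (Finset.mem_univ _)).symm
  · exact h3

theorem pderiv_linear {n : ℕ} {α : MvPolynomial (Fin (n + 1)) ℂ} (h : IsLinearForm n α)
    (j l : Fin (n + 1)) : pderiv l (pderiv j α) = 0 := by
  have h1 := h.2.pderiv (i := j)
  have h2 : (pderiv j α).totalDegree = 0 := by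
    have := h1.totalDegree_le
    omega
  rw [totalDegree_eq_zero_iff_eq_C] at h2
  rw [h2, pderiv_C]

/-- The Hessian of the logarithm of a quotient of coprime products of linear forms is
non-degenerate as soon as the linear forms span. -/
theorem hess_kernel {n p q : ℕ} {K : Type*} [Field K] [CharZero K]
    [Algebra (MvPolynomial (Fin (n + 1)) ℂ) K] [IsFractionRing (MvPolynomial (Fin (n + 1)) ℂ) K]
    (f : Fin p → MvPolynomial (Fin (n + 1)) ℂ) (g : Fin q → MvPolynomial (Fin (n + 1)) ℂ)
    (hf : ∀ i, IsLinearForm n (f i)) (hg : ∀ i, IsLinearForm n (g i))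
    (hrel : IsRelPrime (∏ i, f i) (∏ i, g i))
    (hspan : ∀ i, (X i : MvPolynomial (Fin (n + 1)) ℂ) ∈
      Submodule.span ℂ (Set.range f ∪ Set.range g))
    (D : Fin (n + 1) → Derivation ℤ K K)
    (hD : ∀ j P, D j (algebraMap (MvPolynomial (Fin (n + 1)) ℂ) K P)
      = algebraMap (MvPolynomial (Fin (n + 1)) ℂ) K (pderiv j P))
    (w : Fin (n + 1) → K)
    (h : ∀ y, ∑ i : Fin p ⊕ Fin q, (Sum.elim (fun _ => -1) (fun _ => 1) i : K) *
      (∑ l, algebraMap (MvPolynomial (Fin (n + 1)) ℂ) K (pderiv l (Sum.elim f g i)) * w l) *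
      ((algebraMap (MvPolynomial (Fin (n + 1)) ℂ) K (Sum.elim f g i))⁻¹) ^ 2 *
      algebraMap (MvPolynomial (Fin (n + 1)) ℂ) K (pderiv y (Sum.elim f g i)) = 0) :
    w = 0 := by
  classical
  set φ := algebraMap (MvPolynomial (Fin (n + 1)) ℂ) K with hφ
  have hinj : Function.Injective φ := IsFractionRing.injective _ K
  have hlin : ∀ i, IsLinearForm n (Sum.elim f g i) := by
    rintro (i | i)
    · exact hf i
    · exact hg i
  have hB : ∀ i, φ (Sum.elim f g i) ≠ 0 := fun i =>
    (map_ne_zero_iff φ hinj).mpr (hlin i).1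
  have key := key_induction D (fun i => φ (Sum.elim f g i))
    (fun i j => φ (pderiv j (Sum.elim f g i))) (fun i j => hD j _)
    (fun i j l => by rw [hD, pderiv_linear (hlin i), map_zero])
    (Sum.elim (fun _ => -1) (fun _ => 1)) (by rintro (i | i) l <;> simp) w h
  set W : Fin p ⊕ Fin q → K := fun i => ∑ l, φ (pderiv l (Sum.elim f g i)) * w l with hW
  -- separate the values of W / B
  have sep : ∀ τ : K, τ ≠ 0 → ∀ y,
      ∑ i with W i * (φ (Sum.elim f g i))⁻¹ = τ, (Sum.elim (fun _ => -1) (fun _ => 1) i : K) *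
        (φ (pderiv y (Sum.elim f g i)) / φ (Sum.elim f g i)) = 0 := by
    intro τ hτ y
    apply separate (fun i => W i * (φ (Sum.elim f g i))⁻¹) _ _ τ hτ
    intro k
    rw [← key k y]
    apply Finset.sum_congr rfl
    intro i _
    simp only [hW, div_eq_mul_inv]
    ring
  have hWz : ∀ i, W i = 0 := by
    by_contra hne
    push Not at hne
    obtain ⟨i₀, hi₀⟩ := hne
    set τ := W i₀ * (φ (Sum.elim f g i₀))⁻¹ with hτd
    have hτ : τ ≠ 0 := mul_ne_zero hi₀ (inv_ne_zero (hB i₀))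
    let I : Finset (Fin p) := {i | W (Sum.inl i) * (φ (f i))⁻¹ = τ}
    let J : Finset (Fin q) := {i | W (Sum.inr i) * (φ (g i))⁻¹ = τ}
    have e : ∀ y, ∑ i ∈ I, φ (pderiv y (f i)) / φ (f i) = ∑ i ∈ J, φ (pderiv y (g i)) / φ (g i) := by
      intro y
      have := sep τ hτ y
      rw [Finset.sum_filter, Fintype.sum_sum_type] at this
      simp only [Sum.elim_inl, Sum.elim_inr] at this
      have h1 : ∑ i ∈ I, φ (pderiv y (f i)) / φ (f i) = ∑ i, if W (Sum.inl i) * (φ (f i))⁻¹ = τ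
          then φ (pderiv y (f i)) / φ (f i) else 0 := Finset.sum_filter _ _
      have h2 : ∑ i ∈ J, φ (pderiv y (g i)) / φ (g i) = ∑ i, if W (Sum.inr i) * (φ (g i))⁻¹ = τ
          then φ (pderiv y (g i)) / φ (g i) else 0 := Finset.sum_filter _ _
      have h3 : -(∑ i ∈ I, φ (pderiv y (f i)) / φ (f i)) +
          ∑ i ∈ J, φ (pderiv y (g i)) / φ (g i) = 0 := by
        rw [h1, h2, ← Finset.sum_neg_distrib]
        refine Eq.trans ?_ this
        refine congrArg₂ (· + ·) (Finset.sum_congr rfl ?_) (Finset.sum_congr rfl ?_)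
        · intro i _
          by_cases hc : W (Sum.inl i) * (φ (f i))⁻¹ = τ <;> simp [hc]
        · intro i _
          by_cases hc : W (Sum.inr i) * (φ (g i))⁻¹ = τ <;> simp [hc]
      linear_combination (-1 : K) * h3
    have hA0 : (∏ i ∈ I, f i) ≠ 0 := Finset.prod_ne_zero_iff.mpr fun i _ => (hf i).1
    have hC0 : (∏ i ∈ J, g i) ≠ 0 := Finset.prod_ne_zero_iff.mpr fun i _ => (hg i).1
    have hA : (∏ i ∈ I, f i).IsHomogeneous (∑ i ∈ I, 1) :=
      IsHomogeneous.prod _ _ _ fun i _ => (hf i).2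
    have hC : (∏ i ∈ J, g i).IsHomogeneous (∑ i ∈ J, 1) :=
      IsHomogeneous.prod _ _ _ fun i _ => (hg i).2
    have hAd : (∏ i ∈ I, f i) ∣ ∏ i, f i := Finset.prod_dvd_prod_of_subset _ _ _ (Finset.subset_univ _)
    have hCd : (∏ i ∈ J, g i) ∣ ∏ i, g i := Finset.prod_dvd_prod_of_subset _ _ _ (Finset.subset_univ _)
    have hAC : IsRelPrime (∏ i ∈ I, f i) (∏ i ∈ J, g i) := fun d h1 h2 =>
      hrel (h1.trans hAd) (h2.trans hCd)
    have hd : ∀ j, (∏ i ∈ I, f i) * pderiv j (∏ i ∈ J, g i)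
        = (∏ i ∈ J, g i) * pderiv j (∏ i ∈ I, f i) := by
      intro j
      apply hinj
      rw [map_mul, map_mul, ← hD, ← hD, map_prod, map_prod,
        deriv_prod_field _ _ (fun i => φ (g i)) (fun i _ => hB (Sum.inr i)),
        deriv_prod_field _ _ (fun i => φ (f i)) (fun i _ => hB (Sum.inl i))]
      simp only [hD, Sum.elim_inl, Sum.elim_inr, e j]
      ring
    have z1 := homog_rel hA hA0 hAC hd
    have z2 := homog_rel hC hC0 hAC.symm (fun j => (hd j).symm)
    simp only [Finset.sum_const, smul_eq_mul, mul_one, Finset.card_eq_zero] at z1 z2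
    rcases i₀ with i | i
    · have : i ∈ I := by simp [I, hτd]
      rw [z1] at this
      simp at this
    · have : i ∈ J := by simp [J, hτd]
      rw [z2] at this
      simp at this
  -- the linear functional given by w kills the span
  let A : MvPolynomial (Fin (n + 1)) ℂ → K := fun P => ∑ l, φ (pderiv l P) * w l
  have hAspan : ∀ P ∈ Submodule.span ℂ (Set.range f ∪ Set.range g), A P = 0 := by
    intro P hP
    induction hP using Submodule.span_induction with
    | mem x hx =>
      rcases hx with ⟨i, rfl⟩ | ⟨i, rfl⟩
      · exact hWz (Sum.inl i)
      · exact hWz (Sum.inr i)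
    | zero => simp [A]
    | add x y _ _ hx hy =>
      have : A (x + y) = A x + A y := by
        simp [A, add_mul, Finset.sum_add_distrib]
      rw [this, hx, hy, add_zero]
    | smul c x _ hx =>
      have : A (c • x) = φ (C c) * A x := by
        simp only [A, Finset.mul_sum, MvPolynomial.smul_eq_C_mul, pderiv_C_mul, map_mul]
        apply Finset.sum_congr rfl
        intro i _
        ring
      rw [this, hx, mul_zero]
  funext j
  have := hAspan _ (hspan j)
  simp only [A, pderiv_X] at this
  rw [Finset.sum_eq_single j] at this
  · simpa using this
  · intro l _ hl
    simp [hl.symm]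
  · simp

theorem gauss_aux {K : Type*} [Field K] [CharZero K] (n d u : ℕ)
    [Algebra (MvPolynomial (Fin (n + 1)) ℂ) K] [IsFractionRing (MvPolynomial (Fin (n + 1)) ℂ) K]
    (hd : 1 ≤ d)
    (F G : MvPolynomial (Fin (n + 1)) ℂ)
    (hF : F.IsHomogeneous d) (hG : G.IsHomogeneous d)
    (hFcr : CompletelyReducible n F) (hGcr : CompletelyReducible n G)
    (hcop : RelPrime n F G)
    (hess : ∀ i : Fin (n + 1),
      X i ∈ Submodule.span ℂ
        {α : MvPolynomial (Fin (n + 1)) ℂ | IsLinearForm n α ∧ (α ∣ F ∨ α ∣ G)})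
    (α : Fin u → MvPolynomial (Fin (n + 1)) ℂ)
    (hα : ∀ i, IsLinearForm n (α i)) (m : Fin u → ℕ)
    (a : Fin (n + 1) → MvPolynomial (Fin (n + 1)) ℂ)
    (ha : ∀ i, a i * ∏ j, α j ^ (m j - 1) = F * pderiv i G - G * pderiv i F) :
    (Matrix.of fun i j => pderiv j (a i)).det ≠ 0 := by
  classical
  intro hdet
  obtain ⟨p, f, hf, hFf⟩ := cr_fin hFcr
  obtain ⟨q, g, hg, hGg⟩ := cr_fin hGcr
  have hrel : IsRelPrime F G := fun d h1 h2 => hcop d h1 h2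
  have hF0 : F ≠ 0 := by
    rw [hFf]
    exact Finset.prod_ne_zero_iff.mpr fun i _ => (hf i).1
  have hG0 : G ≠ 0 := by
    rw [hGg]
    exact Finset.prod_ne_zero_iff.mpr fun i _ => (hg i).1
  have hh0 : (∏ j, α j ^ (m j - 1)) ≠ 0 :=
    Finset.prod_ne_zero_iff.mpr fun i _ => pow_ne_zero _ (hα i).1
  -- the linear forms span
  have hspan : ∀ i, (X i : MvPolynomial (Fin (n + 1)) ℂ) ∈
      Submodule.span ℂ (Set.range f ∪ Set.range g) := by
    intro i
    refine (Submodule.span_le.mpr ?_) (hess i)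
    rintro γ ⟨hγ, hγd⟩
    have hpr := linear_irreducible hγ
    have aux : ∀ β, IsLinearForm n β → γ ∣ β → β ∈ Set.range f ∪ Set.range g →
        γ ∈ Submodule.span ℂ (Set.range f ∪ Set.range g) := by
      intro β hβ hd hmem
      obtain ⟨t, rfl⟩ := linear_dvd_linear hγ hβ hd
      rw [← MvPolynomial.smul_eq_C_mul]
      exact Submodule.smul_mem _ _ (Submodule.subset_span hmem)
    rcases hγd with h | h
    · rw [hFf, hpr.dvd_finsetProd_iff] at h
      obtain ⟨i, _, hi⟩ := h
      exact aux _ (hf i) hi (Or.inl ⟨i, rfl⟩)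
    · rw [hGg, hpr.dvd_finsetProd_iff] at h
      obtain ⟨i, _, hi⟩ := h
      exact aux _ (hg i) hi (Or.inr ⟨i, rfl⟩)
  obtain ⟨w, hw0, hw⟩ := Matrix.exists_mulVec_eq_zero_iff.mpr hdet
  have hw' : ∀ i, ∑ j, pderiv j (a i) * w j = 0 := fun i => congrFun hw i
  set φ := algebraMap (MvPolynomial (Fin (n + 1)) ℂ) K with hφ
  have hinj : Function.Injective φ := IsFractionRing.injective _ K
  have hext := fun j : Fin (n + 1) => exists_derivation_ext (K := K)
    ((pderiv j : Derivation ℂ (MvPolynomial (Fin (n + 1)) ℂ) _).restrictScalars ℤ)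
  choose D hD' using hext
  have hD : ∀ j P, D j (φ P) = φ (pderiv j P) := fun j P => hD' j P
  have hlin : ∀ i, IsLinearForm n (Sum.elim f g i) := by
    rintro (i | i)
    · exact hf i
    · exact hg i
  have hB : ∀ i, φ (Sum.elim f g i) ≠ 0 := fun i =>
    (map_ne_zero_iff φ hinj).mpr (hlin i).1
  let ε : Fin p ⊕ Fin q → K := Sum.elim (fun _ => -1) (fun _ => 1)
  have hε : ∀ i l, D l (ε i) = 0 := by rintro (i | i) l <;> simp [ε]
  let η : Fin (n + 1) → K := fun y => ∑ i, ε i * φ (pderiv y (Sum.elim f g i)) *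
    (φ (Sum.elim f g i))⁻¹
  let H : K := φ F * φ G / φ (∏ j, α j ^ (m j - 1))
  have hφh : φ (∏ j, α j ^ (m j - 1)) ≠ 0 := (map_ne_zero_iff φ hinj).mpr hh0
  have hφF : φ F ≠ 0 := (map_ne_zero_iff φ hinj).mpr hF0
  have hφG : φ G ≠ 0 := (map_ne_zero_iff φ hinj).mpr hG0
  have hH0 : H ≠ 0 := div_ne_zero (mul_ne_zero hφF hφG) hφh
  have hDF : ∀ y, φ (pderiv y F) = φ F * ∑ i, φ (pderiv y (f i)) / φ (f i) := by
    intro y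
    rw [← hD, hFf, map_prod, deriv_prod_field _ _ (fun i => φ (f i)) (fun i _ => hB (Sum.inl i))]
    simp only [hD, Sum.elim_inl]
  have hDG : ∀ y, φ (pderiv y G) = φ G * ∑ i, φ (pderiv y (g i)) / φ (g i) := by
    intro y
    rw [← hD, hGg, map_prod, deriv_prod_field _ _ (fun i => φ (g i)) (fun i _ => hB (Sum.inr i))]
    simp only [hD, Sum.elim_inr]
  have haη : ∀ y, φ (a y) = H * η y := by
    intro y
    have h1 := congrArg φ (ha y)
    rw [map_mul, map_sub, map_mul, map_mul, hDF, hDG] at h1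
    have h2 : η y = ∑ i, φ (pderiv y (g i)) / φ (g i) - ∑ i, φ (pderiv y (f i)) / φ (f i) := by
      simp only [η, ε, Fintype.sum_sum_type, Sum.elim_inl, Sum.elim_inr, div_eq_mul_inv, neg_mul,
        one_mul, Finset.sum_neg_distrib]
      ring
    rw [h2]
    simp only [H]
    rw [div_mul_eq_mul_div, eq_div_iff hφh, h1]
    ring
  let S : Fin (n + 1) → Fin (n + 1) → K := fun y l => ∑ i, ε i * φ (pderiv l (Sum.elim f g i)) *
      ((φ (Sum.elim f g i))⁻¹) ^ 2 * φ (pderiv y (Sum.elim f g i))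
  have hDη : ∀ y l, D l (η y) = - S y l := by
    intro y l
    simp only [η, S, map_sum, ← Finset.sum_neg_distrib]
    apply Finset.sum_congr rfl
    intro i _
    simp only [Derivation.leibniz, Derivation.leibniz_inv, hε, hD, pderiv_linear (hlin i),
      smul_eq_mul, map_zero]
    ring
  have hDa : ∀ y l, φ (pderiv l (a y)) = D l H * η y - H * S y l := by
    intro y l
    rw [← hD, haη, Derivation.leibniz, hDη]
    simp only [smul_eq_mul]
    ring
  have hEuler : ∀ i, ∑ l, φ (pderiv l (Sum.elim f g i)) * φ (X l) = φ (Sum.elim f g i) := by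
    intro i
    have := (hlin i).2.sum_X_mul_pderiv
    rw [one_smul] at this
    conv_rhs => rw [← this]
    rw [map_sum]
    apply Finset.sum_congr rfl
    intro l _
    rw [map_mul, mul_comm]
  have hSx : ∀ y, ∑ l, S y l * φ (X l) = η y := by
    intro y
    simp only [S, η, Finset.sum_mul]
    rw [Finset.sum_comm]
    apply Finset.sum_congr rfl
    intro i _
    calc _ = ε i * ((φ (Sum.elim f g i))⁻¹) ^ 2 * φ (pderiv y (Sum.elim f g i)) *
          ∑ l, φ (pderiv l (Sum.elim f g i)) * φ (X l) := by
          rw [Finset.mul_sum]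
          apply Finset.sum_congr rfl
          intro l _
          ring
      _ = _ := by
          rw [hEuler]
          have := hB i
          field_simp
  let μ : K := (∑ l, D l H * φ (w l)) / H
  have hSw : ∀ y, ∑ l, S y l * φ (w l) = μ * η y := by
    intro y
    have h1 := congrArg φ (hw' y)
    rw [map_sum, map_zero] at h1
    have h2 : ∑ l, φ (pderiv l (a y) * w l)
        = (∑ l, D l H * φ (w l)) * η y - H * ∑ l, S y l * φ (w l) := by
      rw [Finset.sum_mul, Finset.mul_sum, ← Finset.sum_sub_distrib]
      apply Finset.sum_congr rfl
      intro l _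
      rw [map_mul, hDa]
      ring
    rw [h2] at h1
    simp only [μ]
    rw [div_mul_eq_mul_div, eq_div_iff hH0]
    linear_combination (-1 : K) * h1
  have hker : (fun l => φ (w l) - μ * φ (X l)) = 0 := by
    apply hess_kernel f g hf hg (by rw [← hFf, ← hGg]; exact hrel) hspan D hD
    intro y
    have h1 : ∑ l, S y l * (φ (w l) - μ * φ (X l)) = 0 := by
      calc _ = ∑ l, S y l * φ (w l) - μ * ∑ l, S y l * φ (X l) := by
            rw [Finset.mul_sum, ← Finset.sum_sub_distrib]
            apply Finset.sum_congr rfl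
            intro l _
            ring
        _ = 0 := by rw [hSw, hSx, sub_self]
    rw [← h1]
    simp only [S, Finset.sum_mul]
    rw [Finset.sum_comm]
    apply Finset.sum_congr rfl
    intro i _
    rw [Finset.mul_sum, Finset.sum_mul, Finset.sum_mul]
    apply Finset.sum_congr rfl
    intro l _
    simp only [ε]
    ring
  have hwx : ∀ l, φ (w l) = μ * φ (X l) := fun l => sub_eq_zero.mp (congrFun hker l)
  have hμ : μ ≠ 0 := by
    intro h0
    apply hw0
    funext l
    apply hinj
    rw [hwx, h0, zero_mul]
    simp
  have hEa : ∀ i, ∑ j, X j * pderiv j (a i) = 0 := by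
    intro i
    apply hinj
    have h1 := congrArg φ (hw' i)
    rw [map_sum, map_zero] at h1
    rw [map_zero, map_sum]
    apply (mul_eq_zero.mp ?_).resolve_left hμ
    rw [← h1, Finset.mul_sum]
    apply Finset.sum_congr rfl
    intro l _
    rw [map_mul, map_mul, hwx]
    ring
  have hac : ∀ i, a i = C (coeff 0 (a i)) := fun i => euler_zero (hEa i)
  have hax : ∑ i, X i * a i = 0 := by
    apply (mul_eq_zero.mp ?_).resolve_right hh0
    rw [Finset.sum_mul]
    calc _ = F * (∑ i, X i * pderiv i G) - G * ∑ i, X i * pderiv i F := by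
          rw [Finset.mul_sum, Finset.mul_sum, ← Finset.sum_sub_distrib]
          apply Finset.sum_congr rfl
          intro i _
          rw [mul_assoc, ha]
          ring
      _ = 0 := by
          rw [hF.sum_X_mul_pderiv, hG.sum_X_mul_pderiv]
          simp only [nsmul_eq_mul]
          ring
  have ha0 : ∀ i, a i = 0 := by
    intro i
    have h1 := congrArg (pderiv i) hax
    rw [map_sum, map_zero, Finset.sum_eq_single i] at h1
    · rw [hac i] at h1 ⊢
      simpa using h1
    · intro j _ hj
      rw [hac j, pderiv_mul, pderiv_C, pderiv_X_of_ne hj]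
      simp
    · simp
  have := homog_rel hF hF0 hrel (fun j => by
    have := ha j
    rw [ha0, zero_mul] at this
    exact (sub_eq_zero.mp this.symm))
  omega

/-- Theorem (Gauss map): for an essential pencil of hypersurfaces on ℙⁿ with irreducible
generic fiber and at least three completely reducible fibers, the Gauss map of the
associated foliation is non-degenerate, i.e. the Jacobian determinant D = det(∂ⱼaᵢ) of
the coefficients of ω = (Q/Q̃)(F dG - G dF) is not the zero polynomial. -/
theorem gauss_map_nondegenerate
    (n d k u : ℕ) (hn : 2 ≤ n) (hd : 1 ≤ d) (hk : 3 ≤ k)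
    (F G : MvPolynomial (Fin (n + 1)) ℂ)
    (hF : F.IsHomogeneous d) (hG : G.IsHomogeneous d)
    (hFcr : CompletelyReducible n F) (hGcr : CompletelyReducible n G)
    (hcop : RelPrime n F G)
    (hgen : GenericFiberIrreducible n F G)
    -- the pencil is essential: the linear factors of F and G span the whole space of
    -- degree-1 forms
    (hess : ∀ i : Fin (n + 1),
      X i ∈ Submodule.span ℂ
        {α : MvPolynomial (Fin (n + 1)) ℂ | IsLinearForm n α ∧ (α ∣ F ∨ α ∣ G)})
    -- the k ≥ 3 pairwise distinct completely reducible members P_1 = F, P_2 = G, ...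
    (c : Fin k → ℂ × ℂ)
    (hprop : ∀ i j, i ≠ j → (c i).1 * (c j).2 ≠ (c i).2 * (c j).1)
    (P : Fin k → MvPolynomial (Fin (n + 1)) ℂ)
    (hP : ∀ i, P i = C (c i).1 * F + C (c i).2 * G)
    (hP0 : P ⟨0, by omega⟩ = F) (hP1 : P ⟨1, by omega⟩ = G)
    (hPcr : ∀ i, CompletelyReducible n (P i))
    -- Q̃ = ∏ Pᵢ = ∏ αᵢ^{mᵢ} and Q = ∏ αᵢ its radical
    (α : Fin u → MvPolynomial (Fin (n + 1)) ℂ)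
    (hα : ∀ i, IsLinearForm n (α i))
    (hαprop : ∀ i j, i ≠ j → ∀ t : ℂ, α i ≠ C t * α j)
    (m : Fin u → ℕ) (hm : ∀ i, 1 ≤ m i)
    (hQt : ∏ i, P i = ∏ i, α i ^ m i)
    -- the polynomial coefficients aᵢ of ω = (Q/Q̃)·(F dG - G dF)
    (a : Fin (n + 1) → MvPolynomial (Fin (n + 1)) ℂ)
    (ha : ∀ i, a i * ∏ j, α j ^ (m j - 1) = F * pderiv i G - G * pderiv i F) :
    (Matrix.of fun i j => pderiv j (a i)).det ≠ 0 := by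
  haveI : CharZero (FractionRing (MvPolynomial (Fin (n + 1)) ℂ)) :=
    charZero_of_injective_algebraMap
      (IsFractionRing.injective (MvPolynomial (Fin (n + 1)) ℂ) _)
  exact gauss_aux (K := FractionRing (MvPolynomial (Fin (n + 1)) ℂ)) n d u hd F G hF hG hFcr hGcr
    hcop hess α hα m a ha
end
end
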